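/- arXiv:0810.2497 — 4 statements merged into one kernel-verified Lean document; each statement's English description precedes it below -/
import Mathlib

section
/- Let p(t) = (t−λ₁)^{k₁}⋯(t−λₙ)^{kₙ} be a complex polynomial with distinct roots λ₁,…,λₙ and all multiplicities kᵢ ≥ 2. Let A be a unital C*-algebra, I a closed two-sided ideal of A with quotient map q : A → A/I, and suppose A/I is SAW*. Let b ∈ A/I satisfy p(b) = 0 and ‖b‖ = 1. Let e₁,…,eₙ ∈ A/I be the spectral idempotents of b, i.e. idempotents with eᵢeⱼ = 0 for i ≠ j, Σᵢ eᵢ = 1, b eᵢ = eᵢ b, and (b−λᵢ)^{kᵢ} eᵢ = 0 for each i; set s = Σᵢ eᵢ* eᵢ (which is positive and invertible) and pᵢ = s^{1/2} eᵢ s^{−1/2} (which are projections with Σᵢ pᵢ = 1). If there exist projections Q₁,…,Qₙ ∈ A with Σᵢ Qᵢ = 1 and q(Qᵢ) = pᵢ for each i, then there exists B ∈ A with q(B) = b, p(B) = 0, and ‖B‖ = 1. -/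
/-!
Conjugation by `r = s^{1/2}` turns the spectral idempotents of `b` into the orthogonal projections `pᵢ`,
so `r b r⁻¹ = ∑ (λᵢ pᵢ + nᵢ)` with `nᵢ` nilpotent of order `kᵢ` in the corner of `pᵢ`. Two things have to
be lifted: the algebraic structure and the norm bound.

*Algebraic structure.* In a SAW* quotient nilpotents lift to nilpotents of the same order
(`exists_nilpotent_lift`), and this can be done in the corners of the `Qᵢ`
(`exists_corner_nilpotent_lift`). This gives `C = ∑ (λᵢ Qᵢ + Nᵢ)` with `p(C) = 0` and `q(C) = r b r⁻¹`.

*Norm.* It suffices to find a positive invertible `H` in `A` with `C* H C ≤ H` and `q(H) = r⁻²`; then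
`X = H^{1/2} C H^{-1/2}` is a contraction with `q(X) = b` and `p(X) = 0`
(`exists_contraction_of_form`), and `‖X‖ ≥ ‖b‖ = 1`. If all roots have modulus `< 1`, the solution
`F = ∑ (C ^ n)* P C ^ n` of the Stein equation `F = P + C* F C` satisfies `C* F C ≤ F` for every `P ≥ 0`.
Uniqueness of the solution in the quotient gives `q(F) = r⁻²` when `P` lifts
`r⁻¹ (1 - b* b) r⁻¹`. Adding a Stein solution over a suitable positive element of the kernel of `q` makes
the form invertible (`exists_contractive_conjugate`).

Roots outside the closed disc have `eᵢ = 0`. For a unimodular root with `eᵢ ≠ 0`, contractivity of `b`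
forces `(b - λᵢ) eᵢ = 0` and `eᵢ` to be self-adjoint and orthogonal to the other `eⱼ`, so `pᵢ = eᵢ` and
`Nᵢ = 0`. These blocks split off as a unitary direct summand of `C`, and the Stein equation is used on the
complement only. An index with `eᵢ = 0` is given the root of another, nonzero, idempotent, which keeps the
lift annihilated by `p` and its spectrum in the closed disc.
-/

section Lifting

open Filter Topology

/-! ### Lifting nilpotents to nilpotents -/

/-- Functional calculus of `D` at `g(t) = min 1 (2t)` and `h(t) = max 0 (2t - 1)`, so that `gh = h` on
the real line. `G` is divisible by `D`, and both `G` and `H` act as the identity wherever `D` does. The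
element `H` is a relative unit that leaves room for `G` to be exactly a unit on its range. -/
lemma exists_soft_cut {A : Type*} [CStarAlgebra A] (D : A) (hD : IsSelfAdjoint D) :
    ∃ G H U V W : A, G = D * V ∧ 1 - G = W * (1 - D) ∧ 1 - H = U * (1 - D) ∧ G * H = H ∧
      IsSelfAdjoint H := by
  have key : ∀ f g : ℝ → ℝ, Continuous f → Continuous g →
      cfc f D * cfc g D = cfc (fun t => f t * g t) D := fun f g hf hg =>
    (cfc_mul f g D hf.continuousOn hg.continuousOn).symm
  have hid : cfc (fun t : ℝ => t) D = D := cfc_id' ℝ D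
  have hone : cfc (fun t : ℝ => 1 - t) D = 1 - D := by
    rw [cfc_sub .., hid, cfc_const_one ℝ D]
  have h1 : ∀ f : ℝ → ℝ, Continuous f → 1 - cfc f D = cfc (fun t => 1 - f t) D := by
    intro f hf
    rw [cfc_sub (fun _ => (1 : ℝ)) f D continuousOn_const hf.continuousOn, cfc_const_one ℝ D]
  have cv : Continuous fun t : ℝ => (max t (1 / 2))⁻¹ :=
    (continuous_id.max continuous_const).inv₀ fun t =>
      (lt_of_lt_of_le (by norm_num) (le_max_right t (1 / 2))).ne'
  have cu : Continuous fun t : ℝ => (max (1 - t) (1 / 2))⁻¹ :=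
    ((continuous_const.sub continuous_id).max continuous_const).inv₀ fun t =>
      (lt_of_lt_of_le (by norm_num) (le_max_right (1 - t) (1 / 2))).ne'
  have cg : Continuous fun t : ℝ => min 1 (2 * t) := by fun_prop
  have ch : Continuous fun t : ℝ => max 0 (2 * t - 1) := by fun_prop
  refine ⟨cfc (fun t : ℝ => min 1 (2 * t)) D, cfc (fun t : ℝ => max 0 (2 * t - 1)) D,
    cfc (fun t : ℝ => (max (1 - t) (1 / 2))⁻¹) D, cfc (fun t : ℝ => (max t (1 / 2))⁻¹) D,
    cfc (fun t : ℝ => max 0 (1 - 2 * t) * (max (1 - t) (1 / 2))⁻¹) D, ?_, ?_, ?_, ?_, ?_⟩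
  · nth_rw 2 [← hid]
    rw [key _ _ continuous_id' cv]
    congr 1; ext t
    rcases le_total t (1 / 2) with h | h
    · rw [max_eq_right h, min_eq_right (by linarith)]; ring
    · rw [max_eq_left h, min_eq_left (by linarith), mul_inv_cancel₀ (by linarith)]
  · rw [← hone, h1 _ cg, key _ _ (by fun_prop) (by fun_prop)]
    congr 1; ext t
    rcases le_total t (1 / 2) with h | h
    · rw [max_eq_left (by linarith : 1 / 2 ≤ 1 - t), min_eq_right (by linarith),
        max_eq_right (by linarith), mul_assoc, inv_mul_cancel₀ (by linarith)]; ring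
    · rw [max_eq_right (by linarith : 1 - t ≤ 1 / 2), min_eq_left (by linarith),
        max_eq_left (by linarith)]; ring
  · rw [← hone, h1 _ ch, key _ _ cu (by fun_prop)]
    congr 1; ext t
    rcases le_total t (1 / 2) with h | h
    · rw [max_eq_left (by linarith : 1 / 2 ≤ 1 - t),
        max_eq_left (by linarith), inv_mul_cancel₀ (by linarith)]; ring
    · rw [max_eq_right (by linarith : 1 - t ≤ 1 / 2),
        max_eq_right (by linarith)]; ring
  · rw [key _ _ cg ch]
    congr 1; ext t
    rcases le_total t (1 / 2) with h | h
    · rw [max_eq_left (by linarith)]; ring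
    · rw [min_eq_left (by linarith)]; ring
  · exact cfc_predicate _ _

lemma exists_selfAdjoint_lift {A B : Type*} [CStarAlgebra A] [CStarAlgebra B]
    (q : A →⋆ₐ[ℂ] B) (hq : Function.Surjective q) (d : B) (hd : IsSelfAdjoint d) :
    ∃ D : A, IsSelfAdjoint D ∧ q D = d := by
  obtain ⟨Y, rfl⟩ := hq d
  refine ⟨(2⁻¹ : ℂ) • (Y + star Y), ?_, ?_⟩
  · rw [isSelfAdjoint_iff]
    simp [add_comm]
  · rw [map_smul, map_add, map_star, hd.star_eq, ← two_smul ℂ, smul_smul]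
    norm_num

/-- Nilpotents lift to nilpotents of the same order when the quotient is SAW*, with the lift kept in the
right ideal `D A` generated by a prescribed left relative unit `D`. The induction on `k` applies SAW* to
the orthogonal pair `|x ^ (k + 1) d|²`, `x x*` (with `d = q D`), which gives a self-adjoint `1 - z` fixing
`x` on the left and killed by `x ^ (k + 1) d`. After a soft cut, `x q(G)` is nilpotent of order `k + 1`,
and if `H W` is a nilpotent lift of it, then `H (W + Z (1 - G))`, with `Z` any lift of `x`, is the
required lift, because `(1 - G) H = 0` makes all powers collapse onto those of `H W`. -/
lemma exists_nilpotent_lift {A B : Type*} [CStarAlgebra A] [CStarAlgebra B]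
    (q : A →⋆ₐ[ℂ] B) (hq : Function.Surjective q)
    (hSAW : ∀ a b : B, IsSelfAdjoint a → IsSelfAdjoint b → a * b = 0 →
      ∃ z : B, IsSelfAdjoint z ∧ a * z = a ∧ z * b = 0) (k : ℕ) :
    ∀ (x : B) (D : A), IsSelfAdjoint D → x ^ (k + 1) = 0 → q D * x = x →
      ∃ W : A, q (D * W) = x ∧ (D * W) ^ (k + 1) = 0 := by
  induction k with
  | zero =>
    intro x D _ hx _
    exact ⟨0, by simpa using hx.symm, by simp⟩
  | succ k ih =>
    intro x D hD hx hDx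
    obtain ⟨z, hz, haz, hzb⟩ := hSAW (star (x ^ (k + 1) * q D) * (x ^ (k + 1) * q D))
      (x * star x) (.star_mul_self _) (.mul_star_self _) (by
        have : x ^ (k + 1) * q D * (x * star x) = 0 := by
          rw [mul_assoc, ← mul_assoc (q D), hDx, ← mul_assoc, ← pow_succ, hx, zero_mul]
        rw [mul_assoc, this, mul_zero])
    have hxz : x ^ (k + 1) * q D * (1 - z) = 0 := by
      rw [← CStarRing.star_mul_self_eq_zero_iff, star_mul, mul_assoc,
        ← mul_assoc (star _) _ (1 - z), mul_sub, haz, mul_one, sub_self, mul_zero]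
    have hzx : (1 - z) * x = x := by
      have : z * x = 0 := by
        rw [← CStarRing.mul_star_self_eq_zero_iff, star_mul, mul_assoc, ← mul_assoc x, ← mul_assoc,
          hzb, zero_mul]
      rw [sub_mul, this, one_mul, sub_zero]
    obtain ⟨D₂, hD₂, hqD₂⟩ := exists_selfAdjoint_lift q hq (1 - z) ((IsSelfAdjoint.one B).sub hz)
    have hD₁ : IsSelfAdjoint (D * D₂ * D) := by
      rw [isSelfAdjoint_iff]
      simp [hD.star_eq, hD₂.star_eq, mul_assoc]
    obtain ⟨G, H, U, V, W', hG, hG', hH, hGH, hHsa⟩ := exists_soft_cut _ hD₁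
    have hd₁x : q (D * D₂ * D) * x = x := by
      rw [map_mul, map_mul, hqD₂, mul_assoc, hDx, mul_assoc, hzx, hDx]
    have hfix : ∀ T U : A, 1 - T = U * (1 - D * D₂ * D) → q T * x = x := by
      intro T U hTU
      have : q (1 - T) * x = 0 := by
        rw [hTU, map_mul, mul_assoc, map_sub, map_one, sub_mul, hd₁x, one_mul, sub_self, mul_zero]
      rw [map_sub, map_one, sub_mul, one_mul, sub_eq_zero] at this
      exact this.symm
    have hGx : q G * x = x := hfix _ _ hG'
    have hHx : q H * x = x := hfix _ _ hH
    have hxG : x ^ (k + 1) * q G = 0 := by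
      rw [hG, map_mul, map_mul, map_mul, hqD₂, ← mul_assoc, ← mul_assoc, ← mul_assoc, hxz]
      simp
    have hy : ∀ m : ℕ, (x * q G) ^ (m + 1) = x ^ (m + 1) * q G := by
      intro m
      induction m with
      | zero => simp
      | succ m ihm =>
        rw [pow_succ, ihm, mul_assoc, ← mul_assoc (q G), hGx, ← mul_assoc, ← pow_succ]
    obtain ⟨W, hW, hWnil⟩ := ih (x * q G) H hHsa (by rw [hy, hxG]) (by rw [← mul_assoc, hHx])
    obtain ⟨Z, hZ⟩ := hq x
    have hX : D * (D₂ * D * V * (H * (W + Z * (1 - G)))) = H * (W + Z * (1 - G)) := by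
      calc _ = D * D₂ * D * V * H * (W + Z * (1 - G)) := by simp only [mul_assoc]
        _ = _ := by rw [← hG, hGH]
    refine ⟨D₂ * D * V * (H * (W + Z * (1 - G))), ?_, ?_⟩
    · rw [hX, mul_add, map_add, hW, map_mul, map_mul, hZ, ← mul_assoc, hHx, map_sub, map_one,
        mul_sub, mul_one, add_sub_cancel]
    · rw [hX]
      have hGX : (1 - G) * (H * (W + Z * (1 - G))) = 0 := by
        rw [← mul_assoc, sub_mul, hGH, one_mul, sub_self, zero_mul]
      have hpow : ∀ m : ℕ, (H * (W + Z * (1 - G))) ^ (m + 1)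
          = (H * W) ^ m * (H * (W + Z * (1 - G))) := by
        intro m
        induction m with
        | zero => simp
        | succ m ihm =>
          have h2 : (H * (W + Z * (1 - G))) * (H * (W + Z * (1 - G)))
              = H * W * (H * (W + Z * (1 - G))) := by
            nth_rw 1 [mul_add]
            rw [add_mul, ← mul_assoc H Z, mul_assoc (H * Z), hGX, mul_zero, add_zero]
          rw [pow_succ, ihm, mul_assoc, h2, ← mul_assoc, ← pow_succ]
      rw [hpow, hWnil, zero_mul]

/-- Nilpotent lifting inside the corner `Q A Q`. The lift of `0` is chosen to be `0`. -/
lemma exists_corner_nilpotent_lift {A B : Type*} [CStarAlgebra A] [CStarAlgebra B]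
    (q : A →⋆ₐ[ℂ] B) (hq : Function.Surjective q)
    (hSAW : ∀ a b : B, IsSelfAdjoint a → IsSelfAdjoint b → a * b = 0 →
      ∃ z : B, IsSelfAdjoint z ∧ a * z = a ∧ z * b = 0) (k : ℕ) (hk : k ≠ 0) (x : B)
    (Q : A) (hQ : IsSelfAdjoint Q) (hQQ : Q * Q = Q) (hx : x ^ k = 0)
    (hQx : q Q * x = x) (hxQ : x * q Q = x) :
    ∃ N : A, Q * N = N ∧ N * Q = N ∧ q N = x ∧ N ^ k = 0 ∧ (x = 0 → N = 0) := by
  by_cases hx0 : x = 0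
  · exact ⟨0, by simp, by simp, by simp [hx0], zero_pow hk, fun _ => rfl⟩
  obtain ⟨k, rfl⟩ := Nat.exists_eq_succ_of_ne_zero hk
  obtain ⟨W, hW, hWn⟩ := exists_nilpotent_lift q hq hSAW k x Q hQ hx hQx
  refine ⟨Q * W * Q, ?_, ?_, ?_, ?_, fun h => absurd h hx0⟩
  · simp only [← mul_assoc, hQQ]
  · simp only [mul_assoc, hQQ]
  · rw [map_mul, hW, hxQ]
  · have : ∀ m : ℕ, (Q * W * Q) ^ (m + 1) = (Q * W) ^ (m + 1) * Q := by
      intro m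
      induction m with
      | zero => simp
      | succ m ihm =>
        rw [pow_succ, ihm, pow_succ (Q * W) (m + 1)]
        simp only [mul_assoc]
        rw [← mul_assoc Q Q, hQQ]
    rw [Nat.succ_eq_add_one, this, hWn, zero_mul]

/-! ### The Stein equation and contractive similarities -/

/-- Gelfand's formula: powers of an element with spectrum in the open unit disc decay geometrically. -/
lemma summable_norm_pow_of_spectrum {A : Type*} [CStarAlgebra A] (C : A)
    (hC : ∀ z ∈ spectrum ℂ C, ‖z‖ < 1) : Summable fun n : ℕ => ‖C ^ n‖ := by
  rcases subsingleton_or_nontrivial A with hA | hA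
  · have : (fun n : ℕ => ‖C ^ n‖) = fun _ => 0 := by
      ext n; rw [Subsingleton.elim (C ^ n) 0, norm_zero]
    rw [this]; exact summable_zero
  have hrad : spectralRadius ℂ C < ((1 : NNReal) : ENNReal) :=
    spectrum.spectralRadius_lt_of_forall_lt C fun z hz => by exact_mod_cast hC z hz
  obtain ⟨ρ, hρ, hρ1⟩ := exists_between hrad
  have hρtop : ρ ≠ ⊤ := (hρ1.trans ENNReal.coe_lt_top).ne
  lift ρ to NNReal using hρtop
  have hρ1' : ρ < 1 := by exact_mod_cast hρ1
  have hev := (spectrum.pow_nnnorm_pow_one_div_tendsto_nhds_spectralRadius C).eventually_lt_const hρ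
  refine Summable.of_norm_bounded_eventually_nat (g := fun n => (ρ : ℝ) ^ n)
    (summable_geometric_of_lt_one ρ.2 hρ1') ?_
  filter_upwards [hev, eventually_gt_atTop 0] with n hn hn0
  have h1 : ((‖C ^ n‖₊ : ENNReal) ^ (1 / n : ℝ)) ^ (n : ℝ) ≤ (ρ : ENNReal) ^ (n : ℝ) :=
    ENNReal.rpow_le_rpow hn.le (by positivity)
  rw [← ENNReal.rpow_mul, one_div, inv_mul_cancel₀ (by positivity), ENNReal.rpow_one,
    ENNReal.rpow_natCast] at h1
  rw [norm_norm]
  exact_mod_cast h1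

/-- The Stein equation `F = P + C* F C` is solved by `∑ (C ^ n)* P C ^ n`. -/
lemma exists_stein {A : Type*} [CStarAlgebra A] [PartialOrder A] [StarOrderedRing A] (C : A)
    (hC : Summable fun n : ℕ => ‖C ^ n‖) (P : A) (hP : 0 ≤ P) :
    ∃ F : A, P ≤ F ∧ F = P + star C * F * C := by
  set f : ℕ → A := fun n => star (C ^ n) * P * C ^ n with hf
  have hf0 : ∀ n, 0 ≤ f n := fun n => star_left_conjugate_nonneg hP _
  have hsum : Summable f := by
    have hC2 : Summable fun n : ℕ => ‖P‖ * ‖C ^ n‖ := hC.mul_left _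
    refine Summable.of_norm_bounded_eventually_nat hC2 ?_
    filter_upwards [hC.tendsto_atTop_zero.eventually_le_const (u := 1) one_pos] with n hn
    calc ‖f n‖ ≤ ‖star (C ^ n)‖ * ‖P‖ * ‖C ^ n‖ := norm_mul₃_le
      _ ≤ 1 * ‖P‖ * ‖C ^ n‖ := by rw [norm_star]; gcongr
      _ = _ := by rw [one_mul]
  have hsucc : ∀ n, f (n + 1) = star C * f n * C := by
    intro n
    simp only [hf, pow_succ, star_mul, mul_assoc]
  have hshift : ∑' n, f (n + 1) = star C * (∑' n, f n) * C := by
    simp only [hsucc]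
    rw [(hsum.mul_left _).tsum_mul_right, hsum.tsum_mul_left]
  have h0 : ∑' n, f n = P + ∑' n, f (n + 1) := by
    rw [hsum.tsum_eq_zero_add]; simp [hf]
  refine ⟨∑' n, f n, ?_, ?_⟩
  · rw [h0]
    exact le_add_of_nonneg_right (tsum_nonneg fun n => hf0 _)
  · rw [← hshift, ← h0]

/-- Uniqueness in the Stein equation. -/
lemma eq_of_stein {B : Type*} [CStarAlgebra B] (c : B)
    (hc : Tendsto (fun n : ℕ => ‖c ^ n‖) atTop (𝓝 0)) (d x y : B)
    (hx : x = d + star c * x * c) (hy : y = d + star c * y * c) : x = y := by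
  rw [← sub_eq_zero]
  set w := x - y with hw
  have hw1 : w = star c * w * c := by
    rw [hw]; nth_rw 1 [hx, hy]; rw [mul_sub, sub_mul]; abel
  have hwn : ∀ n : ℕ, w = star (c ^ n) * w * c ^ n := by
    intro n
    induction n with
    | zero => simp
    | succ n ih =>
      nth_rw 1 [hw1, ih]
      rw [pow_succ, star_mul]
      simp only [mul_assoc]
  have hbound : ∀ n : ℕ, ‖w‖ ≤ ‖c ^ n‖ * ‖w‖ * ‖c ^ n‖ := by
    intro n
    conv_lhs => rw [hwn n]
    refine norm_mul₃_le.trans ?_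
    rw [norm_star]
  have hlim : Tendsto (fun n : ℕ => ‖c ^ n‖ * ‖w‖ * ‖c ^ n‖) atTop (𝓝 0) := by
    simpa using (hc.mul_const ‖w‖).mul hc
  exact norm_le_zero_iff.mp (ge_of_tendsto' hlim hbound)

/-- If `C` is contractive for the positive invertible form `H`, then `H^{1/2} C H^{-1/2}` is a contraction.
When `q H = r'²` and `q C = r b r'` with `r' = r⁻¹`, this conjugate is a lift of `b`. -/
lemma exists_contraction_of_form {A B : Type*} [CStarAlgebra A] [CStarAlgebra B]
    [PartialOrder A] [StarOrderedRing A] [PartialOrder B] [StarOrderedRing B]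
    (q : A →⋆ₐ[ℂ] B) (b r r' : B) (hr' : 0 ≤ r') (hrr' : r * r' = 1) (hr'r : r' * r = 1)
    (C H : A) (hC : q C = r * b * r') (hH : IsStrictlyPositive H) (hqH : q H = r' * r')
    (hCH : star C * H * C ≤ H) :
    ∃ X T T' : A, T * T' = 1 ∧ T' * T = 1 ∧ X = T * C * T' ∧ q X = b ∧ ‖X‖ ≤ 1 := by
  set T := CFC.sqrt H with hT
  have hT0 : 0 ≤ T := CFC.sqrt_nonneg H
  have hTT : T * T = H := CFC.sqrt_mul_sqrt_self H hH.nonneg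
  have hTsa : star T = T := hT0.isSelfAdjoint.star_eq
  obtain ⟨u, hu⟩ := hH.isUnit_cfcSqrt
  rw [← hT] at hu
  obtain ⟨T', h1, h2⟩ : ∃ T', T * T' = 1 ∧ T' * T = 1 :=
    ⟨↑u⁻¹, by rw [← hu]; simp, by rw [← hu]; simp⟩
  have hT'sa : star T' = T' := by
    calc star T' = star T' * (T * T') := by rw [h1, mul_one]
      _ = star (T * T') * T' := by rw [star_mul, hTsa, mul_assoc]
      _ = T' := by rw [h1]; simp
  have hqT : q T = r' := by
    have hqT0 : 0 ≤ q T := map_nonneg q hT0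
    rw [← CFC.mul_self_eq_mul_self_iff (q T) r' hqT0 hr', ← map_mul, hTT, hqH]
  have hqT' : q T' = r := by
    calc q T' = r * r' * q T' := by rw [hrr', one_mul]
      _ = r * q (T * T') := by rw [map_mul, hqT, mul_assoc]
      _ = r := by rw [h1]; simp
  refine ⟨T * C * T', T, T', h1, h2, rfl, ?_, ?_⟩
  · rw [map_mul, map_mul, hqT, hqT', hC]
    calc r' * (r * b * r') * r = (r' * r) * b * (r' * r) := by simp only [mul_assoc]
      _ = b := by rw [hr'r]; simp
  · have hle : star (T * C * T') * (T * C * T') ≤ 1 := by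
      calc star (T * C * T') * (T * C * T') = star T' * (star C * H * C) * T' := by
            rw [← hTT]; simp only [star_mul, hTsa, mul_assoc]
        _ ≤ star T' * H * T' := star_left_conjugate_le_conjugate hCH T'
        _ = (T' * T) * (T * T') := by rw [hT'sa, ← hTT]; simp only [mul_assoc]
        _ = 1 := by rw [h1, h2, one_mul]
    have := (CStarAlgebra.norm_le_one_iff_of_nonneg _ (star_mul_self_nonneg (T * C * T'))).mpr hle
    rw [CStarRing.norm_star_mul_self] at this
    have hnonneg := norm_nonneg (T * C * T')
    nlinarith only [hnonneg, this]

/-- The square of an invertible self-adjoint element is bounded below by a positive scalar. -/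
lemma exists_nsmul_ge_one {B : Type*} [CStarAlgebra B] [PartialOrder B] [StarOrderedRing B]
    (r r' : B) (hr : IsSelfAdjoint r) (hr' : IsSelfAdjoint r') (hrr' : r * r' = 1)
    (hr'r : r' * r = 1) : ∃ m : ℕ, 1 ≤ (m + 1) • (r' * r') := by
  obtain ⟨m, hm⟩ := exists_nat_ge (‖r‖ ^ 2)
  refine ⟨m, ?_⟩
  have h1 : r * r ≤ ((m + 1 : ℕ) : B) := by
    have h2 : star r * r ≤ algebraMap ℝ B (‖r‖ ^ 2) := CStarAlgebra.star_mul_le_algebraMap_norm_sq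
    rw [hr.star_eq] at h2
    refine h2.trans ?_
    rw [← map_natCast (algebraMap ℝ B)]
    exact algebraMap_mono B (by push_cast; linarith)
  have h3 := star_left_conjugate_le_conjugate h1 r'
  rw [hr'.star_eq] at h3
  calc (1 : B) = r' * (r * r) * r' := by
        rw [← mul_assoc, hr'r, one_mul, hrr']
    _ ≤ r' * ((m + 1 : ℕ) : B) * r' := h3
    _ = (m + 1) • (r' * r') := by
        rw [mul_assoc, ← nsmul_eq_mul, mul_smul_comm]

/-- Let `U + C₀` be a lift of `r b r'`, where `U` is unitary in the corner of the projection `E`, `C₀` lives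
in the complementary corner and has summable powers, and `r' = r⁻¹` is the identity on `q E`. Then some
similarity turns `U + C₀` into a contractive lift of `b`.

The form used is `H = E + F₁ + F₂` with `F₁`, `F₂` solutions of Stein equations for `C₀`. Since
`h = r'²` satisfies `h = d + (q (U + C₀))* h (q (U + C₀))` with `d = r' (1 - b* b) r' ≥ 0`, uniqueness
for a positive lift of `d` gives `q F₁ = h - q E`. The form `E + F₁` may be singular, and `F₂`, which is
killed by `q`, restores invertibility. -/
lemma exists_contractive_conjugate {A B : Type*} [CStarAlgebra A] [CStarAlgebra B]
    [PartialOrder A] [StarOrderedRing A] [PartialOrder B] [StarOrderedRing B]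
    (q : A →⋆ₐ[ℂ] B) (hq : Function.Surjective q) (b r r' : B) (hb : ‖b‖ ≤ 1)
    (hr : IsSelfAdjoint r) (hr' : 0 ≤ r') (hrr' : r * r' = 1) (hr'r : r' * r = 1)
    (E U C₀ : A) (hE : IsSelfAdjoint E) (hEE : E * E = E) (hEU : E * U = U)
    (hUU : star U * U = E) (hEC : E * C₀ = 0) (hCE : C₀ * E = 0)
    (hsum : Summable fun n : ℕ => ‖C₀ ^ n‖) (hqC : q (U + C₀) = r * b * r')
    (hr'E : r' * q E = q E) :
    ∃ X T T' : A, T * T' = 1 ∧ T' * T = 1 ∧ X = T * (U + C₀) * T' ∧ q X = b ∧ ‖X‖ ≤ 1 := by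
  have hr'sa : star r' = r' := hr'.isSelfAdjoint.star_eq
  have hrsa : star r = r := hr.star_eq
  have hEsa : star E = E := hE.star_eq
  have hE1 : E * (1 - E) = 0 := by rw [mul_sub, mul_one, hEE, sub_self]
  have h1E : (1 - E) * E = 0 := by rw [sub_mul, one_mul, hEE, sub_self]
  have hUE : star U * E = star U := by
    have := congrArg star hEU
    rwa [star_mul, hEsa] at this
  have hCE' : E * star C₀ = 0 := by
    have := congrArg star hCE
    rwa [star_mul, hEsa, star_zero] at this
  have hEC' : star C₀ * E = 0 := by
    have := congrArg star hEC
    rwa [star_mul, hEsa, star_zero] at this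
  have hUC : star U * C₀ = 0 := by rw [← hUE, mul_assoc, hEC, mul_zero]
  have hCU : star C₀ * U = 0 := by rw [← hEU, ← mul_assoc, hEC', zero_mul]
  set e := q E with he
  set u := q U with hu
  set c := q C₀ with hc
  have hesa : star e = e := by rw [he, ← map_star, hEsa]
  have hee : e * e = e := by rw [he, ← map_mul, hEE]
  have heu : e * u = u := by rw [he, hu, ← map_mul, hEU]
  have huu : star u * u = e := by rw [he, hu, ← map_star, ← map_mul, hUU]
  have hec : e * c = 0 := by rw [he, hc, ← map_mul, hEC, map_zero]
  have hce : c * e = 0 := by rw [he, hc, ← map_mul, hCE, map_zero]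
  have hec' : e * star c = 0 := by rw [he, hc, ← map_star, ← map_mul, hCE', map_zero]
  have huc : star u * c = 0 := by rw [hu, hc, ← map_star, ← map_mul, hUC, map_zero]
  have hcu : star c * u = 0 := by rw [hu, hc, ← map_star, ← map_mul, hCU, map_zero]
  set h := r' * r' with hh
  have hhe : h * e = e := by rw [hh, mul_assoc, hr'E, hr'E]
  have heh : e * h = e := by
    have := congrArg star hhe
    rwa [star_mul, hesa, hh, star_mul, hr'sa, ← hh] at this
  have hhu : h * u = u := by rw [← heu, ← mul_assoc, hhe]
  have huh : star u * h = star u := by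
    have := congrArg star hhu
    rwa [star_mul, hh, star_mul, hr'sa, ← hh] at this
  set d := r' * (1 - star b * b) * r' with hd
  have hform : h = d + (e + star c * h * c) := by
    have h1 : star (u + c) * h * (u + c) = r' * (star b * b) * r' := by
      rw [hu, hc, ← map_add, hqC, hh]
      simp only [star_mul, hr'sa, hrsa]
      calc r' * (star b * r) * (r' * r') * (r * b * r')
          = r' * (star b * (r * r') * (r' * r) * b) * r' := by simp only [mul_assoc]
        _ = _ := by rw [hrr', hr'r]; simp only [mul_one]
    have h2 : star (u + c) * h * (u + c) = e + star c * h * c := by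
      calc star (u + c) * h * (u + c)
          = (star u * h) * u + (star u * h) * c + star c * (h * u) + star c * h * c := by
            rw [star_add]; noncomm_ring
        _ = _ := by rw [huh, hhu, huu, huc, hcu]; simp
    rw [← h2, h1, hd, hh]
    noncomm_ring
  have hst : h - e = d + star c * (h - e) * c := by
    rw [mul_sub, sub_mul, mul_assoc (star c) e, hec, mul_zero, sub_zero]
    nth_rw 1 [hform]
    abel
  have hde : d * e = 0 := by
    have h1 : d = h - e - star c * (h - e) * c := by rw [eq_sub_iff_add_eq, ← hst]
    rw [h1, sub_mul, sub_mul, hhe, hee, sub_self, mul_assoc _ c, hce]; simp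
  have hed : e * d = 0 := by
    have h1 : d = h - e - star c * (h - e) * c := by rw [eq_sub_iff_add_eq, ← hst]
    rw [h1, mul_sub, mul_sub, heh, hee, sub_self, mul_assoc, ← mul_assoc e, hec']
    simp only [zero_mul, mul_zero, sub_zero]
  -- A positive lift `P` of `d`, cut down to the complement of `E`.
  obtain ⟨P, hP, hPE, hEP, hqP⟩ : ∃ P : A, 0 ≤ P ∧ P * E = 0 ∧ E * P = 0 ∧ q P = d := by
    have h1 : 0 ≤ 1 - star b * b := by
      rw [sub_nonneg]
      refine (CStarAlgebra.norm_le_one_iff_of_nonneg _ (star_mul_self_nonneg b)).mp ?_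
      rw [CStarRing.norm_star_mul_self]
      nlinarith [norm_nonneg b]
    obtain ⟨w, hw⟩ := CStarAlgebra.nonneg_iff_eq_star_mul_self.mp h1
    obtain ⟨Y, hY⟩ := hq (w * r')
    refine ⟨star (Y * (1 - E)) * (Y * (1 - E)), star_mul_self_nonneg _, ?_, ?_, ?_⟩
    · rw [mul_assoc, mul_assoc, h1E, mul_zero, mul_zero]
    · rw [star_mul, star_sub, hEsa, star_one]; simp only [← mul_assoc, hE1, zero_mul]
    · have h2 : star (w * r') * (w * r') = d := by
        rw [hd, hw, star_mul, hr'sa]; simp only [mul_assoc]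
      rw [map_mul, map_star, map_mul, hY, map_sub, map_one, ← he, star_mul, star_sub, hesa,
        star_one]
      calc (1 - e) * star (w * r') * (w * r' * (1 - e))
          = (1 - e) * (star (w * r') * (w * r')) * (1 - e) := by simp only [mul_assoc]
        _ = d := by rw [h2, sub_mul, hed, one_mul, sub_zero, mul_sub, hde, mul_one, sub_zero]
  obtain ⟨F₁, hPF, hF₁⟩ := exists_stein C₀ hsum P hP
  have hlim : Tendsto (fun n : ℕ => ‖c ^ n‖) atTop (𝓝 0) := by
    refine squeeze_zero (fun _ => norm_nonneg _) (fun n => ?_) hsum.tendsto_atTop_zero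
    rw [hc, ← map_pow]
    exact NonUnitalStarAlgHom.norm_apply_le q _
  have hqF₁ : q F₁ = h - e := by
    refine eq_of_stein c hlim d _ _ ?_ hst
    conv_lhs => rw [hF₁]
    rw [map_add, map_mul, map_mul, map_star, hqP]
  have hcut : ∀ P F : A, F = P + star C₀ * F * C₀ → P * E = 0 → E * P = 0 →
      F * E = 0 ∧ E * F = 0 := by
    intro P F hF hPE hEP
    constructor
    · rw [hF, add_mul, hPE, mul_assoc _ C₀, hCE]; simp
    · rw [hF, mul_add, hEP, mul_assoc, ← mul_assoc E, hCE']; simp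
  obtain ⟨hF₁E, hEF₁⟩ := hcut P F₁ hF₁ hPE hEP
  -- In the quotient `(m + 1) h ≥ 1`. The defect of this inequality in `A` is a self-adjoint element `i`
  -- of the kernel, and a Stein solution over `V = (1 - E) i² (1 - E)` absorbs it: `i² + 2 i + 1 ≥ 0`.
  obtain ⟨m, hm⟩ := exists_nsmul_ge_one r r' hr hr'.isSelfAdjoint hrr' hr'r
  obtain ⟨w, hw⟩ := CStarAlgebra.nonneg_iff_eq_star_mul_self.mp (sub_nonneg.mpr hm)
  obtain ⟨W, rfl⟩ := hq w
  obtain ⟨i, hi⟩ : ∃ i, i = (m + 1) • (E + F₁) - 1 - star W * W := ⟨_, rfl⟩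
  have hF₁0 : 0 ≤ F₁ := hP.trans hPF
  have hisa : star i = i := by
    rw [hi, star_sub, star_sub, star_nsmul, star_add, hEsa, hF₁0.isSelfAdjoint.star_eq, star_one,
      star_mul, star_star]
  have hqi : q i = 0 := by
    rw [hi, map_sub, map_sub, map_nsmul, map_add, hqF₁, map_mul, map_star, ← hw, map_one, ← he,
      add_sub_cancel, ← hh, sub_self]
  have hE0 : 0 ≤ E := by
    have := star_mul_self_nonneg E
    rwa [hEsa, hEE] at this
  have hVeq : (1 - E) * (i * i) * (1 - E) = star (i * (1 - E)) * (i * (1 - E)) := by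
    rw [star_mul, hisa, star_sub, star_one, hEsa]; simp only [mul_assoc]
  obtain ⟨V, hV⟩ : ∃ V, V = (1 - E) * (i * i) * (1 - E) := ⟨_, rfl⟩
  have hV0 : 0 ≤ V := by rw [hV, hVeq]; exact star_mul_self_nonneg _
  have hVE : V * E = 0 := by rw [hV, mul_assoc, h1E, mul_zero]
  have hEV : E * V = 0 := by rw [hV, ← mul_assoc, ← mul_assoc, hE1, zero_mul, zero_mul]
  have hqV : q V = 0 := by rw [hV]; simp [hqi]
  obtain ⟨F₂, hVF, hF₂⟩ := exists_stein C₀ hsum V hV0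
  have hqF₂ : q F₂ = 0 := by
    refine eq_of_stein c hlim 0 _ _ ?_ (by simp)
    conv_lhs => rw [hF₂]
    rw [map_add, map_mul, map_mul, map_star, hqV]
  obtain ⟨hF₂E, hEF₂⟩ := hcut V F₂ hF₂ hVE hEV
  have hF₂0 : 0 ≤ F₂ := hV0.trans hVF
  have hH0 : 0 ≤ E + F₁ + F₂ := add_nonneg (add_nonneg hE0 hF₁0) hF₂0
  have hone : 1 ≤ 2 • ((m + 1) • (E + F₁ + F₂)) := by
    have h1 : (m + 1) • F₁ = (1 - E) * (1 + star W * W + i) * (1 - E) := by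
      have h2 : 1 + star W * W + i = (m + 1) • (E + F₁) := by rw [hi]; abel
      rw [h2, mul_smul_comm, smul_mul_assoc]
      congr 1
      rw [mul_add, h1E, zero_add, sub_mul, hEF₁, one_mul, sub_zero, mul_sub, hF₁E, mul_one,
        sub_zero]
    have h3 : 0 ≤ star ((1 - E)) * (2 • (star W * W) + star (i + 1) * (i + 1)) * (1 - E) :=
      star_left_conjugate_nonneg (add_nonneg (nsmul_nonneg (star_mul_self_nonneg _) _)
        (star_mul_self_nonneg _)) _
    have h4 : (1 + E) + star ((1 - E)) * (2 • (star W * W) + star (i + 1) * (i + 1)) * (1 - E)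
        = 2 • E + 2 • ((m + 1) • F₁) + V := by
      have h5 : (1 - E) * 1 * (1 - E) = 1 - E := by
        rw [mul_one, mul_sub, sub_mul, sub_mul, hEE]; simp
      rw [h1, hV, star_add, hisa, star_sub, star_one, hEsa]
      calc _ = (2 • E + (1 - E)) + (1 - E) * (2 • (star W * W) + (i + 1) * (i + 1)) * (1 - E) := by
            congr 1; abel
        _ = (2 • E + (1 - E) * 1 * (1 - E))
            + (1 - E) * (2 • (star W * W) + (i + 1) * (i + 1)) * (1 - E) := by rw [h5]
        _ = _ := by
          rw [add_assoc, add_assoc]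
          congr 1
          generalize 1 - E = x
          simp only [two_smul, mul_add, add_mul, mul_one, one_mul]
          abel
    calc (1 : A) ≤ 1 + E := le_add_of_nonneg_right hE0
      _ ≤ 2 • E + 2 • ((m + 1) • F₁) + V := by rw [← h4]; exact le_add_of_nonneg_right h3
      _ ≤ 2 • E + 2 • ((m + 1) • F₁) + F₂ := by gcongr
      _ ≤ (2 • E + 2 • ((m + 1) • F₁) + F₂) + (2 • (m • E) + F₂ + 2 • (m • F₂)) :=
          le_add_of_nonneg_right (add_nonneg (add_nonneg (nsmul_nonneg (nsmul_nonneg hE0 _) _) hF₂0)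
            (nsmul_nonneg (nsmul_nonneg hF₂0 _) _))
      _ = _ := by
          simp only [add_smul, one_smul, smul_add, two_smul]
          abel
  have hHpos : IsStrictlyPositive (E + F₁ + F₂) := by
    refine IsUnit.isStrictlyPositive ?_ hH0
    have h1 : IsUnit (2 • ((m + 1) • (E + F₁ + F₂))) :=
      CStarAlgebra.isUnit_of_le 1 hone isStrictlyPositive_one
    rw [smul_smul, nsmul_eq_mul] at h1
    exact ((Nat.cast_commute _ _).isUnit_mul_iff.mp h1).2
  refine exists_contraction_of_form q b r r' hr' hrr' hr'r (U + C₀) (E + F₁ + F₂) hqC hHpos ?_ ?_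
  · rw [map_add, map_add, hqF₁, hqF₂, ← he, ← hh]; abel
  · have h1 : star (U + C₀) * (E + F₁ + F₂) * (U + C₀)
        = E + (star C₀ * F₁ * C₀ + star C₀ * F₂ * C₀) := by
      have hUF : ∀ F : A, E * F = 0 → star U * F = 0 := fun F hF => by
        rw [← hUE, mul_assoc, hF, mul_zero]
      have hFU : ∀ F : A, F * E = 0 → F * U = 0 := fun F hF => by
        rw [← hEU, ← mul_assoc, hF, zero_mul]
      rw [star_add, add_mul (star U), mul_add (star U), mul_add (star U), hUE, hUF _ hEF₁,
        hUF _ hEF₂, mul_add (star C₀), mul_add (star C₀), hEC', add_zero, add_zero, zero_add,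
        add_mul, mul_add, hUU, hUC, mul_add, add_mul, add_mul, mul_assoc _ F₁ U, hFU _ hF₁E,
        mul_assoc _ F₂ U, hFU _ hF₂E]
      simp
    rw [h1, add_assoc]
    gcongr
    · conv_rhs => rw [hF₁]
      exact le_add_of_nonneg_left hP
    · conv_rhs => rw [hF₂]
      exact le_add_of_nonneg_left hV0

/-! ### Unimodular eigenvalues of contractions -/

/-- For a contraction, eigenvectors to unimodular eigenvalues are also eigenvectors of the adjoint. -/
lemma star_mul_eq_of_unimodular {B : Type*} [CStarAlgebra B] [PartialOrder B] [StarOrderedRing B]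
    (b f : B) (l : ℂ) (hb : ‖b‖ ≤ 1) (hl : ‖l‖ = 1) (hf : (b - l • 1) * f = 0) :
    star f * b = l • star f := by
  have hbf : b * f = l • f := by
    rw [sub_mul, sub_eq_zero, smul_one_mul] at hf; exact hf
  have hll : star l * l = 1 := by
    have := Complex.conj_mul' l
    rw [hl] at this
    simpa using this
  have h1 : 0 ≤ 1 - star b * b := by
    rw [sub_nonneg]
    refine (CStarAlgebra.norm_le_one_iff_of_nonneg _ (star_mul_self_nonneg b)).mp ?_
    rw [CStarRing.norm_star_mul_self]
    nlinarith [norm_nonneg b]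
  obtain ⟨w, hw⟩ := CStarAlgebra.nonneg_iff_eq_star_mul_self.mp h1
  have h2 : star f * (1 - star b * b) * f = 0 := by
    calc star f * (1 - star b * b) * f = star f * f - star (b * f) * (b * f) := by
          rw [star_mul]; noncomm_ring
      _ = 0 := by
        rw [hbf, star_smul, smul_mul_smul_comm, hll, one_smul, sub_self]
  have h3 : w * f = 0 := by
    rw [← CStarRing.star_mul_self_eq_zero_iff, star_mul, ← h2, hw]
    simp only [mul_assoc]
  have h4 : star b * (b * f) = f := by
    have : (1 - star b * b) * f = 0 := by rw [hw, mul_assoc, h3, mul_zero]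
    rw [sub_mul, one_mul, sub_eq_zero, mul_assoc] at this
    exact this.symm
  have h5 : star b * f = star l • f := by
    calc star b * f = (star l * l) • (star b * f) := by rw [hll, one_smul]
      _ = star l • (star b * (b * f)) := by rw [hbf, mul_smul_comm, smul_smul]
      _ = star l • f := by rw [h4]
  have := congrArg star h5
  simpa using this

/-- Generalized eigenvalues of a contraction lie in the closed unit disc. -/
lemma norm_le_one_of_pow_mul_eq_zero {B : Type*} [CStarAlgebra B] (b e : B) (l : ℂ)
    (hb : ‖b‖ ≤ 1) (k : ℕ) (he : e ≠ 0) (h : (b - l • 1) ^ k * e = 0) : ‖l‖ ≤ 1 := by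
  induction k with
  | zero => simp at h; exact absurd h he
  | succ k ih =>
    by_cases hf : (b - l • 1) ^ k * e = 0
    · exact ih hf
    · set f := (b - l • 1) ^ k * e with hfdef
      rw [pow_succ', mul_assoc, ← hfdef, sub_mul, sub_eq_zero, smul_one_mul] at h
      have h1 : ‖l‖ * ‖f‖ ≤ 1 * ‖f‖ := by
        rw [← norm_smul, ← h]
        exact (norm_mul_le _ _).trans (by gcongr)
      exact le_of_mul_le_mul_right h1 (norm_pos_iff.mpr hf)

/-- Unimodular generalized eigenvalues of a contraction are semisimple. -/
lemma mul_eq_zero_of_unimodular {B : Type*} [CStarAlgebra B] [PartialOrder B] [StarOrderedRing B]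
    (b e : B) (l : ℂ) (hb : ‖b‖ ≤ 1) (hl : ‖l‖ = 1) (k : ℕ)
    (h : (b - l • 1) ^ (k + 1) * e = 0) : (b - l • 1) * e = 0 := by
  induction k with
  | zero => simpa using h
  | succ k ih =>
    apply ih
    set f := (b - l • 1) ^ (k + 1) * e with hf
    have h1 : (b - l • 1) * f = 0 := by rw [hf, ← mul_assoc, ← pow_succ', h]
    have h2 := star_mul_eq_of_unimodular b f l hb hl h1
    rw [← CStarRing.star_mul_self_eq_zero_iff]
    have h3 : star f * (b - l • 1) = 0 := by rw [mul_sub, h2, mul_smul_one, sub_self]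
    nth_rw 2 [hf]
    rw [pow_succ', mul_assoc, ← mul_assoc, h3, zero_mul]

/-- A unimodular eigenspace of a contraction is orthogonal to all other generalized eigenspaces. -/
lemma star_mul_eq_zero_of_unimodular {B : Type*} [CStarAlgebra B] [PartialOrder B]
    [StarOrderedRing B] (b e e' : B) (l l' : ℂ) (hb : ‖b‖ ≤ 1) (hl : ‖l‖ = 1) (hll : l ≠ l')
    (k : ℕ) (h : (b - l • 1) * e = 0) (h' : (b - l' • 1) ^ k * e' = 0) : star e * e' = 0 := by
  have h1 := star_mul_eq_of_unimodular b e l hb hl h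
  have h2 : ∀ m : ℕ, star e * (b - l' • 1) ^ m = (l - l') ^ m • star e := by
    intro m
    induction m with
    | zero => simp
    | succ m ih =>
      rw [pow_succ, ← mul_assoc, ih, smul_mul_assoc, mul_sub, h1, mul_smul_one, ← sub_smul,
        smul_smul, pow_succ]
  have h3 : (l - l') ^ k • (star e * e') = 0 := by
    rw [← smul_mul_assoc, ← h2, mul_assoc, h', mul_zero]
  exact (smul_eq_zero.mp h3).resolve_left (pow_ne_zero _ (sub_ne_zero.mpr hll))

lemma mul_eq_of_sq_mul_eq {B : Type*} [CStarAlgebra B] [PartialOrder B] [StarOrderedRing B]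
    (r e : B) (hr : 0 ≤ r) (h : r * r * e = e) : r * e = e := by
  set y := r * e - e with hy
  have h1 : r * y + y = 0 := by
    rw [hy, mul_sub, ← mul_assoc, h]; abel
  have h2 : star y * r * y + star y * y = 0 := by
    rw [mul_assoc, ← mul_add, h1, mul_zero]
  have h3 : star y * y = 0 :=
    ((add_eq_zero_iff_of_nonneg (star_left_conjugate_nonneg hr y) (star_mul_self_nonneg y)).mp h2).2
  rw [CStarRing.star_mul_self_eq_zero_iff, hy, sub_eq_zero] at h3
  exact h3

/-! ### Block decompositions -/

/-- Projections with sum `1` are mutually orthogonal. -/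
lemma proj_mul_eq_zero {A : Type*} [CStarAlgebra A] [PartialOrder A] [StarOrderedRing A]
    {n : ℕ} (Q : Fin n → A) (hQ : ∀ i, IsSelfAdjoint (Q i) ∧ IsIdempotentElem (Q i))
    (hsum : ∑ i, Q i = 1) (i j : Fin n) (hij : i ≠ j) : Q i * Q j = 0 := by
  have hterm : ∀ l, star (Q l * Q j) * (Q l * Q j) = Q j * Q l * Q j := by
    intro l
    rw [star_mul, (hQ l).1.star_eq, (hQ j).1.star_eq, mul_assoc, ← mul_assoc (Q l) (Q l),
      (hQ l).2.eq, ← mul_assoc]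
  have h1 : ∑ l, star (Q l * Q j) * (Q l * Q j) = Q j := by
    simp only [hterm]
    rw [← Finset.sum_mul, ← Finset.mul_sum, hsum, mul_one, (hQ j).2.eq]
  rw [← Finset.add_sum_erase _ _ (Finset.mem_univ j), hterm j, (hQ j).2.eq, (hQ j).2.eq,
    add_eq_left, Finset.sum_eq_zero_iff_of_nonneg fun l _ => star_mul_self_nonneg _] at h1
  exact (CStarRing.star_mul_self_eq_zero_iff _).mp
    (h1 i (Finset.mem_erase.mpr ⟨hij, Finset.mem_univ i⟩))

lemma blockSum_mul_blockSum {A : Type*} [Ring A] {n : ℕ} (Q : Fin n → A)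
    (horth : ∀ i j, i ≠ j → Q i * Q j = 0) (x y : Fin n → A) (hx : ∀ i, x i * Q i = x i)
    (hy : ∀ i, Q i * y i = y i) : (∑ i, x i) * (∑ i, y i) = ∑ i, x i * y i := by
  rw [Finset.sum_mul_sum]
  refine Finset.sum_congr rfl fun i _ => ?_
  refine Finset.sum_eq_single_of_mem i (Finset.mem_univ i) fun j _ hji => ?_
  rw [← hx i, ← hy j, mul_assoc, ← mul_assoc (Q i) (Q j), horth i j hji.symm, zero_mul, mul_zero]

/-- On the block `Q i`, the element `∑ (ν j Q j + M j)` minus `ν i` acts as `M i`. -/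
lemma blockSum_sub_pow_mul {A : Type*} [Ring A] [Algebra ℂ A] {n : ℕ} (Q : Fin n → A)
    (hidem : ∀ i, Q i * Q i = Q i)
    (horth : ∀ i j, i ≠ j → Q i * Q j = 0) (ν : Fin n → ℂ) (M : Fin n → A)
    (hQM : ∀ i, Q i * M i = M i) (hMQ : ∀ i, M i * Q i = M i) (i : Fin n) (m : ℕ) :
    ((∑ j, (ν j • Q j + M j)) - ν i • 1) ^ m * Q i = M i ^ m * Q i := by
  have h1 : ((∑ j, (ν j • Q j + M j)) - ν i • 1) * Q i = M i := by
    have h0 : (∑ j, (ν j • Q j + M j)) * Q i = ν i • Q i + M i := by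
      rw [Finset.sum_mul, Finset.sum_eq_single_of_mem i (Finset.mem_univ i)]
      · rw [add_mul, smul_mul_assoc, hidem, hMQ]
      · intro j _ hji
        rw [add_mul, smul_mul_assoc, horth j i hji, ← hMQ j, mul_assoc, horth j i hji]
        simp
    rw [sub_mul, h0, smul_one_mul, add_sub_cancel_left]
  have h2 : ((∑ j, (ν j • Q j + M j)) - ν i • 1) * M i = M i * M i := by
    rw [← hQM i, ← mul_assoc, h1, hQM]
  induction m with
  | zero => simp
  | succ m ih =>
    have h3 : ∀ m : ℕ, ((∑ j, (ν j • Q j + M j)) - ν i • 1) * (M i ^ m * Q i)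
        = M i ^ (m + 1) * Q i := by
      intro m
      cases m with
      | zero => simp [h1, hMQ]
      | succ m => rw [pow_succ', ← mul_assoc, ← mul_assoc, h2, pow_succ', pow_succ', ← mul_assoc]
    rw [pow_succ', mul_assoc, ih, h3]

lemma aeval_eq_zero_of_blocks {A : Type*} [Ring A] [Algebra ℂ A] {n : ℕ} (Q : Fin n → A)
    (hsum : ∑ i, Q i = 1) (C : A) (P : Polynomial ℂ)
    (h : ∀ i, ∃ (l : ℂ) (m : ℕ), (Polynomial.X - Polynomial.C l) ^ m ∣ P ∧
      (C - l • 1) ^ m * Q i = 0) : Polynomial.aeval C P = 0 := by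
  rw [← mul_one (Polynomial.aeval C P), ← hsum, Finset.mul_sum]
  refine Finset.sum_eq_zero fun i _ => ?_
  obtain ⟨l, m, ⟨g, hg⟩, hm⟩ := h i
  rw [hg, mul_comm, map_mul, map_pow, map_sub, Polynomial.aeval_X, Polynomial.aeval_C,
    Algebra.algebraMap_eq_smul_one, mul_assoc, hm, mul_zero]

/-- The ordered product of noncommutative factors is the value of the polynomial `∏ (t - λᵢ) ^ kᵢ`. -/
lemma prod_ofFn_eq_aeval {A : Type*} [Ring A] [Algebra ℂ A] {n : ℕ} (X : A) (lam : Fin n → ℂ)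
    (k : Fin n → ℕ) : (List.ofFn fun i => (X - lam i • 1) ^ k i).prod
      = Polynomial.aeval X (∏ i, (Polynomial.X - Polynomial.C (lam i)) ^ k i) := by
  rw [← List.prod_ofFn, map_list_prod, List.map_ofFn]
  congr 2
  ext i
  simp [Algebra.algebraMap_eq_smul_one]

lemma norm_lt_one_of_mem_spectrum_of_blocks {A : Type*} [CStarAlgebra A] [Nontrivial A] {n : ℕ}
    (Q : Fin n → A) (hsum : ∑ i, Q i = 1) (C : A) (ν : Fin n → ℂ) (k : Fin n → ℕ)
    (hν : ∀ i, ‖ν i‖ < 1) (h : ∀ i, (C - ν i • 1) ^ k i * Q i = 0) :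
    ∀ z ∈ spectrum ℂ C, ‖z‖ < 1 := by
  intro z hz
  have h0 := aeval_eq_zero_of_blocks Q hsum C
    (∏ i, (Polynomial.X - Polynomial.C (ν i)) ^ k i) fun i =>
      ⟨ν i, k i, Finset.dvd_prod_of_mem _ (Finset.mem_univ i), h i⟩
  have h1 := spectrum.subset_polynomial_aeval C
    (∏ i, (Polynomial.X - Polynomial.C (ν i)) ^ k i) ⟨z, hz, rfl⟩
  rw [h0, spectrum.zero_eq, Set.mem_singleton_iff] at h1
  simp only [Polynomial.eval_prod, Polynomial.eval_pow, Polynomial.eval_sub, Polynomial.eval_X,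
    Polynomial.eval_C] at h1
  obtain ⟨i, -, hi⟩ := Finset.prod_eq_zero_iff.mp h1
  rw [sub_eq_zero.mp (eq_zero_of_pow_eq_zero hi)]
  exact hν i

end Lifting

/-! ### Norm-preserving lifting -/

/-- **Lemma on norm-preserving algebraic lifting.** Let
`p(t) = (t−λ₁)^{k₁}⋯(t−λₙ)^{kₙ}` with distinct roots and all `kᵢ ≥ 2`. Let `A` be a unital
C*-algebra, `q : A → A/I` the quotient map onto a SAW* quotient (encoded as a surjective
unital star algebra homomorphism onto a SAW* C*-algebra `B`). Let `b ∈ B` with `p(b) = 0`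
and `‖b‖ = 1`, let `e i` be the spectral idempotents of `b`, `s = ∑ eᵢ* eᵢ` (positive and
invertible, with positive square root `r` and inverse square root `r'`), and
`pᵢ = s^{1/2} eᵢ s^{-1/2}` the associated projections with sum `1`. If the `pᵢ` lift to
projections `Qᵢ ∈ A` with sum `1`, then `b` lifts to `X ∈ A` with `p(X) = 0`, `‖X‖ = 1`. -/
theorem stmt_5 {A B : Type*} [CStarAlgebra A] [CStarAlgebra B]
    [PartialOrder B] [StarOrderedRing B]
    (q : A →⋆ₐ[ℂ] B) (hq : Function.Surjective q)
    (hSAW : ∀ a b : B, IsSelfAdjoint a → IsSelfAdjoint b → a * b = 0 →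
      ∃ z : B, 0 ≤ z ∧ z ≤ 1 ∧ a * z = a ∧ z * b = 0)
    (n : ℕ) (lam : Fin n → ℂ) (hlam : Function.Injective lam)
    (k : Fin n → ℕ) (hk : ∀ i, 2 ≤ k i)
    (b : B) (hb : (List.ofFn fun i => (b - lam i • 1) ^ k i).prod = 0) (hbnorm : ‖b‖ = 1)
    (e : Fin n → B)
    (he_idem : ∀ i, e i * e i = e i)
    (he_orth : ∀ i j, i ≠ j → e i * e j = 0)
    (he_sum : ∑ i, e i = 1)
    (he_comm : ∀ i, b * e i = e i * b)
    (he_ann : ∀ i, (b - lam i • 1) ^ k i * e i = 0)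
    (s r r' : B) (hs : s = ∑ i, star (e i) * e i)
    (hs_pos : 0 ≤ s) (hs_inv : IsUnit s)
    (hr_pos : 0 ≤ r) (hr_sq : r * r = s) (hrr' : r * r' = 1) (hr'r : r' * r = 1)
    (p : Fin n → B) (hp : ∀ i, p i = r * e i * r')
    (hp_proj : ∀ i, IsSelfAdjoint (p i) ∧ IsIdempotentElem (p i))
    (hp_sum : ∑ i, p i = 1)
    (Q : Fin n → A)
    (hQ_proj : ∀ i, IsSelfAdjoint (Q i) ∧ IsIdempotentElem (Q i))
    (hQ_sum : ∑ i, Q i = 1)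
    (hQ_lift : ∀ i, q (Q i) = p i) :
    ∃ X : A, q X = b ∧ (List.ofFn fun i => (X - lam i • 1) ^ k i).prod = 0 ∧ ‖X‖ = 1 := by
  let _ : PartialOrder A := CStarAlgebra.spectralOrder A
  have _ : StarOrderedRing A := CStarAlgebra.spectralOrderedRing A
  have hB : Nontrivial B := by
    refine ⟨⟨b, 0, fun h => ?_⟩⟩
    rw [h, norm_zero] at hbnorm
    exact zero_ne_one hbnorm
  have hA : Nontrivial A := hq.nontrivial
  have hb1 : ‖b‖ ≤ 1 := hbnorm.le
  have hSAW' : ∀ a b : B, IsSelfAdjoint a → IsSelfAdjoint b → a * b = 0 →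
      ∃ z : B, IsSelfAdjoint z ∧ a * z = a ∧ z * b = 0 := fun a b ha hb' hab => by
    obtain ⟨z, hz, -, h1, h2⟩ := hSAW a b ha hb' hab
    exact ⟨z, hz.isSelfAdjoint, h1, h2⟩
  have hrsa : star r = r := hr_pos.isSelfAdjoint.star_eq
  have hr'sa : star r' = r' := by
    calc star r' = star r' * (r * r') := by rw [hrr', mul_one]
      _ = star (r * r') * r' := by rw [star_mul, hrsa, mul_assoc]
      _ = r' := by rw [hrr']; simp
  have hr'_pos : 0 ≤ r' := by
    have h1 := star_left_conjugate_nonneg hr_pos r'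
    rwa [hr'sa, hr'r, one_mul] at h1
  -- Indices with `e i = 0` carry no spectrum; they borrow the root of a fixed nonzero idempotent.
  obtain ⟨i₀, hi₀⟩ : ∃ i, e i ≠ 0 := by
    by_contra! hall
    simp [hall] at he_sum
  obtain ⟨κ, hκ, hκi⟩ : ∃ κ : Fin n → Fin n, (∀ i, e (κ i) ≠ 0) ∧ ∀ i, e i ≠ 0 → κ i = i := by
    classical
    refine ⟨fun i => if e i = 0 then i₀ else i, fun i => ?_, fun i hi => if_neg hi⟩
    by_cases hi : e i = 0
    · simp [hi, hi₀]
    · simp [hi]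
  obtain ⟨μ, hμ⟩ : ∃ μ : Fin n → ℂ, ∀ i, μ i = lam (κ i) := ⟨_, fun _ => rfl⟩
  have hk0 : ∀ i, k (κ i) ≠ 0 := fun i => by have := hk (κ i); omega
  have hann : ∀ i, (b - μ i • 1) ^ k (κ i) * e i = 0 := fun i => by
    by_cases hi : e i = 0
    · rw [hi, mul_zero]
    · rw [hμ, hκi i hi, he_ann]
  have hμ1 : ∀ i, ‖μ i‖ ≤ 1 := fun i => by
    rw [hμ]
    exact norm_le_one_of_pow_mul_eq_zero b (e (κ i)) _ hb1 _ (hκ i) (he_ann _)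
  have huni : ∀ i, ‖μ i‖ = 1 → (b - μ i • 1) * e i = 0 := fun i hi => by
    refine mul_eq_zero_of_unimodular b (e i) _ hb1 hi (k (κ i) - 1) ?_
    rw [Nat.sub_add_cancel (Nat.one_le_iff_ne_zero.mpr (hk0 i))]
    exact hann i
  -- For a unimodular root `e i` is itself a projection fixed by `s`, so `p i = e i`.
  have hr'p : ∀ i, ‖μ i‖ = 1 → r' * p i = p i := fun i hi => by
    by_cases hei : e i = 0
    · rw [hp, hei]; simp
    have hstar : ∀ j, j ≠ i → star (e i) * e j = 0 := fun j hj => by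
      refine star_mul_eq_zero_of_unimodular b (e i) (e j) (μ i) (lam j) hb1 hi ?_ (k j) (huni i hi)
        (he_ann j)
      rw [hμ, hκi i hei]
      exact fun h => hj (hlam h).symm
    have hsa : star (e i) = e i := by
      have h1 : star (e i) = star (e i) * e i := by
        conv_lhs => rw [← mul_one (star (e i)), ← he_sum, Finset.mul_sum]
        exact Finset.sum_eq_single_of_mem i (Finset.mem_univ i) fun j _ hj => hstar j hj
      have h2 := congrArg star h1
      rw [star_mul, star_star, ← h1] at h2
      exact h2.symm
    have hse : r * r * e i = e i := by
      rw [hr_sq, hs, Finset.sum_mul, Finset.sum_eq_single_of_mem i (Finset.mem_univ i)]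
      · rw [hsa, he_idem, he_idem]
      · intro j _ hj
        rw [mul_assoc, he_orth j i hj, mul_zero]
    have hre : r * e i = e i := mul_eq_of_sq_mul_eq r (e i) hr_pos hse
    have hr'e : r' * e i = e i := by
      conv_lhs => rw [← hre]
      rw [← mul_assoc, hr'r, one_mul]
    rw [hp, hre, ← mul_assoc, hr'e]
  have hcomm : ∀ i (l : ℂ), Commute (b - l • 1) (e i) := fun i l =>
    Commute.sub_left (he_comm i) ((Commute.one_left (e i)).smul_left l)
  -- The nilpotent part of `r b r'` in each corner lifts to a nilpotent in the corner of `Q i`.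
  have hN : ∀ i, ∃ N : A, Q i * N = N ∧ N * Q i = N ∧ q N = r * ((b - μ i • 1) * e i) * r' ∧
      N ^ k (κ i) = 0 ∧ (r * ((b - μ i • 1) * e i) * r' = 0 → N = 0) := fun i => by
    refine exists_corner_nilpotent_lift q hq hSAW' (k (κ i)) (hk0 i) _ (Q i) (hQ_proj i).1
      (hQ_proj i).2 ?_ ?_ ?_
    · have hpow : ∀ (y : B) (m : ℕ), (r * y * r') ^ m = r * y ^ m * r' := fun y m => by
        induction m with
        | zero => simp [hrr']
        | succ m ih =>
          rw [pow_succ, ih, pow_succ]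
          calc r * y ^ m * r' * (r * y * r') = r * y ^ m * (r' * r) * y * r' := by
                simp only [mul_assoc]
            _ = _ := by rw [hr'r, mul_one]; simp only [mul_assoc]
      have hei : IsIdempotentElem (e i) := he_idem i
      rw [hpow, (hcomm i (μ i)).mul_pow, hei.pow_eq (hk0 i), hann]
      simp
    · rw [hQ_lift, hp]
      calc r * e i * r' * (r * ((b - μ i • 1) * e i) * r')
          = r * e i * (r' * r) * ((b - μ i • 1) * e i) * r' := by simp only [mul_assoc]
        _ = r * (e i * ((b - μ i • 1) * e i)) * r' := by rw [hr'r, mul_one]; simp only [mul_assoc]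
        _ = _ := by rw [(hcomm i (μ i)).eq, ← mul_assoc (e i), he_idem]
    · rw [hQ_lift, hp]
      calc r * ((b - μ i • 1) * e i) * r' * (r * e i * r')
          = r * ((b - μ i • 1) * e i) * (r' * r) * e i * r' := by simp only [mul_assoc]
        _ = r * ((b - μ i • 1) * (e i * e i)) * r' := by
            rw [hr'r, mul_one]; simp only [mul_assoc]
        _ = _ := by rw [he_idem]
  choose N hQN hNQ hqN hNk hN0 using hN
  have hN1 : ∀ i, ‖μ i‖ = 1 → N i = 0 := fun i hi => hN0 i (by rw [huni i hi]; simp)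
  have hQQ : ∀ i, Q i * Q i = Q i := fun i => (hQ_proj i).2
  have hQorth := proj_mul_eq_zero Q hQ_proj hQ_sum
  classical
  -- Blocks with unimodular root form the unitary part `U'`. The others form `C'`, whose spectrum lies in
  -- the open disc; there `ν` replaces unimodular roots by `0`.
  set E' : Fin n → A := fun i => if ‖μ i‖ = 1 then Q i else 0 with hE'
  set U' : Fin n → A := fun i => if ‖μ i‖ = 1 then μ i • Q i else 0 with hU'
  set ν : Fin n → ℂ := fun i => if ‖μ i‖ = 1 then 0 else μ i with hν
  set C' : Fin n → A := fun i => ν i • Q i + N i with hC'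
  have hE'l : ∀ i, Q i * E' i = E' i := fun i => by simp only [hE']; split_ifs <;> simp [hQQ]
  have hE'r : ∀ i, E' i * Q i = E' i := fun i => by simp only [hE']; split_ifs <;> simp [hQQ]
  have hU'l : ∀ i, Q i * U' i = U' i := fun i => by simp only [hU']; split_ifs <;> simp [hQQ]
  have hU'r : ∀ i, star (U' i) * Q i = star (U' i) := fun i => by
    simp only [hU']; split_ifs <;> simp [hQQ, (hQ_proj i).1.star_eq]
  have hC'l : ∀ i, Q i * C' i = C' i := fun i => by simp [hC', mul_add, hQQ, hQN]
  have hC'r : ∀ i, C' i * Q i = C' i := fun i => by simp [hC', add_mul, hQQ, hNQ]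
  have hE'sa : ∀ i, star (E' i) = E' i := fun i => by
    simp only [hE']; split_ifs <;> simp [(hQ_proj i).1.star_eq]
  have hqE' : ∀ i, r' * q (E' i) = q (E' i) := fun i => by
    simp only [hE']
    split_ifs with h
    · rw [hQ_lift, hr'p i h]
    · simp
  have hEU : ∀ i, E' i * U' i = U' i := fun i => by
    simp only [hE', hU']; split_ifs <;> simp [hQQ]
  have hUU : ∀ i, star (U' i) * U' i = E' i := fun i => by
    simp only [hE', hU']
    split_ifs with h
    · have := Complex.conj_mul' (μ i)
      rw [h] at this
      rw [star_smul, smul_mul_smul_comm, (hQ_proj i).1.star_eq, hQQ]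
      simp at this
      simp [this]
    · simp
  have hEC : ∀ i, E' i * C' i = 0 := fun i => by
    simp only [hE', hC', hν]
    split_ifs with h
    · simp [hN1 i h]
    · simp
  have hCE : ∀ i, C' i * E' i = 0 := fun i => by
    simp only [hE', hC', hν]
    split_ifs with h
    · simp [hN1 i h]
    · simp
  have hUC : ∑ i, U' i + ∑ i, C' i = ∑ i, (μ i • Q i + N i) := by
    rw [← Finset.sum_add_distrib]
    refine Finset.sum_congr rfl fun i _ => ?_
    simp only [hU', hC', hν]
    split_ifs <;> simp
  have hNQk : ∀ i, N i ^ k (κ i) * Q i = 0 := fun i => by rw [hNk, zero_mul]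
  have hsum : Summable fun m : ℕ => ‖(∑ i, C' i) ^ m‖ := by
    refine summable_norm_pow_of_spectrum _ (norm_lt_one_of_mem_spectrum_of_blocks Q hQ_sum _ ν
      (fun i => k (κ i)) (fun i => ?_) fun i => ?_)
    · simp only [hν]
      split_ifs with h
      · simp
      · exact lt_of_le_of_ne (hμ1 i) h
    · exact (blockSum_sub_pow_mul Q hQQ hQorth ν N hQN hNQ i _).trans (hNQk i)
  obtain ⟨X, T, T', hTT', hT'T, hX, hqX, hXn⟩ := exists_contractive_conjugate q hq b r r' hb1
    hr_pos.isSelfAdjoint hr'_pos hrr' hr'r (∑ i, E' i) (∑ i, U' i) (∑ i, C' i)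
    (by rw [isSelfAdjoint_iff, star_sum]; exact Finset.sum_congr rfl fun i _ => hE'sa i)
    (by
      rw [blockSum_mul_blockSum Q hQorth _ _ hE'r hE'l]
      refine Finset.sum_congr rfl fun i _ => ?_
      simp only [hE']; split_ifs <;> simp [hQQ])
    (by
      rw [blockSum_mul_blockSum Q hQorth _ _ hE'r hU'l]
      exact Finset.sum_congr rfl fun i _ => hEU i)
    (by
      rw [star_sum, blockSum_mul_blockSum Q hQorth _ _ hU'r hU'l]
      exact Finset.sum_congr rfl fun i _ => hUU i)
    (by
      rw [blockSum_mul_blockSum Q hQorth _ _ hE'r hC'l]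
      exact Finset.sum_eq_zero fun i _ => hEC i)
    (by
      rw [blockSum_mul_blockSum Q hQorth _ _ hC'r hE'l]
      exact Finset.sum_eq_zero fun i _ => hCE i)
    hsum
    (by
      rw [hUC, map_sum]
      calc ∑ i, q (μ i • Q i + N i) = ∑ i, r * b * e i * r' := by
            refine Finset.sum_congr rfl fun i _ => ?_
            rw [map_add, map_smul, hQ_lift, hqN, hp, sub_mul, smul_one_mul, mul_sub, sub_mul,
              mul_smul_comm, smul_mul_assoc, add_sub_cancel, ← mul_assoc]
        _ = r * b * r' := by
            rw [← Finset.sum_mul, ← Finset.mul_sum, he_sum, mul_one])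
    (by
      rw [map_sum, Finset.mul_sum]
      exact Finset.sum_congr rfl fun i _ => hqE' i)
  rw [hUC] at hX
  refine ⟨X, hqX, ?_, le_antisymm hXn ?_⟩
  · rw [prod_ofFn_eq_aeval]
    refine aeval_eq_zero_of_blocks (fun i => T * Q i * T') ?_ X _ fun i =>
      ⟨μ i, k (κ i), ?_, ?_⟩
    · rw [← Finset.sum_mul, ← Finset.mul_sum, hQ_sum, mul_one, hTT']
    · rw [hμ]
      exact Finset.dvd_prod_of_mem (fun i => (Polynomial.X - Polynomial.C (lam i)) ^ k i)
        (Finset.mem_univ (κ i))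
    · have hsemi : SemiconjBy T ((∑ i, (μ i • Q i + N i)) - μ i • 1) (X - μ i • 1) := by
        rw [SemiconjBy, hX, sub_mul, mul_sub, mul_assoc _ T' T, hT'T, mul_one, smul_one_mul,
          mul_smul_one]
      have h1 := (hsemi.pow_right (k (κ i))).eq
      rw [← mul_assoc, ← mul_assoc, ← h1, mul_assoc T,
        blockSum_sub_pow_mul Q hQQ hQorth μ N hQN hNQ, hNQk]
      simp
  · rw [← hbnorm, ← hqX]
    exact NonUnitalStarAlgHom.norm_apply_le q X
end

section
/- Let p(t) = (t−λ₁)^{k₁}⋯(t−λₙ)^{kₙ} be a complex polynomial with distinct roots λ₁,…,λₙ and all multiplicities kᵢ ≥ 2. Then the universal C*-algebra of the relation 'p(x) = 0, ‖x‖ ≤ 1' is residually finite-dimensional, in the following concrete sense: for every complex Hilbert space H, every bounded operator T on H with p(T) = 0 and ‖T‖ ≤ 1, every element f of the free (noncommutative) ℂ-algebra on two generators, and every ε > 0, there exist m ∈ ℕ and a complex m×m matrix M with p(M) = 0 and ‖M‖ ≤ 1 (operator norm) such that ‖f(M, M*)‖ ≥ ‖f(T, T*)‖ − ε, where f(a,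 a*) denotes the evaluation of f sending the first generator to a and the second to a*. -/
/-!
Write `p(T) = 0` as `(T - a₁) ⋯ (T - a_N) = 0`, the roots repeated according to multiplicity. The
kernels `F_i = ker ((T - a_{i+1}) ⋯ (T - a_N))` form a descending chain of closed subspaces from `H`
to `0`, and `T - a_{i+1}` maps `F_i` into `F_{i+1}`: with respect to the flag, `T` is block
triangular with scalar diagonal blocks. If `V` is a finite-dimensional subspace invariant under the
orthogonal projections onto all the `F_i`, then the compression `M` of `T` to `V` is block
triangular for the flag `F_i ∩ V` with the same scalars on the diagonal, so `p(M) = 0`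
(`prod_compress_eq_zero`); clearly `‖M‖ ≤ ‖T‖`.

Since the projections onto the `F_i` are totally ordered, every finite-dimensional subspace is
contained in such a `V` (`exists_invariant_finiteDimensional`). Choose a unit-ball vector `v` that
almost attains the norm of `f(T, T*)`. Once `V` contains `v` and the finitely many vectors met while
evaluating `f(T, T*) v`, one has `f(M, M*) v = f(T, T*) v` (`exists_finiteDimensional_lift_eq`),
which gives the norm estimate.
-/

open ContinuousLinearMap

section Compression

variable {H E : Type*} [NormedAddCommGroup H] [InnerProductSpace ℂ H] [CompleteSpace H]
  [NormedAddCommGroup E] [InnerProductSpace ℂ E] [CompleteSpace E]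

/-- The compression `J* T J` of `T` along `J : E → H`; for isometric `J` this is the usual
compression of `T` to the range of `J`, transported to `E`. -/
noncomputable def compress (J : E →L[ℂ] H) (T : H →L[ℂ] H) : E →L[ℂ] E :=
  adjoint J ∘L T ∘L J

lemma star_compress (J : E →L[ℂ] H) (T : H →L[ℂ] H) :
    star (compress J T) = compress J (star T) := by
  simp [compress, star_eq_adjoint, adjoint_comp, ContinuousLinearMap.comp_assoc]

lemma norm_compress_le (J : E →L[ℂ] H) (hJ : ‖J‖ ≤ 1) (T : H →L[ℂ] H) :
    ‖compress J T‖ ≤ ‖T‖ := by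
  have hJ' : ‖adjoint J‖ ≤ 1 := by rwa [LinearIsometryEquiv.norm_map]
  calc ‖compress J T‖ ≤ ‖adjoint J‖ * ‖T ∘L J‖ := opNorm_comp_le _ _
    _ ≤ ‖adjoint J‖ * (‖T‖ * ‖J‖) := by gcongr; exact opNorm_comp_le _ _
    _ ≤ 1 * (‖T‖ * 1) := by gcongr
    _ = ‖T‖ := by ring

lemma apply_compress_of_mem {J : E →L[ℂ] H} (hJ : adjoint J ∘L J = 1) (T : H →L[ℂ] H) (x : E)
    (hx : T (J x) ∈ J.range) : J (compress J T x) = T (J x) := by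
  obtain ⟨y, hy⟩ := hx
  have hy' : J y = T (J x) := hy
  have h := DFunLike.congr_fun hJ y
  simp only [comp_apply, one_apply_eq_self] at h
  simp [compress, ← hy', h]

/-- Evaluating a noncommutative polynomial of `T` and `T*` at a vector `v` involves only finitely
many vectors; compressions to subspaces containing them give the same value. -/
lemma exists_finiteDimensional_lift_eq (T : H →L[ℂ] H) (f : FreeAlgebra ℂ (Fin 2)) (v : H) :
    ∃ V : Submodule ℂ H, FiniteDimensional ℂ V ∧
      ∀ (m : ℕ) (J : EuclideanSpace ℂ (Fin m) →L[ℂ] H),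
        adjoint J ∘L J = 1 → V ≤ J.range → ∀ x, J x = v →
        J (FreeAlgebra.lift ℂ ![compress J T, star (compress J T)] f x) =
          FreeAlgebra.lift ℂ ![T, star T] f v := by
  induction f using FreeAlgebra.induction generalizing v with
  | grade0 r =>
    refine ⟨⊥, inferInstance, fun m J _ _ x hx => ?_⟩
    simp [Algebra.algebraMap_eq_smul_one, hx]
  | grade1 i =>
    refine ⟨Submodule.span ℂ {T v, star T v},
      FiniteDimensional.span_of_finite ℂ (by simp), fun m J hJ hV x hx => ?_⟩
    subst hx
    rw [star_compress]
    fin_cases i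
    · simpa using apply_compress_of_mem hJ T x (hV (Submodule.subset_span (by simp)))
    · simpa using apply_compress_of_mem hJ (star T) x (hV (Submodule.subset_span (by simp)))
  | mul f g hf hg =>
    obtain ⟨V, hVfin, hV⟩ := hg v
    obtain ⟨W, hWfin, hW⟩ := hf (FreeAlgebra.lift ℂ ![T, star T] g v)
    refine ⟨V ⊔ W, inferInstance, fun m J hJ hVW x hx => ?_⟩
    simp only [map_mul]
    exact hW m J hJ (le_sup_right.trans hVW) _ (hV m J hJ (le_sup_left.trans hVW) x hx)
  | add f g hf hg =>
    obtain ⟨V, hVfin, hV⟩ := hf v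
    obtain ⟨W, hWfin, hW⟩ := hg v
    refine ⟨V ⊔ W, inferInstance, fun m J hJ hVW x hx => ?_⟩
    simp only [map_add, add_apply]
    rw [hV m J hJ (le_sup_left.trans hVW) x hx, hW m J hJ (le_sup_right.trans hVW) x hx]

/-- If the range of `J` is invariant under the orthogonal projection onto `F`, then the projection
`J J*` onto that range preserves `F`. -/
lemma apply_adjoint_mem {J : E →L[ℂ] H} (hJ : adjoint J ∘L J = 1) (F : Submodule ℂ H)
    [F.HasOrthogonalProjection] (hF : ∀ w ∈ J.range, F.starProjection w ∈ J.range)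
    {v : H} (hv : v ∈ F) : J (adjoint J v) ∈ F := by
  have key : ∀ w ∈ J.range, inner ℂ (J (adjoint J v)) w = inner ℂ v w := by
    rintro _ ⟨y, rfl⟩
    have h := DFunLike.congr_fun hJ y
    simp only [comp_apply, one_apply_eq_self] at h
    change inner ℂ (J (adjoint J v)) (J y) = inner ℂ v (J y)
    rw [← adjoint_inner_right, h, adjoint_inner_left]
  have hmem : J (adjoint J v) ∈ J.range := ⟨_, rfl⟩
  set u := J (adjoint J v)
  have horth : ∀ w ∈ J.range, inner ℂ (u - F.starProjection u) w = 0 := fun w hw => by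
    rw [inner_sub_left, Submodule.inner_starProjection_left_eq_right, key w hw, key _ (hF w hw),
      ← Submodule.inner_starProjection_left_eq_right,
      Submodule.starProjection_eq_self_iff.mpr hv, sub_self]
  have h0 : u - F.starProjection u = 0 :=
    inner_self_eq_zero.mp (horth _ (Submodule.sub_mem _ hmem (hF _ hmem)))
  exact Submodule.starProjection_eq_self_iff.mp (sub_eq_zero.mp h0).symm

/-- The product `(T - a₁) ⋯ (T - a_N)` for a list of scalars. -/
noncomputable def rootProd {A : Type*} [Ring A] [Algebra ℂ A] (T : A) (L : List ℂ) : A :=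
  (L.map fun a => T - a • 1).prod

lemma rootProd_cons {A : Type*} [Ring A] [Algebra ℂ A] (T : A) (a : ℂ) (L : List ℂ) :
    rootProd T (a :: L) = (T - a • 1) * rootProd T L := by
  simp [rootProd]

lemma rootProd_cons' {A : Type*} [Ring A] [Algebra ℂ A] (T : A) (a : ℂ) (L : List ℂ) :
    rootProd T (a :: L) = rootProd T L * (T - a • 1) := by
  rw [rootProd_cons]
  refine Commute.list_prod_right _ _ fun y hy => ?_
  obtain ⟨b, -, rfl⟩ := List.mem_map.mp hy
  have hs (c : ℂ) (S : A) : Commute (c • (1 : A)) S := (Commute.one_left S).smul_left c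
  exact ((Commute.refl T).sub_left (hs a T)).sub_right (hs b _).symm

/-- If the range of `J` is invariant under the projections onto the kernels of all tails of the
product `(T - a₁) ⋯ (T - a_N)`, the compression of `T` is annihilated by that product wherever `T`
is. -/
lemma prod_compress_eq_zero {J : E →L[ℂ] H} (hJ : adjoint J ∘L J = 1) (T : H →L[ℂ] H)
    (L : List ℂ)
    (hinv : ∀ i, ∀ w ∈ J.range, (rootProd T (L.drop i)).ker.starProjection w ∈ J.range)
    (x : E) (hx : rootProd T L (J x) = 0) : rootProd (compress J T) L x = 0 := by
  induction L generalizing x with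
  | nil =>
    have h := DFunLike.congr_fun hJ x
    simp only [rootProd, List.map_nil, List.prod_nil, one_apply_eq_self, comp_apply] at hx h ⊢
    rw [← h, hx, map_zero]
  | cons a L ih =>
    rw [rootProd_cons']
    refine ih (fun i => by simpa using hinv (i + 1)) _ ?_
    have h := DFunLike.congr_fun hJ x
    simp only [one_apply_eq_self, comp_apply] at h
    have hcomp : (compress J T - a • 1) x = adjoint J ((T - a • 1) (J x)) := by
      simp [compress, h]
    change rootProd T L (J ((compress J T - a • 1) x)) = 0
    rw [hcomp]
    have hmem : (T - a • 1) (J x) ∈ (rootProd T L).ker := by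
      rw [rootProd_cons'] at hx
      exact hx
    exact apply_adjoint_mem hJ _ (by simpa using hinv 1) hmem

end Compression

/-- For a finite chain of closed subspaces, every finite-dimensional subspace is contained in a
finite-dimensional one invariant under all the orthogonal projections onto the chain. -/
lemma exists_invariant_finiteDimensional {H : Type*} [NormedAddCommGroup H]
    [InnerProductSpace ℂ H] (N : ℕ) (F : ℕ → Submodule ℂ H)
    [∀ i, (F i).HasOrthogonalProjection] (hF : Antitone F)
    (V : Submodule ℂ H) [FiniteDimensional ℂ V] :
    ∃ W : Submodule ℂ H, FiniteDimensional ℂ W ∧ V ≤ W ∧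
      ∀ i < N, ∀ w ∈ W, (F i).starProjection w ∈ W := by
  let G : Fin N → Submodule ℂ H := fun j => V.map (F j).starProjection.toLinearMap
  refine ⟨V ⊔ ⨆ j, G j, inferInstance, le_sup_left, fun i hi w hw => ?_⟩
  have hG (j : ℕ) (hj : j < N) (v : H) (hv : v ∈ V) :
      (F j).starProjection v ∈ V ⊔ ⨆ j, G j :=
    (le_iSup G ⟨j, hj⟩).trans le_sup_right ⟨v, hv, rfl⟩
  suffices h : V ⊔ ⨆ j, G j ≤ (V ⊔ ⨆ j, G j).comap (F i).starProjection.toLinearMap from h hw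
  refine sup_le (fun v hv => hG i hi v hv) (iSup_le ?_)
  rintro j _ ⟨v, hv, rfl⟩
  change (F i).starProjection ((F j).starProjection v) ∈ V ⊔ ⨆ j, G j
  -- The product of two projections of the chain is the one onto the smaller subspace.
  rcases le_total i j with hij | hij
  · rw [Submodule.starProjection_eq_self_iff.mpr
      (hF hij (Submodule.starProjection_apply_mem _ v))]
    exact hG j j.2 v hv
  · have h := DFunLike.congr_fun (Submodule.starProjection_comp_starProjection_of_le (hF hij)) v
    rw [ContinuousLinearMap.comp_apply] at h
    rw [h]
    exact hG i hi v hv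

lemma list_ofFn_prod_eq_rootProd {A : Type*} [Ring A] [Algebra ℂ A] (S : A) (n : ℕ)
    (lam : Fin n → ℂ) (k : Fin n → ℕ) :
    (List.ofFn fun i => (S - lam i • 1) ^ k i).prod =
      rootProd S (List.ofFn fun i => List.replicate (k i) (lam i)).flatten := by
  simp [rootProd, List.map_flatten, List.prod_flatten, List.map_ofFn, Function.comp_def]

lemma antitone_ker_rootProd_drop {H : Type*} [NormedAddCommGroup H] [InnerProductSpace ℂ H]
    (T : H →L[ℂ] H) (L : List ℂ) :
    Antitone fun i => (rootProd T (L.drop i)).ker := by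
  refine antitone_nat_of_succ_le fun i x hx => ?_
  rcases lt_or_ge i L.length with hi | hi
  · have hx' : rootProd T (L.drop (i + 1)) x = 0 := hx
    change rootProd T (L.drop i) x = 0
    rw [List.drop_eq_getElem_cons hi, rootProd_cons]
    change (T - L[i] • 1) (rootProd T (L.drop (i + 1)) x) = 0
    rw [hx', map_zero]
  · rwa [List.drop_eq_nil_of_le (by omega : L.length ≤ i + 1),
      ← List.drop_eq_nil_of_le hi] at hx

/-- Let `p(t) = (t−λ₁)^{k₁}⋯(t−λₙ)^{kₙ}` with distinct roots and all
`kᵢ ≥ 2`. The universal C*-algebra of `p(x) = 0, ‖x‖ ≤ 1` is residually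
finite-dimensional: for every Hilbert space operator `T` with `p(T) = 0`, `‖T‖ ≤ 1`,
every element `f` of the free `ℂ`-algebra on two generators and every `ε > 0`, there is a
matrix `M` (an operator on a finite-dimensional Hilbert space `ℂ^m`) with `p(M) = 0`,
`‖M‖ ≤ 1` and `‖f(M, M*)‖ ≥ ‖f(T, T*)‖ − ε`. -/
theorem stmt_7 {H : Type*} [NormedAddCommGroup H] [InnerProductSpace ℂ H] [CompleteSpace H]
    (n : ℕ) (lam : Fin n → ℂ) (hlam : Function.Injective lam)
    (k : Fin n → ℕ) (hk : ∀ i, 2 ≤ k i)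
    (T : H →L[ℂ] H)
    (hT0 : (List.ofFn fun i => (T - lam i • 1) ^ k i).prod = 0) (hT1 : ‖T‖ ≤ 1)
    (f : FreeAlgebra ℂ (Fin 2)) (ε : ℝ) (hε : 0 < ε) :
    ∃ (m : ℕ) (M : EuclideanSpace ℂ (Fin m) →L[ℂ] EuclideanSpace ℂ (Fin m)),
      (List.ofFn fun i => (M - lam i • 1) ^ k i).prod = 0 ∧ ‖M‖ ≤ 1 ∧
      ‖FreeAlgebra.lift ℂ ![T, star T] f‖ - ε ≤ ‖FreeAlgebra.lift ℂ ![M, star M] f‖ := by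
  set L := (List.ofFn fun i => List.replicate (k i) (lam i)).flatten with hL
  rw [list_ofFn_prod_eq_rootProd, ← hL] at hT0
  obtain ⟨v, hv1, hv⟩ := ContinuousLinearMap.exists_lt_apply_of_lt_opNorm
    (FreeAlgebra.lift ℂ ![T, star T] f) (sub_lt_self _ hε)
  obtain ⟨V, hVfin, hV⟩ := exists_finiteDimensional_lift_eq T f v
  obtain ⟨W, hWfin, hVW, hW⟩ := exists_invariant_finiteDimensional (L.length + 1)
    (fun i => (rootProd T (L.drop i)).ker) (antitone_ker_rootProd_drop T L) (V ⊔ ℂ ∙ v)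
  -- `J` identifies `ℂ^m` isometrically with `W`.
  let ι : EuclideanSpace ℂ (Fin (Module.finrank ℂ W)) →ₗᵢ[ℂ] H :=
    W.subtypeₗᵢ.comp (stdOrthonormalBasis ℂ W).repr.symm.toLinearIsometry
  let J : EuclideanSpace ℂ (Fin (Module.finrank ℂ W)) →L[ℂ] H := ι.toContinuousLinearMap
  have hJ : adjoint J ∘L J = 1 := (norm_map_iff_adjoint_comp_self J).mp ι.norm_map
  have hJnorm : ‖J‖ ≤ 1 := ι.norm_toContinuousLinearMap_le
  have hrange : J.range = W := by
    ext w
    constructor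
    · rintro ⟨y, rfl⟩
      exact ((stdOrthonormalBasis ℂ W).repr.symm y).2
    · intro hw
      exact ⟨(stdOrthonormalBasis ℂ W).repr ⟨w, hw⟩, by simp [J, ι]⟩
  refine ⟨_, compress J T, ?_, (norm_compress_le J hJnorm T).trans hT1, ?_⟩
  · rw [list_ofFn_prod_eq_rootProd, ← hL]
    ext1 x
    refine prod_compress_eq_zero hJ T L (fun i => ?_) x (by rw [hT0]; rfl)
    rw [hrange]
    rcases le_total i L.length with hi | hi
    · exact hW i (by omega)
    · have h := hW L.length (by omega)
      simp only [List.drop_length] at h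
      rwa [List.drop_eq_nil_of_le hi]
  · obtain ⟨x, hx⟩ : v ∈ J.range :=
      hrange.ge (hVW (Submodule.mem_sup_right (Submodule.mem_span_singleton_self v)))
    have hx' : ι x = v := hx
    have hfx := hV _ J hJ ((le_sup_left.trans hVW).trans hrange.ge) x hx
    have hx1 : ‖x‖ ≤ 1 := by rw [← ι.norm_map, hx']; exact hv1.le
    calc _ ≤ ‖FreeAlgebra.lift ℂ ![T, star T] f v‖ := hv.le
      _ = ‖ι (FreeAlgebra.lift ℂ ![compress J T, star (compress J T)] f x)‖ := by
        rw [← hfx]; rfl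
      _ = ‖FreeAlgebra.lift ℂ ![compress J T, star (compress J T)] f x‖ := ι.norm_map _
      _ ≤ _ := unit_le_opNorm _ x hx1
end

section
/- Let H be an infinite-dimensional separable complex Hilbert space, T a bounded linear operator on H, and p(t) = (t−λ₁)^{k₁}⋯(t−λₙ)^{kₙ} a complex polynomial with distinct roots λ₁,…,λₙ and all multiplicities kᵢ ≥ 2. If p(T) is a compact operator, then there exists a compact operator K on H such that p(T+K) = 0 and ‖T+K‖ = ‖T‖_e, where ‖T‖_e denotes the essential norm of T, i.e. the norm of the image of T in the Calkin algebra B(H)/K(H). -/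
/-!
Write `c` for the essential norm of `T`. After a compact perturbation `‖T‖ ≤ c`
(`exists_norm_le_infDist`), so it is enough to perturb further, keeping the norm at most `c`, until
it is annihilated by `p`; the reverse inequality `c ≤ ‖T + K‖` is the definition of `c`.

The proof is an induction on the list of roots of `p`, counted with multiplicity
(`main_induction`). Write `p(T) = (T - l) q(T)`. If `c < ‖l‖`, then `T - l` is invertible and `q(T)`
is already compact. If `‖l‖ ≤ c`, there is a closed subspace `V` with `(T - l) P_V` and
`(1 - P_V) q(T)` both compact (`exists_subspace`). Modulo compacts, `T` is therefore the block matrix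
`[[l, X], [0, Y]]` with respect to `V ⊕ Vᗮ`, and the compression `Y` to `Vᗮ` satisfies `‖Y‖ ≤ c`
with `q(Y)` compact (`compression_prod`). By induction `Y` is a compact perturbation of some `S` with
`‖S‖ ≤ c` and `q(S) = 0`. For any corner `X'`, the operator `[[l, X'], [0, S]]` is annihilated by
`(t - l) q(t)`, so what remains is to choose `X'` with `X - X'` compact and the block matrix of
norm at most `c` (`exists_corner`, `exists_glue`).

The norm condition follows from `c² / (c² - ‖l‖²) X'* X' ≤ c² - S* S`. Since `‖T‖ ≤ c`, the given
corner `X` satisfies it up to a compact self-adjoint error. Such an error can be removed: if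
`X* X ≤ L` with `L - M` compact and `L, M ≥ 0`, then Douglas factorization gives `X = Z √L` with `Z`
a contraction, and `X' = Z √M` works because `√L - √M` is compact (`exists_lift`). The same lemma
yields the initial reduction to `‖T‖ ≤ c`. In the boundary case `‖l‖ = c` the corner is itself
compact, and `X' = 0`.
-/

open ContinuousLinearMap Filter Topology

set_option linter.unusedSectionVars false

namespace PolyCompact

/-! ### Compact operators -/

variable {E F G H : Type*}
  [NormedAddCommGroup E] [InnerProductSpace ℂ E] [CompleteSpace E]
  [NormedAddCommGroup F] [InnerProductSpace ℂ F] [CompleteSpace F]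
  [NormedAddCommGroup G] [InnerProductSpace ℂ G] [CompleteSpace G]
  [NormedAddCommGroup H] [InnerProductSpace ℂ H] [CompleteSpace H]

/-- Compactness of a bounded operator between Hilbert spaces. It is `IsCompactOperator` for bundled
maps, so that sums and compositions are those of `E →L[ℂ] F` and not of functions. -/
def Cpt (A : E →L[ℂ] F) : Prop := IsCompactOperator A

theorem Cpt.zero : Cpt (0 : E →L[ℂ] F) := isCompactOperator_zero

theorem Cpt.add {A B : E →L[ℂ] F} (hA : Cpt A) (hB : Cpt B) : Cpt (A + B) :=
  IsCompactOperator.add hA hB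

theorem Cpt.sub {A B : E →L[ℂ] F} (hA : Cpt A) (hB : Cpt B) : Cpt (A - B) :=
  IsCompactOperator.sub hA hB

theorem Cpt.neg {A : E →L[ℂ] F} (hA : Cpt A) : Cpt (-A) :=
  IsCompactOperator.neg hA

theorem Cpt.smul {A : E →L[ℂ] F} (c : ℂ) (hA : Cpt A) : Cpt (c • A) :=
  IsCompactOperator.smul hA c

theorem Cpt.comp_right {A : F →L[ℂ] G} (hA : Cpt A) (B : E →L[ℂ] F) : Cpt (A ∘L B) :=
  IsCompactOperator.comp_clm hA B

theorem Cpt.comp_left {A : E →L[ℂ] F} (hA : Cpt A) (B : F →L[ℂ] G) : Cpt (B ∘L A) :=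
  IsCompactOperator.clm_comp hA B

theorem Cpt.mul_right {A : E →L[ℂ] E} (hA : Cpt A) (B : E →L[ℂ] E) : Cpt (A * B) :=
  hA.comp_right B

theorem Cpt.mul_left {A : E →L[ℂ] E} (hA : Cpt A) (B : E →L[ℂ] E) : Cpt (B * A) :=
  hA.comp_left B

theorem Cpt.of_approx {A : E →L[ℂ] F} (h : ∀ ε > 0, ∃ K : E →L[ℂ] F, Cpt K ∧ ‖A - K‖ ≤ ε) :
    Cpt A := by
  have hc : IsClosed {S : E →L[ℂ] F | IsCompactOperator S} :=
    isClosed_setOfPred_isCompactOperator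
  have : A ∈ closure {S : E →L[ℂ] F | IsCompactOperator S} := by
    rw [Metric.mem_closure_iff]
    intro ε hε
    obtain ⟨K, hK, hn⟩ := h (ε / 2) (by positivity)
    exact ⟨K, hK, by rw [dist_eq_norm]; linarith⟩
  rw [hc.closure_eq] at this
  exact this

/-- Square-root domination by a compact operator: finite nets for the image of the unit ball under
`C` pull back to finite nets for its image under `B`. -/
theorem Cpt.of_dominated {B : E →L[ℂ] F} {C : E →L[ℂ] G} (hC : Cpt C)
    (h : ∀ x, ‖B x‖ ^ 2 ≤ ‖C x‖ * ‖x‖) : Cpt B := by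
  have hCt : TotallyBounded (C '' Metric.ball 0 1) :=
    (IsCompactOperator.isCompact_closure_image_ball (f := C.toLinearMap) hC 1).totallyBounded.subset
      subset_closure
  refine (isCompactOperator_iff_isCompact_closure_image_ball B.toLinearMap one_pos).2 ?_
  refine TotallyBounded.isCompact_of_isClosed (TotallyBounded.closure ?_) isClosed_closure
  rw [Metric.totallyBounded_iff]
  intro ε hε
  obtain ⟨t, hts, htf, hcov⟩ :=
    Metric.finite_approx_of_totallyBounded hCt (ε ^ 2 / 2) (by positivity)
  obtain ⟨s, hs, hsf, rfl⟩ := Set.exists_subset_image_finite_and.1 ⟨t, hts, htf, rfl⟩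
  refine ⟨B '' s, hsf.image _, ?_⟩
  rintro _ ⟨x, hx, rfl⟩
  have hCx := hcov ⟨x, hx, rfl⟩
  simp only [Set.mem_iUnion, Metric.mem_ball] at hCx ⊢
  obtain ⟨_, ⟨y, hy, rfl⟩, hxy⟩ := hCx
  refine ⟨B y, ⟨y, hy, rfl⟩, ?_⟩
  have hx' := mem_ball_zero_iff.1 hx
  have hy' := mem_ball_zero_iff.1 (hs hy)
  have h1 := h (x - y)
  have h2 : ‖x - y‖ ≤ 2 := (norm_sub_le _ _).trans (by linarith)
  rw [dist_eq_norm, ← map_sub] at hxy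
  change dist (B x) (B y) < ε
  rw [dist_eq_norm, ← map_sub]
  refine lt_of_pow_lt_pow_left₀ 2 hε.le ?_
  nlinarith [norm_nonneg (C (x - y)), norm_nonneg (x - y)]

/-- Schauder's theorem for Hilbert spaces, from `‖A* x‖² = re ⟪A A* x, x⟫ ≤ ‖A A* x‖ ‖x‖`. -/
theorem Cpt.adjoint {A : E →L[ℂ] F} (hA : Cpt A) : Cpt (adjoint A) := by
  refine Cpt.of_dominated (hA.comp_right (ContinuousLinearMap.adjoint A)) fun x => ?_
  have h : ‖ContinuousLinearMap.adjoint A x‖ ^ 2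
      = RCLike.re (inner ℂ (A (ContinuousLinearMap.adjoint A x)) x) := by
    rw [← adjoint_inner_right, ← inner_self_eq_norm_sq (𝕜 := ℂ)]
  rw [h]
  exact re_inner_le_norm _ _

theorem Cpt.aeval_sub {A B : H →L[ℂ] H} (h : Cpt (A - B)) (q : Polynomial ℝ) :
    Cpt (Polynomial.aeval A q - Polynomial.aeval B q) := by
  induction q using Polynomial.induction_on' with
  | add p q hp hq =>
    have : Polynomial.aeval A (p + q) - Polynomial.aeval B (p + q)
      = (Polynomial.aeval A p - Polynomial.aeval B p)
        + (Polynomial.aeval A q - Polynomial.aeval B q) := by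
      simp only [map_add]; abel
    rw [this]; exact hp.add hq
  | monomial n a =>
    have hpow : ∀ n : ℕ, Cpt (A ^ n - B ^ n) := by
      intro n
      induction n with
      | zero => simpa using Cpt.zero
      | succ n ih =>
        have : A ^ (n + 1) - B ^ (n + 1) = (A ^ n - B ^ n) * A + B ^ n * (A - B) := by
          rw [pow_succ, pow_succ]; noncomm_ring
        rw [this]
        exact (ih.mul_right _).add (h.mul_left _)
    simp only [Polynomial.aeval_monomial]
    rw [← mul_sub]
    exact (hpow n).mul_left _

/-- The continuous functional calculus respects equality modulo compacts, by Weierstrass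
approximation on an interval containing both spectra. -/
theorem Cpt.cfc_sub {A B : H →L[ℂ] H} (hA : IsSelfAdjoint A) (hB : IsSelfAdjoint B)
    (h : Cpt (A - B)) {f : ℝ → ℝ} (hf : Continuous f) : Cpt (cfc f A - cfc f B) := by
  refine Cpt.of_approx fun ε hε => ?_
  set R := max (‖A‖ * ‖(1 : H →L[ℂ] H)‖) (‖B‖ * ‖(1 : H →L[ℂ] H)‖) with hR
  obtain ⟨q, hq⟩ := exists_polynomial_near_of_continuousOn (-R) R f hf.continuousOn (ε / 2)
    (by positivity)
  have key : ∀ C : H →L[ℂ] H, IsSelfAdjoint C → ‖C‖ * ‖(1 : H →L[ℂ] H)‖ ≤ R →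
      ‖cfc f C - Polynomial.aeval C q‖ ≤ ε / 2 := by
    intro C hC hCR
    rw [← cfc_polynomial q C hC, ← _root_.cfc_sub f q.eval C hf.continuousOn q.continuous.continuousOn]
    refine norm_cfc_le (by positivity) fun x hx => ?_
    have hx' : |x| ≤ R := (spectrum.norm_le_norm_mul_of_mem hx).trans hCR
    rw [← norm_neg, neg_sub]
    exact (hq x (abs_le.1 hx')).le
  refine ⟨_, h.aeval_sub q, ?_⟩
  have := norm_sub_le (cfc f A - Polynomial.aeval A q) (cfc f B - Polynomial.aeval B q)
  have hA' := key A hA (le_max_left _ _)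
  have hB' := key B hB (le_max_right _ _)
  have e : cfc f A - cfc f B - (Polynomial.aeval A q - Polynomial.aeval B q)
    = cfc f A - Polynomial.aeval A q - (cfc f B - Polynomial.aeval B q) := by abel
  rw [e]; linarith

/-! ### Splitting a compact product by a projection -/

theorem sqrt_facts {A : H →L[ℂ] H} (hA : 0 ≤ A) :
    0 ≤ cfc Real.sqrt A ∧ cfc Real.sqrt A * cfc Real.sqrt A = A := by
  have hs : IsSelfAdjoint A := .of_nonneg hA
  refine ⟨cfc_nonneg fun x _ => Real.sqrt_nonneg x, ?_⟩
  rw [← cfc_mul _ _ A Real.continuous_sqrt.continuousOn Real.continuous_sqrt.continuousOn]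
  conv_rhs => rw [← cfc_id' ℝ A]
  exact cfc_congr fun x hx => Real.mul_self_sqrt (spectrum_nonneg_of_nonneg hA hx)

theorem sqrt_mul_self {A : H →L[ℂ] H} (hA : 0 ≤ A) : cfc Real.sqrt (A * A) = A := by
  have h2 : 0 ≤ A * A := (IsSelfAdjoint.of_nonneg hA).mul_self_nonneg
  obtain ⟨h1, h3⟩ := sqrt_facts h2
  rw [← CFC.sqrt_unique h3 h1, CFC.sqrt_mul_self A hA]

/-- If `A B` is compact, some orthogonal projection `P` makes both `A P` and `(1 - P) B` compact.
With `X = A* A`, `Y = B B*` and `d = X - Y`, both `X Y` and `Y X` are compact, so `|d| ≡ X + Y`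
modulo compacts; hence `|d| + d ≡ 2 X` and `|d| - d ≡ 2 Y`, while `(|d| + d) (|d| - d) = 0`. The
projection onto the kernel of `|d| + d` thus kills `X` from the right, and its complement kills `Y`
from the left, modulo compacts. -/
theorem exists_subspace {A B : H →L[ℂ] H} (hAB : Cpt (A * B)) :
    ∃ V : Submodule ℂ H, ∃ _ : V.HasOrthogonalProjection,
      Cpt (A * V.starProjection) ∧ Cpt ((1 - V.starProjection) * B) := by
  set X := star A * A with hX
  set Y := B * star B with hY
  have hX0 : 0 ≤ X := star_mul_self_nonneg A
  have hY0 : 0 ≤ Y := mul_star_self_nonneg B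
  have hXs : IsSelfAdjoint X := .of_nonneg hX0
  have hYs : IsSelfAdjoint Y := .of_nonneg hY0
  have hXY : Cpt (X * Y) := by
    have : X * Y = star A * (A * B) * star B := by rw [hX, hY]; noncomm_ring
    rw [this]; exact (hAB.mul_left _).mul_right _
  have hYX : Cpt (Y * X) := by
    have : Y * X = star (X * Y) := by rw [star_mul, hXs.star_eq, hYs.star_eq]
    rw [this, star_eq_adjoint]; exact hXY.adjoint
  set d := X - Y with hd
  have hds : IsSelfAdjoint d := hXs.sub hYs
  have hdd : 0 ≤ d * d := hds.mul_self_nonneg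
  set a := cfc Real.sqrt (d * d) with ha
  obtain ⟨ha0, haa⟩ := sqrt_facts hdd
  rw [← ha] at ha0 haa
  have hcomm : Commute a d :=
    ((show Commute (d * d) d from (mul_assoc d d d)).cfc_real _)
  -- `|d|` and `X + Y` are the square roots of positive operators whose difference is compact.
  have haXY : Cpt (a - (X + Y)) := by
    rw [← sqrt_mul_self (add_nonneg hX0 hY0), ha]
    refine Cpt.cfc_sub (.of_nonneg hdd) (hXs.add hYs |>.mul_self_nonneg |> .of_nonneg) ?_
      Real.continuous_sqrt
    have : d * d - (X + Y) * (X + Y) = -((2 : ℂ) • (X * Y + Y * X)) := by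
      rw [hd, two_smul]; noncomm_ring
    rw [this]
    exact ((hXY.add hYX).smul _).neg
  set N := a + d with hN
  have hNX : Cpt (N - (2 : ℂ) • X) := by
    have : N - (2 : ℂ) • X = a - (X + Y) := by rw [hN, hd, two_smul]; abel
    rwa [this]
  have hMY : Cpt ((a - d) - (2 : ℂ) • Y) := by
    have : (a - d) - (2 : ℂ) • Y = a - (X + Y) := by rw [hd, two_smul]; abel
    rwa [this]
  have hNM : N * (a - d) = 0 := by
    have : N * (a - d) = a * a - d * d - (a * d - d * a) := by rw [hN]; noncomm_ring
    rw [this, haa, hcomm.eq]; simp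
  have : CompleteSpace (LinearMap.ker N.toLinearMap) := N.isClosed_ker.completeSpace_coe
  refine ⟨LinearMap.ker N.toLinearMap, inferInstance, ?_, ?_⟩
  all_goals set P := (LinearMap.ker N.toLinearMap).starProjection with hP
  · have hNP : N * P = 0 := by
      ext x
      exact LinearMap.mem_ker.1
        (Submodule.starProjection_apply_mem (LinearMap.ker N.toLinearMap) x)
    have hXP : Cpt (X * P) := by
      have : X * P = (-(1/2) : ℂ) • ((N - (2 : ℂ) • X) * P) := by
        rw [sub_mul, hNP, smul_mul_assoc]; module
      rw [this]; exact (hNX.mul_right _).smul _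
    refine hXP.of_dominated fun x => ?_
    have : ‖(A * P) x‖ ^ 2 = RCLike.re (inner ℂ ((X * P) x) (P x)) := by
      rw [← inner_self_eq_norm_sq (𝕜 := ℂ), hX, star_eq_adjoint]
      simp [adjoint_inner_left]
    rw [this]
    refine (re_inner_le_norm _ _).trans ?_
    gcongr
    exact Submodule.norm_starProjection_apply_le _ x
  · have hPM : (1 - P) * (a - d) = 0 := by
      ext x
      have hx : (a - d) x ∈ LinearMap.ker N.toLinearMap := LinearMap.mem_ker.2 congr($hNM x)
      have := Submodule.starProjection_eq_self_iff.2 hx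
      change (a - d) x - P ((a - d) x) = 0
      rw [hP, this, sub_self]
    have hPY : Cpt ((1 - P) * Y) := by
      have : (1 - P) * Y = (-(1/2) : ℂ) • ((1 - P) * ((a - d) - (2 : ℂ) • Y)) := by
        rw [mul_sub (1 - P), hPM, mul_smul_comm]; module
      rw [this]; exact (hMY.mul_left _).smul _
    have hPs : IsSelfAdjoint (1 - P) :=
      (IsSelfAdjoint.one _).sub (isSelfAdjoint_starProjection _)
    have hYP : Cpt (Y * (1 - P)) := by
      have : Y * (1 - P) = star ((1 - P) * Y) := by rw [star_mul, hYs.star_eq, hPs.star_eq]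
      rw [this, star_eq_adjoint]; exact hPY.adjoint
    have hBP : Cpt (star B * (1 - P)) := by
      refine hYP.of_dominated fun x => ?_
      have : ‖(star B * (1 - P)) x‖ ^ 2 = RCLike.re (inner ℂ ((Y * (1 - P)) x) ((1 - P) x)) := by
        rw [← inner_self_eq_norm_sq (𝕜 := ℂ), hY, star_eq_adjoint, mul_apply_eq_comp, mul_assoc,
          mul_apply_eq_comp, mul_apply_eq_comp, ← adjoint_inner_right, adjoint_adjoint,
          inner_re_symm]
      rw [this]
      refine (re_inner_le_norm _ _).trans ?_
      gcongr
      have : (1 - P) x = (LinearMap.ker N.toLinearMap)ᗮ.starProjection x := by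
        rw [Submodule.starProjection_orthogonal]; rfl
      rw [this]
      exact Submodule.norm_starProjection_apply_le _ x
    have : (1 - P) * B = star (star B * (1 - P)) := by rw [star_mul, star_star, hPs.star_eq]
    rw [this, star_eq_adjoint]; exact hBP.adjoint

/-! ### Douglas factorization and lifting of inequalities -/

theorem norm_sqrt_apply {A : H →L[ℂ] H} (hA : 0 ≤ A) (u : H) :
    ‖cfc Real.sqrt A u‖ ^ 2 = RCLike.re (inner ℂ (A u) u) := by
  obtain ⟨h0, h1⟩ := sqrt_facts hA
  have hs : IsSelfAdjoint (cfc Real.sqrt A) := .of_nonneg h0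
  conv_rhs => rw [← h1]
  rw [mul_apply_eq_comp, ← adjoint_inner_right, ← star_eq_adjoint, hs.star_eq,
    inner_self_eq_norm_sq (𝕜 := ℂ)]

/-- Douglas factorization: the map `g u ↦ X u` is a well-defined contraction on the range of `g`. It
is extended to the closure by continuity and by zero on the orthogonal complement. -/
theorem douglas {X : E →L[ℂ] F} {g : E →L[ℂ] G} (h : ∀ u, ‖X u‖ ≤ ‖g u‖) :
    ∃ Z : G →L[ℂ] F, (∀ w, ‖Z w‖ ≤ ‖w‖) ∧ Z ∘L g = X := by
  set W := (LinearMap.range g.toLinearMap).topologicalClosure with hW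
  have hmem : ∀ u, g.toLinearMap u ∈ W := fun u =>
    Submodule.le_topologicalClosure _ (LinearMap.mem_range_self _ u)
  set e : E →ₗ[ℂ] W := g.toLinearMap.codRestrict W hmem with he
  have : CompleteSpace W :=
    (Submodule.isClosed_topologicalClosure _).completeSpace_coe
  have hdense : DenseRange e := by
    intro w
    rw [Metric.mem_closure_iff]
    intro ε hε
    have hw : (w : G) ∈ closure (LinearMap.range g.toLinearMap : Set G) := w.2
    obtain ⟨_, ⟨u, rfl⟩, hu⟩ := Metric.mem_closure_iff.1 hw ε hε
    exact ⟨e u, ⟨u, rfl⟩, hu⟩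
  have hbd : ∀ u, ‖X.toLinearMap u‖ ≤ 1 * ‖e u‖ := fun u => by
    rw [one_mul]; exact h u
  refine ⟨X.toLinearMap.extendOfNorm e ∘L W.orthogonalProjectionOnto, fun w => ?_, ?_⟩
  · refine (LinearMap.norm_extendOfNorm_apply_le hdense 1 hbd _).trans ?_
    rw [one_mul]
    exact W.norm_orthogonalProjectionOnto_apply_le w
  · ext u
    have h1 : W.orthogonalProjectionOnto (g u) = e u :=
      Submodule.orthogonalProjectionOnto_mem_subspace_eq_self (K := W) (e u)
    rw [comp_apply, comp_apply, h1]
    exact LinearMap.extendOfNorm_eq hdense ⟨1, hbd⟩ u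

/-- If `X* X ≤ L` and `M` is a positive operator equal to `L` modulo compacts, then a compact
perturbation `X'` of `X` satisfies `X'* X' ≤ M`: factor `X = Z √L` and take `X' = Z √M`. -/
theorem exists_lift {X : E →L[ℂ] F} {M L : E →L[ℂ] E} (hM : 0 ≤ M) (hL : 0 ≤ L)
    (hLM : Cpt (L - M)) (hX : ∀ u, ‖X u‖ ^ 2 ≤ RCLike.re (inner ℂ (L u) u)) :
    ∃ X' : E →L[ℂ] F, Cpt (X - X') ∧ ∀ u, ‖X' u‖ ^ 2 ≤ RCLike.re (inner ℂ (M u) u) := by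
  obtain ⟨Z, hZ, hZX⟩ := douglas (X := X) (g := cfc Real.sqrt L) fun u => by
    refine le_of_sq_le_sq ?_ (norm_nonneg _)
    rw [norm_sqrt_apply hL]; exact hX u
  refine ⟨Z ∘L cfc Real.sqrt M, ?_, fun u => ?_⟩
  · rw [← hZX, ← comp_sub]
    exact (Cpt.cfc_sub (.of_nonneg hL) (.of_nonneg hM) hLM Real.continuous_sqrt).comp_left _
  · rw [← norm_sqrt_apply hM]
    exact pow_le_pow_left₀ (norm_nonneg _) (hZ _) 2

theorem nonneg_of_re_inner {A : H →L[ℂ] H} (hA : IsSelfAdjoint A)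
    (h : ∀ u, 0 ≤ RCLike.re (inner ℂ (A u) u)) : 0 ≤ A := by
  rw [nonneg_iff_isPositive, isPositive_def']
  exact ⟨hA, h⟩

theorem re_inner_star_mul_self (A : H →L[ℂ] H) (u : H) :
    RCLike.re (inner ℂ ((star A * A) u) u) = ‖A u‖ ^ 2 := by
  rw [mul_apply_eq_comp, star_eq_adjoint, adjoint_inner_left, inner_self_eq_norm_sq (𝕜 := ℂ)]

theorem re_inner_real_smul_one (r : ℝ) (u : H) :
    RCLike.re (inner ℂ (((r : ℂ) • (1 : H →L[ℂ] H)) u) u) = r * ‖u‖ ^ 2 := by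
  have := inner_self_eq_norm_sq (𝕜 := ℂ) u
  simp only [smul_apply, inner_smul_left, Complex.conj_ofReal]
  rw [← this]
  exact Complex.re_ofReal_mul _ _

/-- The essential norm is attained. The operator `(T* T - c²)₊` is compact, since it vanishes modulo
compacts up to any `ε`, and `T* T ≤ c² + (T* T - c²)₊`; `exists_lift` removes the compact term. -/
theorem exists_norm_le_infDist (T : H →L[ℂ] H) :
    ∃ T₀ : H →L[ℂ] H, Cpt (T - T₀) ∧
      ‖T₀‖ ≤ Metric.infDist T {S : H →L[ℂ] H | IsCompactOperator S} := by
  set c := Metric.infDist T {S : H →L[ℂ] H | IsCompactOperator S} with hc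
  have hc0 : 0 ≤ c := Metric.infDist_nonneg
  set D := star T * T with hD
  have hD0 : 0 ≤ D := star_mul_self_nonneg T
  have hDs : IsSelfAdjoint D := .of_nonneg hD0
  set f : ℝ → ℝ := fun t => max (t - c ^ 2) 0 with hf
  have hfc : Continuous f := by fun_prop
  have hJ : Cpt (cfc f D) := by
    refine Cpt.of_approx fun ε hε => ?_
    obtain ⟨δ, hδ, hδε⟩ : ∃ δ > 0, (c + δ) ^ 2 - c ^ 2 ≤ ε := by
      refine ⟨min 1 (ε / (2 * c + 1)), by positivity, ?_⟩
      have h1 := min_le_left 1 (ε / (2 * c + 1))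
      have h2 := min_le_right 1 (ε / (2 * c + 1))
      have h3 : 0 < min 1 (ε / (2 * c + 1)) := by positivity
      rw [le_div_iff₀ (by positivity)] at h2
      nlinarith
    obtain ⟨K, hK, hTK⟩ := (Metric.infDist_lt_iff ⟨0, isCompactOperator_zero⟩).1
      (show Metric.infDist T {S : H →L[ℂ] H | IsCompactOperator S} < c + δ by linarith)
    rw [dist_eq_norm] at hTK
    set A := T - K with hA
    have hAA : IsSelfAdjoint (star A * A) := .star_mul_self A
    refine ⟨cfc f D - cfc f (star A * A), Cpt.cfc_sub hDs hAA ?_ hfc, ?_⟩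
    · have hK' : Cpt K := hK
      have : D - star A * A = star T * K + star K * A := by
        rw [hD, hA, star_sub]; noncomm_ring
      rw [this]
      exact (hK'.mul_left _).add (Cpt.mul_right (by rw [star_eq_adjoint]; exact hK'.adjoint) _)
    · rw [sub_sub_cancel]
      refine norm_cfc_le hε.le fun x hx => ?_
      have hx0 : 0 ≤ x := spectrum_nonneg_of_nonneg (star_mul_self_nonneg A) hx
      have hx1 : x ≤ (c + δ) ^ 2 := by
        have := (le_abs_self x).trans (spectrum.norm_le_norm_mul_of_mem hx)
        have h1 : ‖(1 : H →L[ℂ] H)‖ ≤ 1 := norm_id_le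
        rw [CStarRing.norm_star_mul_self] at this
        nlinarith [norm_nonneg A, mul_nonneg (norm_nonneg A) (norm_nonneg A)]
      rw [hf, Real.norm_of_nonneg (le_max_right _ _)]
      exact max_le (by linarith) hε.le
  have hM : (0 : H →L[ℂ] H) ≤ ((c ^ 2 : ℝ) : ℂ) • 1 :=
    nonneg_of_re_inner (by
      rw [IsSelfAdjoint, star_smul, star_one]; simp) fun u => by
      rw [re_inner_real_smul_one]; positivity
  have hJ0 : 0 ≤ cfc f D := cfc_nonneg fun x _ => le_max_right _ _
  have hle : D ≤ ((c ^ 2 : ℝ) : ℂ) • 1 + cfc f D := by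
    have e : ((c ^ 2 : ℝ) : ℂ) • 1 + cfc f D = cfc (fun t => c ^ 2 + f t) D := by
      rw [cfc_const_add _ f D hfc.continuousOn, Algebra.algebraMap_eq_smul_one]
      congr 1
    rw [e]
    conv_lhs => rw [← cfc_id' ℝ D]
    refine cfc_mono (fun x _ => ?_) (by fun_prop) (by fun_prop)
    have := le_max_left (x - c ^ 2) 0
    simp only [hf]; linarith
  obtain ⟨T₀, h1, h2⟩ := exists_lift (X := T) hM (add_nonneg hM hJ0) (by simpa using hJ)
    fun u => by
      rw [← re_inner_star_mul_self]
      have := (nonneg_iff_isPositive _ |>.1 (sub_nonneg.2 hle)).re_inner_nonneg_left u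
      rw [sub_apply, inner_sub_left, map_sub] at this
      linarith
  refine ⟨T₀, h1, opNorm_le_bound _ hc0 fun u => ?_⟩
  refine le_of_sq_le_sq ?_ (by positivity)
  rw [mul_pow, ← re_inner_real_smul_one]
  exact h2 u

theorem isSelfAdjoint_real_smul (r : ℝ) {A : H →L[ℂ] H} (hA : IsSelfAdjoint A) :
    IsSelfAdjoint ((r : ℂ) • A) := by
  rw [IsSelfAdjoint, star_smul, hA.star_eq, Complex.star_def, Complex.conj_ofReal]

theorem isSelfAdjoint_add_smul {A B : H →L[ℂ] H} (hA : IsSelfAdjoint A) (r : ℝ)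
    (hB : IsSelfAdjoint B) : IsSelfAdjoint (A + (r : ℂ) • B) :=
  hA.add (isSelfAdjoint_real_smul r hB)

theorem isSelfAdjoint_smul_sub (r s : ℝ) (S : H →L[ℂ] H) :
    IsSelfAdjoint ((r : ℂ) • ((s : ℂ) • 1 - star S * S)) :=
  isSelfAdjoint_real_smul r
    ((isSelfAdjoint_real_smul s (IsSelfAdjoint.one (H →L[ℂ] H))).sub (.star_mul_self S))

/-! ### Block matrices with respect to `V ⊕ Vᗮ` -/

section Corner

variable (V : Submodule ℂ H) [V.HasOrthogonalProjection]

theorem incl_proj : Vᗮ.subtypeL ∘L Vᗮ.orthogonalProjectionOnto = 1 - V.starProjection := by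
  rw [← Submodule.starProjection_orthogonal']; rfl

theorem proj_incl : Vᗮ.orthogonalProjectionOnto ∘L Vᗮ.subtypeL = 1 := by
  ext u
  simp

theorem proj_starProjection : Vᗮ.orthogonalProjectionOnto ∘L V.starProjection = 0 := by
  ext x
  have h : V.starProjection x ∈ Vᗮᗮ :=
    V.le_orthogonal_orthogonal (V.starProjection_apply_mem x)
  exact congrArg Subtype.val ((Submodule.orthogonalProjectionOnto_eq_zero_iff (K := Vᗮ)).2 h)

theorem starProjection_incl : V.starProjection ∘L Vᗮ.subtypeL = 0 := by
  ext u
  exact (Submodule.starProjection_apply_eq_zero_iff (K := V)).2 u.2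

theorem norm_sq_split {x : H} (hx : x ∈ V) (u : Vᗮ) :
    ‖x + (u : H)‖ ^ 2 = ‖x‖ ^ 2 + ‖u‖ ^ 2 := by
  have h : inner ℂ x (u : H) = 0 := Submodule.inner_right_of_mem_orthogonal hx u.2
  have := norm_add_sq_eq_norm_sq_add_norm_sq_of_inner_eq_zero x (u : H) h
  simpa [pow_two] using this

theorem eq_split (x : H) :
    x = V.starProjection x + (Vᗮ.orthogonalProjectionOnto x : H) := by
  have := congr($(incl_proj V) x)
  simp only [comp_apply, sub_apply] at this
  change (Vᗮ.orthogonalProjectionOnto x : H) = _ at this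
  rw [this]; abel

theorem norm_sq_eq (x : H) :
    ‖x‖ ^ 2 = ‖V.starProjection x‖ ^ 2 + ‖Vᗮ.orthogonalProjectionOnto x‖ ^ 2 := by
  conv_lhs => rw [eq_split V x]
  exact norm_sq_split V (V.starProjection_apply_mem x) _

/-- When `‖l‖ = c`, the corner `P T (1 - P)` is compact. The rows of a contraction give
`P T (1 - P) T* P ≤ c² P - (P T P) (P T P)*`, and the right-hand side is compact since
`P T P ≡ l P`. -/
theorem corner_cpt_of_eq {c : ℝ} {l : ℂ} (hlc : ‖l‖ = c) {T : H →L[ℂ] H} (hT : ‖T‖ ≤ c)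
    (hTP : Cpt ((T - l • 1) * V.starProjection)) :
    Cpt (V.starProjection ∘L T ∘L Vᗮ.subtypeL) := by
  set P := V.starProjection with hP
  have hPs : star P = P := (isSelfAdjoint_starProjection V).star_eq
  have hPP : P * P = P := V.isIdempotentElem_starProjection
  have hPTP : Cpt (l • P - P * T * P) := by
    have : l • P - P * T * P = -(P * ((T - l • 1) * P)) := by
      rw [sub_mul, mul_sub, smul_mul_assoc, one_mul, mul_smul_comm, hPP, mul_assoc]; abel
    rw [this]; exact (hTP.mul_left _).neg
  set C := P * T * P with hC
  set D := l • P with hD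
  have hL : Cpt (D * star D - C * star C) := by
    have : D * star D - C * star C = (D - C) * star D + C * star (D - C) := by
      rw [star_sub]; noncomm_ring
    rw [this]
    exact (hPTP.mul_right _).add (Cpt.mul_left (by rw [star_eq_adjoint]; exact hPTP.adjoint) _)
  have hB : Cpt (Vᗮ.orthogonalProjectionOnto ∘L star T ∘L P) := by
    refine hL.of_dominated fun x => ?_
    refine le_trans ?_ (re_inner_le_norm (𝕜 := ℂ) _ x)
    rw [sub_apply, inner_sub_left, map_sub]
    have e : ∀ A : H →L[ℂ] H, RCLike.re (inner ℂ ((A * star A) x) x) = ‖star A x‖ ^ 2 := fun A => by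
      have := re_inner_star_mul_self (star A) x
      rwa [star_star] at this
    rw [e, e]
    have h1 : star D x = star l • P x := by rw [hD, star_smul, hPs]; rfl
    have h2 : star C x = P (star T (P x)) := by
      rw [hC, star_mul, star_mul, hPs]; rfl
    rw [h1, h2, norm_smul, norm_star, hlc]
    have h3 := norm_sq_eq V (star T (P x))
    have h4 : ‖star T (P x)‖ ≤ c * ‖P x‖ :=
      ((star T).le_opNorm _).trans (by rw [norm_star]; gcongr)
    have h5 : ‖star T (P x)‖ ^ 2 ≤ (c * ‖P x‖) ^ 2 := pow_le_pow_left₀ (norm_nonneg _) h4 2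
    change ‖Vᗮ.orthogonalProjectionOnto (star T (P x))‖ ^ 2 ≤ _
    linarith
  have := hB.adjoint
  rw [adjoint_comp, adjoint_comp, Submodule.adjoint_orthogonalProjectionOnto, ← star_eq_adjoint,
    ← star_eq_adjoint, star_star, hPs] at this
  exact this

/-- The Schur-complement condition bounding the norm of the `2 × 2` matrix `[[l, b], [0, s]]`. -/
theorem scalar_ineq {c l a b q s u : ℝ} (hq : 0 < q) (hqd : q = c ^ 2 - l ^ 2)
    (h : c ^ 2 / q * b ^ 2 ≤ c ^ 2 * u ^ 2 - s ^ 2) :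
    (l * a + b) ^ 2 + s ^ 2 ≤ c ^ 2 * (a ^ 2 + u ^ 2) := by
  have h1 : (l * a + b) ^ 2 ≤ c ^ 2 * a ^ 2 + c ^ 2 / q * b ^ 2 := by
    have : c ^ 2 * a ^ 2 + c ^ 2 / q * b ^ 2 - (l * a + b) ^ 2 = (q * a - l * b) ^ 2 / q := by
      have : c ^ 2 = q + l ^ 2 := by linarith
      rw [this]; field_simp; ring
    have : 0 ≤ (q * a - l * b) ^ 2 / q := by positivity
    linarith
  linarith

/-- The corner correction when `‖l‖ < c`. The operator `R = [[l, X], [0, S]]` agrees with `T`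
modulo compacts, so `R* R ≤ c² + (R* R - T* T)` with a compact error term. Compressing this along
`B = t X + ι` turns it into the Schur-complement inequality
`c² / (c² - ‖l‖²) X* X ≤ c² - S* S + J` with `J` compact, and `exists_lift` removes `J`. -/
theorem exists_corner_of_lt {c : ℝ} {l : ℂ} (hlc : ‖l‖ < c)
    {T : H →L[ℂ] H} (hT : ‖T‖ ≤ c) (hTP : Cpt ((T - l • 1) * V.starProjection))
    {S : Vᗮ →L[ℂ] Vᗮ} (hS : ‖S‖ ≤ c)
    (hTS : Cpt (Vᗮ.orthogonalProjectionOnto ∘L T ∘L Vᗮ.subtypeL - S)) :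
    ∃ X' : Vᗮ →L[ℂ] H, Cpt (V.starProjection ∘L T ∘L Vᗮ.subtypeL - X') ∧
      ∀ u, c ^ 2 / (c ^ 2 - ‖l‖ ^ 2) * ‖X' u‖ ^ 2 ≤ c ^ 2 * ‖u‖ ^ 2 - ‖S u‖ ^ 2 := by
  set P := V.starProjection with hP
  set π := Vᗮ.orthogonalProjectionOnto with hπ
  set ι := Vᗮ.subtypeL with hι
  set X := P ∘L T ∘L ι with hX
  have hc : 0 < c := (norm_nonneg l).trans_lt hlc
  set q := c ^ 2 - ‖l‖ ^ 2 with hq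
  have hq0 : 0 < q := by nlinarith [norm_nonneg l]
  set κ := c ^ 2 / q with hκ
  have hκ0 : 0 < κ := by positivity
  set R : H →L[ℂ] H := l • P + X ∘L π + ι ∘L S ∘L π with hR
  have hιπ : ι ∘L π = 1 - P := incl_proj V
  have hRT : Cpt (R - T) := by
    have : R - T = -((T - l • 1) * P) - ι ∘L (π ∘L T ∘L ι - S) ∘L π := by
      have h1 : X ∘L π = P * T * (1 - P) := by rw [← hιπ]; rfl
      have h2 : ι ∘L (π ∘L T ∘L ι - S) ∘L π = (1 - P) * T * (1 - P) - ι ∘L S ∘L π := by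
        rw [sub_comp, comp_sub, ← hιπ]; rfl
      rw [hR, h1, h2, sub_mul, smul_mul_assoc, one_mul]
      noncomm_ring
    rw [this]
    exact hTP.neg.sub ((hTS.comp_right _).comp_left _)
  have hRRTT : Cpt (star R * R - star T * T) := by
    have : star R * R - star T * T = star (R - T) * R + star T * (R - T) := by
      rw [star_sub]; noncomm_ring
    rw [this]
    exact (Cpt.mul_right (by rw [star_eq_adjoint]; exact hRT.adjoint) _).add (hRT.mul_left _)
  -- For fixed `u`, the vector `x = t • X u` minimizes `c² ‖x + u‖² - ‖R (x + u)‖²` over `x ∈ V`;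
  -- the minimum is `c² ‖u‖² - ‖S u‖² - κ ‖X u‖²`.
  set t : ℂ := star l / (q : ℂ) with ht
  set B : Vᗮ →L[ℂ] H := t • X + ι with hB
  set J : Vᗮ →L[ℂ] Vᗮ := adjoint B ∘L (star R * R - star T * T) ∘L B with hJ
  have hJc : Cpt J := (hRRTT.comp_right _).comp_left _
  have hJs : IsSelfAdjoint J := by
    have : IsSelfAdjoint (star R * R - star T * T) :=
      (IsSelfAdjoint.star_mul_self R).sub (.star_mul_self T)
    exact this.adjoint_conj B
  have hXV : ∀ u, X u ∈ V := fun u => V.starProjection_apply_mem _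
  have hform : ∀ u, κ * ‖X u‖ ^ 2 ≤ c ^ 2 * ‖u‖ ^ 2 - ‖S u‖ ^ 2 + RCLike.re (inner ℂ (J u) u) := by
    intro u
    have h1 : RCLike.re (inner ℂ (J u) u) = ‖R (B u)‖ ^ 2 - ‖T (B u)‖ ^ 2 := by
      rw [← re_inner_star_mul_self, ← re_inner_star_mul_self, ← map_sub, ← inner_sub_left,
        ← sub_apply, hJ, comp_apply, adjoint_inner_left]; rfl
    have hPB : P (B u) = t • X u := by
      have h1 : P (X u) = X u := Submodule.starProjection_eq_self_iff.2 (hXV u)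
      have h2 : P (ι u) = 0 := congr($(starProjection_incl V) u)
      rw [hB, add_apply, map_add, smul_apply, map_smul, h1, h2, add_zero]
    have hπB : π (B u) = u := by
      have h1 : π (X u) = 0 := congr($(proj_starProjection V) (T (ι u)))
      have h2 : π (ι u) = u := congr($(proj_incl V) u)
      rw [hB, add_apply, map_add, smul_apply, map_smul, h1, h2, smul_zero, zero_add]
    have h2 : ‖B u‖ ^ 2 = (‖t‖ * ‖X u‖) ^ 2 + ‖u‖ ^ 2 := by
      rw [norm_sq_eq V, ← norm_smul]
      change ‖P (B u)‖ ^ 2 + ‖π (B u)‖ ^ 2 = _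
      rw [hPB, hπB]
    have h3 : R (B u) = (l * t + 1) • X u + ((S u : Vᗮ) : H) := by
      have : R (B u) = l • P (B u) + X (π (B u)) + ι (S (π (B u))) := rfl
      rw [this, hPB, hπB, smul_smul, add_smul, one_smul]; rfl
    have h4 : ‖R (B u)‖ ^ 2 = (‖l * t + 1‖ * ‖X u‖) ^ 2 + ‖S u‖ ^ 2 := by
      rw [h3, norm_sq_split V (V.smul_mem _ (hXV u)), norm_smul]
    have h5 : ‖T (B u)‖ ^ 2 ≤ c ^ 2 * ‖B u‖ ^ 2 := by
      rw [← mul_pow]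
      exact pow_le_pow_left₀ (norm_nonneg _) ((T.le_opNorm _).trans (by gcongr)) 2
    have hqC : (q : ℂ) ≠ 0 := by exact_mod_cast hq0.ne'
    have h6 : l * t + 1 = ((c ^ 2 / q : ℝ) : ℂ) := by
      have hll : l * star l = ((‖l‖ ^ 2 : ℝ) : ℂ) := by
        rw [Complex.star_def, Complex.mul_conj, Complex.normSq_eq_norm_sq]
      have : (c : ℂ) ^ 2 = q + ‖l‖ ^ 2 := by rw [hq]; push_cast; ring
      rw [ht, ← mul_div_assoc, hll]
      push_cast
      rw [this]; field_simp; ring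
    have h7 : ‖l * t + 1‖ = c ^ 2 / q := by
      rw [h6, Complex.norm_real, Real.norm_of_nonneg (by positivity)]
    have h8 : ‖t‖ = ‖l‖ / q := by
      rw [ht, norm_div, norm_star, Complex.norm_real, Real.norm_of_nonneg hq0.le]
    rw [h7] at h4
    rw [h8] at h2
    have h9 : κ * ‖X u‖ ^ 2 = (c ^ 2 / q * ‖X u‖) ^ 2 - c ^ 2 * (‖l‖ / q * ‖X u‖) ^ 2 := by
      have : c ^ 2 = q + ‖l‖ ^ 2 := by rw [hq]; ring
      rw [hκ, this]; field_simp; ring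
    rw [h2] at h5
    linarith
  set M : Vᗮ →L[ℂ] Vᗮ := ((κ⁻¹ : ℝ) : ℂ) • (((c ^ 2 : ℝ) : ℂ) • 1 - star S * S) with hM
  have hre : ∀ (r : ℝ) (A : Vᗮ →L[ℂ] Vᗮ) (u : Vᗮ),
      RCLike.re (inner ℂ (((r : ℂ) • A) u) u) = r * RCLike.re (inner ℂ (A u) u) := by
    intro r A u
    rw [smul_apply, inner_smul_left, Complex.conj_ofReal]
    exact Complex.re_ofReal_mul _ _
  have hMf : ∀ u, RCLike.re (inner ℂ (M u) u) = κ⁻¹ * (c ^ 2 * ‖u‖ ^ 2 - ‖S u‖ ^ 2) := by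
    intro u
    rw [hM, hre, sub_apply, inner_sub_left, map_sub, re_inner_real_smul_one,
      re_inner_star_mul_self]
  have hMs : IsSelfAdjoint M := isSelfAdjoint_smul_sub _ _ S
  have hM0 : 0 ≤ M := nonneg_of_re_inner hMs fun u => by
    rw [hMf]
    have : ‖S u‖ ^ 2 ≤ c ^ 2 * ‖u‖ ^ 2 := by
      rw [← mul_pow]
      exact pow_le_pow_left₀ (norm_nonneg _) ((S.le_opNorm _).trans (by gcongr)) 2
    exact mul_nonneg (by positivity) (by linarith)
  have hLf : ∀ u, ‖X u‖ ^ 2 ≤ RCLike.re (inner ℂ ((M + ((κ⁻¹ : ℝ) : ℂ) • J) u) u) := by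
    intro u
    rw [add_apply, inner_add_left, map_add, hMf, hre, ← mul_add, inv_mul_eq_div,
      le_div_iff₀ hκ0, mul_comm]
    exact hform u
  have hL0 : 0 ≤ M + ((κ⁻¹ : ℝ) : ℂ) • J :=
    nonneg_of_re_inner (isSelfAdjoint_add_smul hMs _ hJs) fun u => (by positivity : (0:ℝ) ≤ _).trans (hLf u)
  obtain ⟨X', h1, h2⟩ := exists_lift hM0 hL0 (by simpa using hJc.smul _) hLf
  refine ⟨X', h1, fun u => ?_⟩
  have := h2 u
  rw [hMf, inv_mul_eq_div, le_div_iff₀ hκ0, mul_comm] at this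
  exact this

/-- The corner `X` can be replaced modulo compacts by one for which `[[l, X'], [0, S]]` has norm at
most `c`; here `a` stands for the norm of the component in `V`. -/
theorem exists_corner {c : ℝ} {l : ℂ} (hlc : ‖l‖ ≤ c)
    {T : H →L[ℂ] H} (hT : ‖T‖ ≤ c) (hTP : Cpt ((T - l • 1) * V.starProjection))
    {S : Vᗮ →L[ℂ] Vᗮ} (hS : ‖S‖ ≤ c)
    (hTS : Cpt (Vᗮ.orthogonalProjectionOnto ∘L T ∘L Vᗮ.subtypeL - S)) :
    ∃ X' : Vᗮ →L[ℂ] H, Cpt (V.starProjection ∘L T ∘L Vᗮ.subtypeL - X') ∧ (∀ u, X' u ∈ V) ∧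
      ∀ (a : ℝ) u, (‖l‖ * a + ‖X' u‖) ^ 2 + ‖S u‖ ^ 2 ≤ c ^ 2 * (a ^ 2 + ‖u‖ ^ 2) := by
  rcases hlc.eq_or_lt with h | h
  · refine ⟨0, ?_, fun u => V.zero_mem, fun a u => ?_⟩
    · rw [sub_zero]; exact corner_cpt_of_eq V h hT hTP
    · have : ‖S u‖ ^ 2 ≤ c ^ 2 * ‖u‖ ^ 2 := by
        rw [← mul_pow]
        exact pow_le_pow_left₀ (norm_nonneg _) ((S.le_opNorm _).trans (by gcongr)) 2
      rw [h]; simp only [zero_apply, norm_zero, add_zero]; nlinarith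
  · obtain ⟨X', h1, h2⟩ := exists_corner_of_lt V h hT hTP hS hTS
    have hq0 : 0 < c ^ 2 - ‖l‖ ^ 2 := by nlinarith [norm_nonneg l]
    refine ⟨V.starProjection ∘L X', ?_, fun u => V.starProjection_apply_mem _, fun a u => ?_⟩
    · have := h1.comp_left V.starProjection
      rwa [comp_sub, ← comp_assoc, show V.starProjection ∘L V.starProjection = V.starProjection from
        V.isIdempotentElem_starProjection] at this
    · refine scalar_ineq hq0 rfl ((le_trans ?_ (h2 u)))
      gcongr
      exact V.norm_starProjection_apply_le _

/-! ### Products of linear factors under compression to `Vᗮ` -/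

theorem proj_prod_sub {T : H →L[ℂ] H} {Y : Vᗮ →L[ℂ] Vᗮ}
    (h : Cpt (Vᗮ.orthogonalProjectionOnto ∘L T - Y ∘L Vᗮ.orthogonalProjectionOnto)) (L : List ℂ) :
    Cpt (Vᗮ.orthogonalProjectionOnto ∘L (L.map fun m => T - m • 1).prod
      - (L.map fun m => Y - m • 1).prod ∘L Vᗮ.orthogonalProjectionOnto) := by
  set π := Vᗮ.orthogonalProjectionOnto with hπ
  induction L with
  | nil =>
    have : π ∘L (1 : H →L[ℂ] H) - (1 : Vᗮ →L[ℂ] Vᗮ) ∘L π = 0 := by ext; simp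
    simpa [this] using Cpt.zero
  | cons m L ih =>
    simp only [List.map_cons, List.prod_cons]
    set A := (L.map fun m => T - m • 1).prod
    set B := (L.map fun m => Y - m • 1).prod
    have : π ∘L ((T - m • 1) * A) - ((Y - m • 1) * B) ∘L π
        = (π ∘L T - Y ∘L π) ∘L A + (Y - m • 1) ∘L (π ∘L A - B ∘L π) := by
      ext x; simp; abel
    rw [this]
    exact (h.comp_right _).add (ih.comp_left _)

theorem proj_prod_eq {T : H →L[ℂ] H} {Y : Vᗮ →L[ℂ] Vᗮ}
    (h : Vᗮ.orthogonalProjectionOnto ∘L T = Y ∘L Vᗮ.orthogonalProjectionOnto) (L : List ℂ) :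
    Vᗮ.orthogonalProjectionOnto ∘L (L.map fun m => T - m • 1).prod
      = (L.map fun m => Y - m • 1).prod ∘L Vᗮ.orthogonalProjectionOnto := by
  set π := Vᗮ.orthogonalProjectionOnto with hπ
  induction L with
  | nil => ext; simp
  | cons m L ih =>
    simp only [List.map_cons, List.prod_cons]
    set A := (L.map fun m => T - m • 1).prod
    set B := (L.map fun m => Y - m • 1).prod
    have : π ∘L ((T - m • 1) * A) = (π ∘L T) ∘L A - m • (π ∘L A) := by ext x; simp
    rw [this, h, comp_assoc, ih]
    ext x; simp

/-- Modulo compacts `T` is block upper triangular, so the polynomial with roots `L` in the compression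
of `T` to `Vᗮ` is the compression of that polynomial in `T`, which is compact by `hVB`. -/
theorem compression_prod {l : ℂ} {L : List ℂ} {T : H →L[ℂ] H}
    (hVA : Cpt ((T - l • 1) * V.starProjection))
    (hVB : Cpt ((1 - V.starProjection) * (L.map fun m => T - m • 1).prod)) :
    Cpt (L.map fun m =>
      Vᗮ.orthogonalProjectionOnto ∘L T ∘L Vᗮ.subtypeL - m • (1 : Vᗮ →L[ℂ] Vᗮ)).prod := by
  set P := V.starProjection with hP
  set π := Vᗮ.orthogonalProjectionOnto with hπ
  set ι := Vᗮ.subtypeL with hι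
  have hιπ : ι ∘L π = 1 - P := incl_proj V
  have hπι : π ∘L ι = 1 := proj_incl V
  have hπP : π ∘L P = 0 := proj_starProjection V
  set Y := π ∘L T ∘L ι with hY
  have hTY : Cpt (π ∘L T - Y ∘L π) := by
    have : π ∘L T - Y ∘L π = π ∘L ((T - l • 1) * P) := by
      ext1 x
      have h0 : π (P x) = 0 := congr($hπP x)
      have h1 : ι (π x) = x - P x := congr($hιπ x)
      change π (T x) - π (T (ι (π x))) = π (T (P x) - l • P x)
      rw [h1, map_sub, map_sub, map_sub, map_smul, h0]
      simp
    rw [this]; exact hVA.comp_left _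
  have h1 := (proj_prod_sub V hTY L).comp_right ι
  rw [← hπ] at h1
  set A := (L.map fun m => T - m • 1).prod
  set B := (L.map fun m => Y - m • 1).prod
  have h2 : Cpt (π ∘L A) := by
    have : π ∘L A = π ∘L ((1 - P) * A) := by
      have e : π ∘L ((1 - P) * A) = π ∘L A - (π ∘L P) ∘L A := by
        rw [sub_mul, one_mul, comp_sub]; rfl
      rw [e, hπP, zero_comp, sub_zero]
    rw [this]; exact hVB.comp_left _
  have h3 : B = (π ∘L A) ∘L ι - (π ∘L A - B ∘L π) ∘L ι := by
    clear_value A B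
    ext1 u
    have h0 : π (ι u) = u := congr($hπι u)
    change B u = π (A (ι u)) - (π (A (ι u)) - B (π (ι u)))
    rw [h0, sub_sub_cancel]
  rw [h3]
  exact Cpt.sub (h2.comp_right ι) h1

theorem norm_compression_le {c : ℝ} {T : H →L[ℂ] H} (hT : ‖T‖ ≤ c) :
    ‖Vᗮ.orthogonalProjectionOnto ∘L T ∘L Vᗮ.subtypeL‖ ≤ c := by
  refine opNorm_le_bound _ ((norm_nonneg T).trans hT) fun u => ?_
  have h1 : ‖Vᗮ.orthogonalProjectionOnto (T u)‖ ≤ ‖T u‖ :=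
    Vᗮ.norm_orthogonalProjectionOnto_apply_le (T u)
  have h2 : ‖T u‖ ≤ c * ‖(u : H)‖ :=
    (T.le_opNorm _).trans (mul_le_mul_of_nonneg_right hT (norm_nonneg _))
  exact h1.trans h2

/-- If `Vᗮ` is finite-dimensional, then `T` is a compact perturbation of the scalar `l`. -/
theorem exists_scalar_of_cpt {c : ℝ} {l : ℂ} (hl : ‖l‖ ≤ c) {T : H →L[ℂ] H}
    (hVA : Cpt ((T - l • 1) * V.starProjection)) (h1 : Cpt (1 : Vᗮ →L[ℂ] Vᗮ)) :
    Cpt (l • 1 - T) ∧ ‖l • (1 : H →L[ℂ] H)‖ ≤ c := by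
  set P := V.starProjection with hP
  constructor
  · have h2 : Cpt (1 - P) := by
      have : 1 - P = Vᗮ.subtypeL ∘L (1 : Vᗮ →L[ℂ] Vᗮ) ∘L Vᗮ.orthogonalProjectionOnto := by
        rw [← incl_proj V]; rfl
      rw [this]; exact (h1.comp_right _).comp_left _
    have : l • 1 - T = -((T - l • 1) * P) - (T - l • 1) * (1 - P) := by noncomm_ring
    rw [this]
    exact hVA.neg.sub (h2.mul_left _)
  · refine opNorm_le_bound _ ((norm_nonneg l).trans hl) fun x => ?_
    rw [smul_apply, norm_smul]
    exact mul_le_mul_of_nonneg_right hl (norm_nonneg x)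

/-- From a solution `S` on `Vᗮ`, the block matrix `[[l, X'], [0, S]]` is a solution on the whole space:
`q(S) = 0` forces the range of `q(R)` into `V`, where `R - l` vanishes. -/
theorem exists_glue {c : ℝ} {l : ℂ} (hl : ‖l‖ ≤ c) {L : List ℂ}
    {T : H →L[ℂ] H} (hT : ‖T‖ ≤ c) (hVA : Cpt ((T - l • 1) * V.starProjection))
    {S : Vᗮ →L[ℂ] Vᗮ} (hSc : ‖S‖ ≤ c)
    (hTS : Cpt (Vᗮ.orthogonalProjectionOnto ∘L T ∘L Vᗮ.subtypeL - S))
    (hS0 : (L.map fun m => S - m • 1).prod = 0) :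
    ∃ R : H →L[ℂ] H, Cpt (R - T) ∧ ‖R‖ ≤ c ∧
      (R - l • 1) * (L.map fun m => R - m • 1).prod = 0 := by
  have hc : 0 ≤ c := (norm_nonneg l).trans hl
  set P := V.starProjection with hP
  set π := Vᗮ.orthogonalProjectionOnto with hπ
  set ι := Vᗮ.subtypeL with hι
  have hιπ : ι ∘L π = 1 - P := incl_proj V
  have hπι : π ∘L ι = 1 := proj_incl V
  have hπP : π ∘L P = 0 := proj_starProjection V
  obtain ⟨X, hX, hXV, hXn⟩ := exists_corner V hl hT hVA hSc hTS
  set R : H →L[ℂ] H := l • P + X ∘L π + ι ∘L S ∘L π with hR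
  have hRx : ∀ x, R x = l • P x + X (π x) + ((S (π x) : Vᗮ) : H) := fun x => rfl
  have hRP : (R - l • 1) * P = 0 := by
    ext x
    have e1 : π (P x) = 0 := congr($hπP x)
    have e2 : P (P x) = P x := congr($(V.isIdempotentElem_starProjection.eq) x)
    change R (P x) - l • P x = 0
    rw [hRx, e1, e2]; simp
  have hπR : π ∘L R = S ∘L π := by
    ext1 x
    have e1 : π (P x) = 0 := congr($hπP x)
    have e2 : π (X (π x)) = 0 :=
      (Submodule.orthogonalProjectionOnto_eq_zero_iff (K := Vᗮ)).2
        (V.le_orthogonal_orthogonal (hXV _))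
    have e3 : π ((S (π x) : Vᗮ) : H) = S (π x) := congr($hπι (S (π x)))
    rw [comp_apply, hRx, map_add, map_add, map_smul, e1, e2, e3, smul_zero, zero_add, zero_add]
    rfl
  refine ⟨R, ?_, ?_, ?_⟩
  · have e1 : (P ∘L T ∘L ι) ∘L π = P * T * (1 - P) := by rw [← hιπ]; rfl
    have e3 : ι ∘L (π ∘L T ∘L ι) ∘L π = (1 - P) * T * (1 - P) := by rw [← hιπ]; rfl
    have : R - T = -((T - l • 1) * P) - (P ∘L T ∘L ι - X) ∘L π
        - ι ∘L (π ∘L T ∘L ι - S) ∘L π := by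
      rw [sub_comp, sub_comp, comp_sub, e1, e3, hR, sub_mul, smul_mul_assoc, one_mul]
      noncomm_ring
    rw [this]
    exact (hVA.neg.sub (hX.comp_right _)).sub ((hTS.comp_right _).comp_left _)
  · refine opNorm_le_bound _ hc fun x => le_of_sq_le_sq ?_ (by positivity)
    have hmem : l • P x + X (π x) ∈ V :=
      V.add_mem (V.smul_mem _ (V.starProjection_apply_mem x)) (hXV _)
    rw [hRx, norm_sq_split V hmem, mul_pow, norm_sq_eq V x]
    refine le_trans ?_ (hXn ‖P x‖ (π x))
    gcongr
    refine (norm_add_le _ _).trans ?_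
    rw [norm_smul]
  · have h1 := proj_prod_eq V hπR L
    rw [← hπ, hS0] at h1
    set A := (L.map fun m => R - m • 1).prod
    have h2 : (1 - P) * A = 0 := by
      have : (1 - P) * A = ι ∘L (π ∘L A) := by rw [← hιπ]; rfl
      rw [this, h1, zero_comp, comp_zero]
    have : (R - l • 1) * A = (R - l • 1) * P * A + (R - l • 1) * ((1 - P) * A) := by
      noncomm_ring
    rw [this, hRP, h2, zero_mul, mul_zero, add_zero]

end Corner

/-! ### Induction on the roots -/

universe u

/-- The first alternative, that the space is finite-dimensional, is needed for the empty list of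
roots, where the hypothesis says that the identity is compact. -/
theorem main_induction {c : ℝ} (L : List ℂ) :
    ∀ (H : Type u) [NormedAddCommGroup H] [InnerProductSpace ℂ H] [CompleteSpace H]
      (T : H →L[ℂ] H), ‖T‖ ≤ c → Cpt (L.map fun m => T - m • 1).prod →
      Cpt (1 : H →L[ℂ] H) ∨ ∃ S : H →L[ℂ] H, Cpt (S - T) ∧ ‖S‖ ≤ c ∧
        (L.map fun m => S - m • 1).prod = 0 := by
  induction L with
  | nil => intro H _ _ _ T _ h; exact .inl h
  | cons l L ih =>
    intro H _ _ _ T hT h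
    simp only [List.map_cons, List.prod_cons] at h ⊢
    rcases lt_or_ge c ‖l‖ with hl | hl
    · have hu : IsUnit (T - l • 1) := by
        have h1 : l ∈ resolventSet ℂ T := by
          refine spectrum.mem_resolventSet_of_norm_lt_mul ?_
          refine lt_of_le_of_lt ?_ hl
          have h1 : ‖(1 : H →L[ℂ] H)‖ ≤ 1 := norm_id_le
          nlinarith [norm_nonneg T, norm_nonneg (1 : H →L[ℂ] H)]
        rw [spectrum.mem_resolventSet_iff, Algebra.algebraMap_eq_smul_one] at h1
        rw [← neg_sub]; exact h1.neg
      obtain ⟨w, hw⟩ := hu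
      have h' : Cpt (L.map fun m => T - m • 1).prod := by
        have := h.mul_left (↑w⁻¹ : H →L[ℂ] H)
        rwa [← hw, Units.inv_mul_cancel_left] at this
      rcases ih H T hT h' with h1 | ⟨S, h1, h2, h3⟩
      · exact .inl h1
      · exact .inr ⟨S, h1, h2, by rw [h3, mul_zero]⟩
    · right
      obtain ⟨V, hV, hVA, hVB⟩ := exists_subspace h
      rcases ih Vᗮ _ (norm_compression_le V hT) (compression_prod V hVA hVB) with
        h1 | ⟨S, hSY, hSc, hS0⟩
      · obtain ⟨h2, h3⟩ := exists_scalar_of_cpt V hl hVA h1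
        exact ⟨l • 1, h2, h3, by rw [sub_self, zero_mul]⟩
      · exact exists_glue V hl hT hVA hSc (by rw [← neg_sub]; exact hSY.neg) hS0

theorem prod_flatten_replicate {A : Type*} [Ring A] [Algebra ℂ A] (T : A) (n : ℕ)
    (lam : Fin n → ℂ) (k : Fin n → ℕ) :
    (((List.ofFn fun i => List.replicate (k i) (lam i)).flatten).map fun m => T - m • 1).prod
      = (List.ofFn fun i => (T - lam i • 1) ^ k i).prod := by
  rw [List.map_flatten, List.prod_flatten, List.map_map, List.map_ofFn]
  congr 2
  ext i
  simp

end PolyCompact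

open PolyCompact in
/-- Let `H` be an infinite-dimensional separable complex Hilbert space,
`T ∈ B(H)`, and `p(t) = (t−λ₁)^{k₁}⋯(t−λₙ)^{kₙ}` with distinct roots and all `kᵢ ≥ 2`.
If `p(T)` is compact, then there is a compact operator `K` with `p(T + K) = 0` and
`‖T + K‖ = ‖T‖ₑ`, the essential norm of `T` (the norm of the image of `T` in the Calkin
algebra, i.e. the distance from `T` to the compact operators). -/
theorem stmt_8 {H : Type*} [NormedAddCommGroup H] [InnerProductSpace ℂ H] [CompleteSpace H]
    [TopologicalSpace.SeparableSpace H] (hdim : ¬ FiniteDimensional ℂ H)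
    (n : ℕ) (lam : Fin n → ℂ) (hlam : Function.Injective lam)
    (k : Fin n → ℕ) (hk : ∀ i, 2 ≤ k i)
    (T : H →L[ℂ] H)
    (hTc : IsCompactOperator (List.ofFn fun i => (T - lam i • 1) ^ k i).prod) :
    ∃ K : H →L[ℂ] H, IsCompactOperator K ∧
      (List.ofFn fun i => (T + K - lam i • 1) ^ k i).prod = 0 ∧
      ‖T + K‖ = Metric.infDist T {S : H →L[ℂ] H | IsCompactOperator S} := by
  obtain ⟨T₀, hT₀, hn⟩ := exists_norm_le_infDist T
  have hlist : ∀ R : H →L[ℂ] H, _ := fun R => prod_flatten_replicate R n lam k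
  set L := (List.ofFn fun i => List.replicate (k i) (lam i)).flatten
  have hp : Cpt (L.map fun m => T₀ - m • 1).prod := by
    have h1 : Cpt (L.map fun m => T - m • 1).prod := by rw [hlist]; exact hTc
    have h2 : ∀ L : List ℂ,
        Cpt ((L.map fun m => T - m • 1).prod - (L.map fun m => T₀ - m • 1).prod) := by
      intro L
      induction L with
      | nil => simpa using Cpt.zero
      | cons m L ih =>
        simp only [List.map_cons, List.prod_cons]
        set A := (L.map fun m => T - m • 1).prod
        set B := (L.map fun m => T₀ - m • 1).prod
        have : (T - m • 1) * A - (T₀ - m • 1) * B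
            = (T - T₀) * A + (T₀ - m • 1) * (A - B) := by noncomm_ring
        rw [this]
        exact (hT₀.mul_right _).add (ih.mul_left _)
    have := h1.sub (h2 L)
    rwa [sub_sub_cancel] at this
  rcases main_induction L H T₀ hn hp with h | ⟨S, hS, hSn, hS0⟩
  · exact absurd (FiniteDimensional.of_isCompactOperator_id (𝕜 := ℂ) h) hdim
  · have hK : Cpt (S - T) := by
      have := hS.sub hT₀
      rwa [sub_sub_sub_cancel_right] at this
    refine ⟨S - T, hK, ?_, ?_⟩
    · rw [add_sub_cancel, ← hlist]; exact hS0
    · rw [add_sub_cancel]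
      refine le_antisymm hSn ?_
      have hK' : T - S ∈ {S : H →L[ℂ] H | IsCompactOperator S} := by
        rw [← neg_sub]; exact hK.neg
      have := Metric.infDist_le_dist_of_mem (x := T) hK'
      rwa [dist_eq_norm, sub_sub_cancel] at this
end

section
/- Let p(t) = (t−t₁)⋯(t−tₙ) be a polynomial with distinct real roots t₁,…,tₙ, and let C > 0. Then the relation 'p(x) = 0, ‖x‖ ≤ C' is stable in the following sense (equivalent to semiprojectivity of its universal C*-algebra): for every C*-algebra A, every increasing sequence I₁ ⊆ I₂ ⊆ ⋯ of closed two-sided ideals of A with I = closure(⋃ₙ Iₙ), and every x ∈ A/I with p(x) = 0 and ‖x‖ ≤ C, there exist N ∈ ℕ and y ∈ A/I_N with p(y) = 0, ‖y‖ ≤ C, such that the canonical surjection A/I_N → A/I maps y to x. -/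
/-!
Write `D = A/I`, `B = A/I_N`, and let `x ∈ D` satisfy `p(x) = 0` and `‖x‖ ≤ C`.

*Reformulation with self-adjoint elements.* Since `p` has distinct real roots, `x = r a r⁻¹` with
`a` self-adjoint and `r` positive invertible (`exists_similar_selfAdjoint`). The relation
`p(x) = 0` says that the spectrum of `a` consists of roots of `p`, and with `v = r²` the bound
`‖x‖ ≤ C` says that `a v a ≤ C² v`. Moreover `|τ| ≤ C` for every `τ` in the spectrum of `a`.

*Lifting `a`.* Let `T` be the set of roots of modulus at most `C`. A self-adjoint lift of `a` to
`A` satisfies `∏_{τ ∈ T} (X - τ) = 0` modulo `I`, hence approximately modulo `I_N` for `N` large,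
so functional calculus corrects it in `A/I_N` to a self-adjoint lift with spectrum in `T`
(`exists_rounding`, `exists_selfAdjoint_lift`).

*Lifting `v`.* Replace `a` by `a / C`, so that the condition is `a v a ≤ v`. Let `q` be the
spectral projection of `a` for `(-1, 1)` and `e = 1 - q`, so that `s = a e` is a symmetry of the
corner of `e`. The condition forces `v` to be diagonal with respect to `q + e = 1` and its
`e`-block to commute with `s` (`IsSplit.compression_eq`); these features are lifted by averaging.
On the corner of `q`, where `‖a q‖ < 1`, the condition is repaired by adding a geometric series
built from the positive part of the defect, which is in the kernel of the quotient map
(`IsSplit.exists_lift`). With the resulting lifts `a` and `v`, the element `√v a √v⁻¹` lifts `x`.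

The argument takes place in quotient C⋆-algebras, so the first part shows that the quotient by a
closed two-sided ideal is one.
-/

/-! ### Quotient C⋆-algebras -/

section Quot

universe u

variable {A : Type u} [CStarAlgebra A]

/-- For `j` in a two-sided ideal `J`, with `b = star j * j`, the element `u = b (b + ε²)⁻¹` of `J`
is an approximate right unit for `j`. These local units play the role of an
approximate unit: they give both self-adjointness of closed ideals and the C⋆-identity in the
quotient. -/
theorem exists_local_unit (J : Ideal A) [J.IsTwoSided] {j : A} (hj : j ∈ J) {ε : ℝ} (hε : 0 < ε) :
    ∃ u ∈ J, IsSelfAdjoint u ∧ ‖1 - u‖ ≤ 1 ∧ ‖j * (1 - u)‖ ≤ ε := by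
  set b : A := star j * j with hb
  have hbsa : IsSelfAdjoint b := IsSelfAdjoint.star_mul_self j
  have hspec : ∀ x ∈ spectrum ℝ b, 0 ≤ x := fun x hx => spectrum_star_mul_self_nonneg x hx
  have hd : 0 < ε ^ 2 := by positivity
  have hne : ∀ x ∈ spectrum ℝ b, x + ε ^ 2 ≠ 0 := fun x hx => by
    have := hspec x hx; positivity
  have hc : ContinuousOn (fun x : ℝ => (x + ε ^ 2)⁻¹) (spectrum ℝ b) :=
    ContinuousOn.inv₀ (by fun_prop) hne
  have hc' : ContinuousOn (fun x : ℝ => ε ^ 2 * (x + ε ^ 2)⁻¹) (spectrum ℝ b) := by fun_prop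
  have h1u : 1 - cfc (fun x : ℝ => x * (x + ε ^ 2)⁻¹) b
      = cfc (fun x : ℝ => ε ^ 2 * (x + ε ^ 2)⁻¹) b := by
    rw [← cfc_const_one ℝ b, ← cfc_sub _ _ b (by fun_prop) (by fun_prop)]
    refine cfc_congr fun x hx => ?_
    have := hne x hx
    field_simp
    ring
  refine ⟨cfc (fun x : ℝ => x * (x + ε ^ 2)⁻¹) b, ?_, cfc_predicate _ _, ?_, ?_⟩
  · rw [cfc_mul (fun x : ℝ => x) _ b (by fun_prop) hc, cfc_id' ℝ b]
    exact J.mul_mem_right _ (J.mul_mem_left _ hj)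
  · rw [h1u]
    refine norm_cfc_le zero_le_one fun x hx => ?_
    have := hspec x hx
    rw [Real.norm_of_nonneg (by positivity)]
    rw [← div_eq_mul_inv, div_le_one (by positivity)]
    linarith
  · rw [h1u]
    set v := cfc (fun x : ℝ => ε ^ 2 * (x + ε ^ 2)⁻¹) b with hv
    have hvsa : star v = v := (cfc_predicate (R := ℝ) _ b : IsSelfAdjoint v)
    have h2 : ‖j * v‖ * ‖j * v‖ ≤ ε ^ 2 := by
      rw [← CStarRing.norm_star_mul_self, star_mul, hvsa]
      have : v * star j * (j * v) = v * b * v := by simp only [hb, mul_assoc]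
      rw [this]
      have : v * b * v =
          cfc (fun x : ℝ => (ε ^ 2 * (x + ε ^ 2)⁻¹) * x * (ε ^ 2 * (x + ε ^ 2)⁻¹)) b := by
        rw [cfc_mul (fun x : ℝ => (ε ^ 2 * (x + ε ^ 2)⁻¹) * x) _ b (by fun_prop) hc',
          cfc_mul _ (fun x : ℝ => x) b hc' (by fun_prop), cfc_id' ℝ b]
      rw [this]
      refine norm_cfc_le hd.le fun x hx => ?_
      have hx := hspec x hx
      rw [Real.norm_of_nonneg (by positivity)]
      have h1 : ε ^ 2 * (x + ε ^ 2)⁻¹ ≤ 1 := by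
        rw [← div_eq_mul_inv, div_le_one (by positivity)]
        linarith
      have h3 : x * (x + ε ^ 2)⁻¹ ≤ 1 := by
        rw [← div_eq_mul_inv, div_le_one (by positivity)]
        linarith
      calc _ = (ε ^ 2 * (x + ε ^ 2)⁻¹) * (x * (x + ε ^ 2)⁻¹) * ε ^ 2 := by ring
        _ ≤ 1 * 1 * ε ^ 2 := by gcongr
        _ = _ := by ring
    exact abs_le_of_sq_le_sq' (by nlinarith) hε.le |>.2

theorem star_mem_of_isClosed (J : Ideal A) [J.IsTwoSided] (hJ : IsClosed (J : Set A)) {j : A}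
    (hj : j ∈ J) : star j ∈ J := by
  have : star j ∈ closure (J : Set A) := by
    refine Metric.mem_closure_iff.2 fun ε hε => ?_
    obtain ⟨u, hu, husa, -, h⟩ := exists_local_unit J hj (half_pos hε)
    refine ⟨u * star j, J.mul_mem_right _ hu, ?_⟩
    rw [dist_eq_norm, ← norm_star]
    have : star (star j - u * star j) = j * (1 - u) := by
      simp [mul_sub, husa.star_eq]
    rw [this]
    linarith
  rwa [hJ.closure_eq] at this

/-- The quotient norm turns `A ⧸ J` into a normed ring when `J` is a closed two-sided ideal. -/
noncomputable abbrev quotientNormedRing (J : Ideal A) [J.IsTwoSided] [IsClosed (J : Set A)] :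
    NormedRing (A ⧸ J) where
  __ := Submodule.Quotient.normedAddCommGroup J
  __ := Ideal.Quotient.ring J
  norm_mul_le x y := by
    refine le_of_forall_pos_le_add fun ε hε => ?_
    have := ((Metric.nhds_basis_ball.prod_nhds Metric.nhds_basis_ball).tendsto_iff
      Metric.nhds_basis_ball).mp (continuous_mul.tendsto (‖x‖, ‖y‖)) ε hε
    simp only [Set.mem_prod, Metric.mem_ball, and_imp, Prod.forall, Prod.exists] at this
    rcases this with ⟨ε₁, ε₂, ⟨h₁, h₂⟩, h⟩
    obtain ⟨a, rfl, ha⟩ := Submodule.Quotient.norm_mk_lt x h₁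
    obtain ⟨b, rfl, hb⟩ := Submodule.Quotient.norm_mk_lt y h₂
    simp only [dist, abs_sub_lt_iff] at h
    specialize h ‖a‖ ‖b‖ ⟨by linarith, by linarith [Submodule.Quotient.norm_mk_le J a]⟩
      ⟨by linarith, by linarith [Submodule.Quotient.norm_mk_le J b]⟩
    calc
      _ ≤ ‖a‖ * ‖b‖ := (Submodule.Quotient.norm_mk_le J (a * b)).trans (norm_mul_le a b)
      _ ≤ _ := (sub_lt_iff_lt_add'.mp h.1).le

/-- The involution of `A` descends to the quotient by a closed two-sided ideal. -/
noncomputable abbrev quotientStarRing (J : Ideal A) [J.IsTwoSided] [hJ : IsClosed (J : Set A)] :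
    StarRing (A ⧸ J) where
  star := Quotient.map' star fun a b h => by
    rw [Submodule.quotientRel_def] at h ⊢
    rw [← star_sub]
    exact star_mem_of_isClosed J hJ h
  star_involutive := by
    rintro ⟨a⟩
    exact congrArg (Ideal.Quotient.mk J) (star_star a)
  star_mul := by
    rintro ⟨a⟩ ⟨b⟩
    exact congrArg (Ideal.Quotient.mk J) (star_mul a b)
  star_add := by
    rintro ⟨a⟩ ⟨b⟩
    exact congrArg (Ideal.Quotient.mk J) (star_add a b)

/-- The C⋆-inequality for the quotient norm: a representative `c` of `star a * a` of almost minimal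
norm satisfies `star a * a - c ∈ J`, and multiplying `a` on the right by `1 - u`, with `u` a local
unit for `star a * a - c`, does not change the class of `a`. -/
theorem norm_mk_mul_self_le (J : Ideal A) [J.IsTwoSided] [IsClosed (J : Set A)] (a : A) :
    ‖(Submodule.Quotient.mk a : A ⧸ J)‖ * ‖(Submodule.Quotient.mk a : A ⧸ J)‖
      ≤ ‖(Submodule.Quotient.mk (star a * a) : A ⧸ J)‖ := by
  refine le_of_forall_pos_le_add fun ε hε => ?_
  obtain ⟨c, hc, hcn⟩ := Submodule.Quotient.norm_mk_lt
    (Submodule.Quotient.mk (star a * a) : A ⧸ J) (half_pos hε)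
  have hj : star a * a - c ∈ J := (Submodule.Quotient.eq J).1 hc.symm
  obtain ⟨u, huJ, husa, hu1, hu⟩ := exists_local_unit J hj (half_pos hε)
  have hmk : (Submodule.Quotient.mk a : A ⧸ J) = Submodule.Quotient.mk (a * (1 - u)) := by
    rw [Submodule.Quotient.eq]
    have : a - a * (1 - u) = a * u := by noncomm_ring
    rw [this]
    exact J.mul_mem_left _ huJ
  have h1 : ‖a * (1 - u)‖ * ‖a * (1 - u)‖ ≤ ‖c‖ + ε / 2 := by
    rw [← CStarRing.norm_star_mul_self, star_mul, star_sub, star_one, husa.star_eq]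
    have : (1 - u) * star a * (a * (1 - u))
        = (1 - u) * (c * (1 - u)) + (1 - u) * ((star a * a - c) * (1 - u)) := by noncomm_ring
    rw [this]
    refine (norm_add_le _ _).trans (add_le_add ?_ ?_)
    · calc _ ≤ ‖1 - u‖ * (‖c‖ * ‖1 - u‖) :=
            (norm_mul_le _ _).trans (by gcongr; exact norm_mul_le _ _)
        _ ≤ 1 * (‖c‖ * 1) := by gcongr
        _ = _ := by ring
    · calc _ ≤ ‖1 - u‖ * ‖(star a * a - c) * (1 - u)‖ := norm_mul_le _ _
        _ ≤ 1 * (ε / 2) := by gcongr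
        _ = _ := by ring
  have h2 := Submodule.Quotient.norm_mk_le J (a * (1 - u))
  rw [← hmk] at h2
  have h3 := mul_self_le_mul_self (norm_nonneg _) h2
  linarith

/-- The quotient of a C⋆-algebra by a closed two-sided ideal is a C⋆-algebra. -/
noncomputable abbrev quotientCStarAlgebra (J : Ideal A) [J.IsTwoSided] [IsClosed (J : Set A)] :
    CStarAlgebra (A ⧸ J) where
  __ := quotientNormedRing J
  __ := quotientStarRing J
  __ := Submodule.Quotient.completeSpace J
  __ := (Ideal.Quotient.algebra ℂ : Algebra ℂ (A ⧸ J))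
  norm_smul_le := (Submodule.Quotient.normedSpace J ℂ).norm_smul_le
  norm_mul_self_le := by
    rintro ⟨a⟩
    exact norm_mk_mul_self_le J a
  star_smul c := by
    rintro ⟨a⟩
    exact congrArg (Ideal.Quotient.mk J) (star_smul c a)

/-- The quotient C⋆-algebra, packaged by the properties used below. -/
theorem exists_quotient (J : Ideal A) [J.IsTwoSided] (hJ : IsClosed (J : Set A)) :
    ∃ (B : Type u) (_ : CStarAlgebra B) (π : A →⋆ₐ[ℂ] B), Function.Surjective π ∧
      (∀ a, π a = 0 ↔ a ∈ J) ∧ ∀ a, ‖π a‖ = Metric.infDist a J :=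
  have := hJ
  ⟨A ⧸ J, quotientCStarAlgebra J,
    letI := quotientCStarAlgebra J
    { Ideal.Quotient.mkₐ ℂ J with map_star' := fun _ => rfl },
    Ideal.Quotient.mk_surjective, fun _ => Ideal.Quotient.eq_zero_iff_mem,
    fun a => QuotientAddGroup.norm_mk (S := J.toAddSubgroup) a⟩

/-- Factorization of a `⋆`-homomorphism through a surjective one with smaller kernel. -/
theorem exists_factor {B D : Type*} [CStarAlgebra B] [CStarAlgebra D] (π : A →⋆ₐ[ℂ] B)
    (ρ : A →⋆ₐ[ℂ] D) (hπ : Function.Surjective π) (h : ∀ a, π a = 0 → ρ a = 0) :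
    ∃ φ : B →⋆ₐ[ℂ] D, ∀ a, φ (π a) = ρ a := by
  choose g hg using hπ
  have key : ∀ a a', π a = π a' → ρ a = ρ a' := fun a a' haa => by
    have := h (a - a') (by rw [map_sub, haa, sub_self])
    rwa [map_sub, sub_eq_zero] at this
  have hfac : ∀ a, ρ (g (π a)) = ρ a := fun a => key _ _ (hg _)
  refine ⟨
    { toFun := fun b => ρ (g b)
      map_one' := ?_
      map_mul' := ?_
      map_zero' := ?_
      map_add' := ?_
      commutes' := ?_
      map_star' := ?_ }, hfac⟩
  · rw [← map_one ρ]; exact key _ _ (by simp [hg])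
  · intro x y; rw [← map_mul ρ]; exact key _ _ (by simp [hg])
  · rw [← map_zero ρ]; exact key _ _ (by simp [hg])
  · intro x y; rw [← map_add ρ]; exact key _ _ (by simp [hg])
  · intro r
    rw [← AlgHomClass.commutes ρ]; exact key _ _ (by rw [hg, AlgHomClass.commutes π])
  · intro x; rw [← map_star ρ]; exact key _ _ (by simp [hg, map_star])

end Quot

/-! ### Lifting the inequality `a v a ≤ v` -/

section Corner

/-- `a` is a self-adjoint contraction that splits along the projection `q`: `a` commutes with `q`,
has norm `< 1` on the range of `q`, and is a symmetry (`a² = 1`) on the range of `1 - q`. Every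
self-adjoint contraction with finite spectrum splits in this way. -/
structure IsSplit {A : Type*} [CStarAlgebra A] (a q : A) : Prop where
  sa : IsSelfAdjoint a
  sq : IsSelfAdjoint q
  idem : q * q = q
  comm : a * q = q * a
  refl : a * a * (1 - q) = 1 - q
  norm_lt : ‖a * q‖ < 1

variable {B D : Type*} [CStarAlgebra B] [CStarAlgebra D]

theorem starAlgHom_continuous (φ : B →⋆ₐ[ℂ] D) : Continuous φ :=
  AddMonoidHomClass.continuous_of_bound φ 1 fun b => by
    simpa using NonUnitalStarAlgHom.norm_apply_le φ b

theorem IsSplit.map {a q : B} (h : IsSplit a q) (φ : B →⋆ₐ[ℂ] D) : IsSplit (φ a) (φ q) where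
  sa := h.sa.map φ
  sq := h.sq.map φ
  idem := by rw [← map_mul, h.idem]
  comm := by rw [← map_mul, ← map_mul, h.comm]
  refl := by rw [← map_one φ, ← map_sub, ← map_mul, ← map_mul, h.refl]
  norm_lt := by
    rw [← map_mul]
    exact (NonUnitalStarAlgHom.norm_apply_le φ _).trans_lt h.norm_lt

/-- The multiplication table of the projection `e = 1 - q` and the symmetry `s = a e` of its
corner. -/
theorem IsSplit.exists_reflection {a q : B} (h : IsSplit a q) :
    ∃ e s : B, e = 1 - q ∧ s = a * (1 - q) ∧ IsSelfAdjoint e ∧ IsSelfAdjoint s ∧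
      a * e = s ∧ e * a = s ∧ a * s = e ∧ s * a = e ∧ e * e = e ∧ s * s = e := by
  obtain ⟨sa, sq, idem, comm, hrefl, hn⟩ := h
  obtain ⟨e, he⟩ : ∃ e, e = 1 - q := ⟨_, rfl⟩
  obtain ⟨s, hs⟩ : ∃ s, s = a * e := ⟨_, rfl⟩
  have hesa : IsSelfAdjoint e := by rw [he]; exact (IsSelfAdjoint.one B).sub sq
  have hae : a * e = e * a := by rw [he, mul_sub, sub_mul, comm]; simp
  have hee : e * e = e := by rw [he]; simp [mul_sub, sub_mul, idem]
  have has : a * s = e := by rw [hs, ← mul_assoc, he, hrefl]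
  have hsa : s * a = e := by rw [hs, mul_assoc, ← hae, ← mul_assoc, he, hrefl]
  have hss : s * s = e := by
    conv_lhs => enter [2]; rw [hs]
    rw [← mul_assoc, hsa, hee]
  refine ⟨e, s, he, by rw [hs, he], hesa, ?_, hs.symm, by rw [hs, hae], has, hsa, hee, hss⟩
  rw [IsSelfAdjoint, hs, star_mul, sa.star_eq, hesa.star_eq, hae]

/-- If `a v a ≤ v` then `v` is block diagonal for `q + e = 1` and its `e`-block commutes with the
symmetry `s = a e`. Indeed compressing by `e` and by `s` gives opposite inequalities between
`e v e` and `s v s`, hence equality, so `(v - a v a) e = 0`; then the off-diagonal block `q v e` is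
fixed by left multiplication by `(a q)²`, a strict contraction. -/
theorem IsSplit.compression_eq [PartialOrder D] [StarOrderedRing D] {a q v : D} (h : IsSplit a q)
    (hv : IsSelfAdjoint v) (hav : a * v * a ≤ v) :
    q * v * q + (2⁻¹ : ℝ) • ((1 - q) * v * (1 - q) + (a * (1 - q)) * v * (a * (1 - q))) = v := by
  obtain ⟨e, s, he, hs, hesa, hssa, hae, hea, has, hsa, hee, hss⟩ := h.exists_reflection
  obtain ⟨sa, sq, idem, comm, hrefl, hn⟩ := h
  have hqe : q + e = 1 := by rw [he]; abel
  rw [← hs, ← he]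
  have hu : 0 ≤ v - a * v * a := sub_nonneg.2 hav
  have h1 : 0 ≤ e * (v - a * v * a) * e := by
    simpa only [hesa.star_eq] using star_left_conjugate_nonneg hu e
  have h2 : 0 ≤ s * (v - a * v * a) * s := by
    simpa only [hssa.star_eq] using star_left_conjugate_nonneg hu s
  have h1' : e * (v - a * v * a) * e = e * v * e - s * v * s := by
    calc _ = e * v * e - (e * a) * v * (a * e) := by noncomm_ring
      _ = _ := by rw [hae, hea]
  have h2' : s * (v - a * v * a) * s = s * v * s - e * v * e := by
    calc _ = s * v * s - (s * a) * v * (a * s) := by noncomm_ring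
      _ = _ := by rw [hsa, has]
  -- the two compressions are nonnegative and opposite to each other
  have h3 : e * v * e = s * v * s := by
    rw [h1'] at h1
    rw [h2'] at h2
    exact le_antisymm (sub_nonneg.1 h2) (sub_nonneg.1 h1)
  have h4 : (v - a * v * a) * e = 0 := by
    obtain ⟨w, hw⟩ : ∃ w : D, v - a * v * a = star w * w :=
      CStarAlgebra.nonneg_iff_eq_star_mul_self.1 hu
    have : star (w * e) * (w * e) = 0 := by
      rw [star_mul, hesa.star_eq]
      calc _ = e * (star w * w) * e := by noncomm_ring
        _ = 0 := by rw [← hw, h1', h3, sub_self]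
    rw [CStarRing.star_mul_self_eq_zero_iff] at this
    rw [hw, mul_assoc, this, mul_zero]
  have h5 : v * e = a * v * s := by
    have : v * e - a * v * (a * e) = 0 := by rw [← h4]; noncomm_ring
    rw [hae] at this
    exact sub_eq_zero.1 this
  have h6 : v * s = a * v * e := by
    calc v * s = v * e * a := by rw [← hea, mul_assoc]
      _ = a * v * (s * a) := by rw [h5, mul_assoc]
      _ = _ := by rw [hsa]
  -- the off-diagonal corner is fixed by the strict contraction `m ↦ (a q)² m`
  have h7 : q * v * e = (a * q) * (a * q) * (q * v * e) := by
    have hcc : (a * q) * (a * q) * q = q * a * a := by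
      calc (a * q) * (a * q) * q = a * q * a * (q * q) := by simp only [mul_assoc]
        _ = (a * q) * (a * q) := by rw [idem]; simp only [mul_assoc]
        _ = q * (a * q) * a := by conv_lhs => rw [comm, mul_assoc, ← mul_assoc a, ← mul_assoc]
        _ = (q * q) * a * a := by conv_lhs => rw [comm, ← mul_assoc]
        _ = q * a * a := by rw [idem]
    calc q * v * e = q * (v * e) := by rw [mul_assoc]
      _ = q * (a * (v * s)) := by rw [h5, mul_assoc a]
      _ = q * a * a * (v * e) := by rw [h6]; simp only [mul_assoc]
      _ = _ := by rw [← hcc]; simp only [mul_assoc]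
  have h8 : q * v * e = 0 := by
    by_contra hne
    have hpos : 0 < ‖q * v * e‖ := norm_pos_iff.2 hne
    have : ‖q * v * e‖ ≤ ‖a * q‖ * ‖a * q‖ * ‖q * v * e‖ := by
      conv_lhs => rw [h7]
      exact (norm_mul_le _ _).trans (by gcongr; exact norm_mul_le _ _)
    have h9 : ‖a * q‖ * ‖a * q‖ < 1 := by nlinarith [norm_nonneg (a * q)]
    nlinarith
  have h9 : e * v * q = 0 := by
    have := congrArg star h8
    simpa [star_mul, sq.star_eq, hesa.star_eq, hv.star_eq, mul_assoc] using this
  calc _ = q * v * q + e * v * e := by rw [← h3, ← two_smul ℝ (e * v * e), smul_smul]; norm_num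
    _ = q * v * q + e * v * e + q * v * e + e * v * q := by rw [h8, h9]; simp
    _ = (q + e) * v * (q + e) := by noncomm_ring
    _ = v := by rw [hqe]; simp

/-- The equation `k - a k a = g` for `g ≥ 0` in the corner of `q` is solved by the geometric series
`k = ∑ (a q) ^ j g (a q) ^ j`; it stays in the kernel of `φ` when `g` does. -/
theorem IsSplit.exists_sum [PartialOrder B] [StarOrderedRing B] {a q g : B} (h : IsSplit a q)
    (hg : 0 ≤ g) (hqg : q * g = g) (hgq : g * q = g) (φ : B →⋆ₐ[ℂ] D) (hφ : φ g = 0) :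
    ∃ k : B, 0 ≤ k ∧ φ k = 0 ∧ k - a * k * a = g := by
  obtain ⟨sa, sq, idem, comm, hrefl, hn⟩ := h
  obtain ⟨c, hc⟩ : ∃ c, c = a * q := ⟨_, rfl⟩
  have hcsa : IsSelfAdjoint c := by
    rw [IsSelfAdjoint, hc, star_mul, sa.star_eq, sq.star_eq, comm]
  rw [← hc] at hn
  have hcq : ∀ j : ℕ, Commute (c ^ j) q := fun j => by
    refine Commute.pow_left ?_ j
    rw [hc]
    exact Commute.mul_left comm (Commute.refl q)
  have hsum : Summable fun j : ℕ => c ^ j * g * c ^ j := by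
    refine Summable.of_norm_bounded_eventually_nat (g := fun j => (‖c‖ * ‖c‖) ^ j * ‖g‖) ?_ ?_
    · exact (summable_geometric_of_lt_one (by positivity)
        (by nlinarith [norm_nonneg c])).mul_right _
    · filter_upwards [Filter.eventually_gt_atTop 0] with j hj
      calc _ ≤ ‖c ^ j‖ * ‖g‖ * ‖c ^ j‖ := norm_mul₃_le
        _ ≤ ‖c‖ ^ j * ‖g‖ * ‖c‖ ^ j := by gcongr <;> exact norm_pow_le' c hj
        _ = _ := by rw [mul_pow]; ring
  have hshift : ∀ j : ℕ, a * (c ^ j * g * c ^ j) * a = c ^ (j + 1) * g * c ^ (j + 1) := fun j => by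
    calc _ = a * (c ^ j * (q * g * q) * c ^ j) * a := by rw [hqg, hgq]
      _ = a * ((c ^ j * q) * g * (q * c ^ j)) * a := by noncomm_ring
      _ = a * ((q * c ^ j) * g * (c ^ j * q)) * a := by rw [(hcq j).eq]
      _ = (a * q) * c ^ j * g * c ^ j * (q * a) := by noncomm_ring
      _ = _ := by rw [← comm, ← hc, pow_succ c j, ← pow_succ' c j]; rw [pow_succ c j]; noncomm_ring
  refine ⟨∑' j : ℕ, c ^ j * g * c ^ j, ?_, ?_, ?_⟩
  · have hcl : IsClosed {b : B | 0 ≤ b} := CStarAlgebra.isClosed_nonneg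
    refine hcl.mem_of_tendsto hsum.hasSum (Filter.Eventually.of_forall fun s => ?_)
    refine Finset.sum_nonneg fun j _ => ?_
    simpa only [(hcsa.pow j).star_eq] using star_left_conjugate_nonneg hg (c ^ j)
  · have := hsum.hasSum.map φ (starAlgHom_continuous φ)
    have h0 : (φ ∘ fun j : ℕ => c ^ j * g * c ^ j) = 0 := by
      ext j; simp [hφ]
    rw [h0] at this
    exact this.unique hasSum_zero
  · have h1 : a * (∑' j : ℕ, c ^ j * g * c ^ j) * a = ∑' j : ℕ, c ^ (j + 1) * g * c ^ (j + 1) := by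
      rw [← hsum.tsum_mul_left, ← (hsum.mul_left a).tsum_mul_right]
      exact tsum_congr hshift
    rw [h1, hsum.tsum_eq_zero_add]
    simp

/-- Lifting of the inequality `a v a ≤ v`. Given any self-adjoint lift `V ≥ δ`, its compression
`q V q + (e V e + s V s) / 2` still lifts `φ V` and satisfies the inequality on the `e`-block with
equality. On the `q`-block the failure is measured by `z = q (a V a - V) q`, whose positive part
`p` lies in the kernel of `φ`; adding `k` with `k - a k a = q p q` removes the failure. -/
theorem IsSplit.exists_lift [PartialOrder B] [StarOrderedRing B] [PartialOrder D]
    [StarOrderedRing D] {a q : B} (h : IsSplit a q) (φ : B →⋆ₐ[ℂ] D) {V : B} {δ : ℝ}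
    (hV : algebraMap ℝ B δ ≤ V) (hV0 : IsSelfAdjoint V) (hle : φ a * φ V * φ a ≤ φ V) :
    ∃ v : B, algebraMap ℝ B δ ≤ v ∧ φ v = φ V ∧ a * v * a ≤ v := by
  have hcomp := (h.map φ).compression_eq (hV0.map φ) hle
  obtain ⟨e, s, he, hs, hesa, hssa, hae, hea, has, hsa, hee, hss⟩ := h.exists_reflection
  have hh := h
  obtain ⟨sa, sq, idem, comm, hrefl, hn⟩ := h
  have hqe : q + e = 1 := by rw [he]; abel
  -- the defect of `V` on the corner cut out by `q`, and its positive part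
  obtain ⟨z, hz⟩ : ∃ z, z = q * (a * V * a - V) * q := ⟨_, rfl⟩
  have hzsa : IsSelfAdjoint z := by
    rw [IsSelfAdjoint, hz]
    simp [star_mul, sa.star_eq, sq.star_eq, hV0.star_eq, mul_assoc]
  obtain ⟨p, hp⟩ : ∃ p, p = cfc (fun x : ℝ => max x 0) z := ⟨_, rfl⟩
  have hp0 : 0 ≤ p := by
    rw [hp]; exact cfc_nonneg fun x _ => le_max_right _ _
  have hzp : z ≤ p := by
    conv_lhs => rw [← cfc_id' ℝ z]
    rw [hp]
    exact cfc_mono fun x _ => le_max_left _ _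
  have hφz : φ z ≤ 0 := by
    have : 0 ≤ φ q * (φ V - φ a * φ V * φ a) * φ q := by
      simpa only [(sq.map φ).star_eq] using star_left_conjugate_nonneg (sub_nonneg.2 hle) (φ q)
    rw [← neg_nonneg]
    refine this.trans_eq ?_
    rw [hz]; simp only [map_mul, map_sub]; noncomm_ring
  have hφp : φ p = 0 := by
    rw [hp, StarAlgHomClass.map_cfc φ _ z (by fun_prop) (starAlgHom_continuous φ) hzsa (hzsa.map φ)]
    rw [← cfc_const_zero ℝ (φ z)]
    refine cfc_congr fun x hx => ?_
    have hx0 : x ≤ 0 := (le_algebraMap_iff_spectrum_le (r := (0 : ℝ)) (hzsa.map φ)).1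
      (by simpa using hφz) x hx
    exact max_eq_right hx0
  obtain ⟨k, hk0, hφk, hk⟩ := hh.exists_sum (φ := φ) (g := q * p * q)
    (by simpa only [sq.star_eq] using star_left_conjugate_nonneg hp0 q)
    (by rw [← mul_assoc, ← mul_assoc, idem]) (by rw [mul_assoc, idem]) (by simp [hφp])
  refine ⟨q * V * q + (2⁻¹ : ℝ) • (e * V * e + s * V * s) + k, ?_, ?_, ?_⟩
  · rw [← sub_nonneg]
    have hVδ := sub_nonneg.2 hV
    have hdec : q * V * q + (2⁻¹ : ℝ) • (e * V * e + s * V * s) + k - algebraMap ℝ B δ =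
        q * (V - algebraMap ℝ B δ) * q + (2⁻¹ : ℝ) • (e * (V - algebraMap ℝ B δ) * e
          + s * (V - algebraMap ℝ B δ) * s) + k := by
      have h1 : algebraMap ℝ B δ = δ • q + δ • e := by
        rw [← smul_add, hqe, Algebra.algebraMap_eq_smul_one]
      have h2 : ∀ w : B, w * algebraMap ℝ B δ * w = δ • (w * w) := fun w => by
        simp [Algebra.algebraMap_eq_smul_one]
      simp only [mul_sub, sub_mul, h2, idem, hee, hss]
      rw [h1]
      module
    rw [hdec]
    refine add_nonneg (add_nonneg ?_ (smul_nonneg (by norm_num) (add_nonneg ?_ ?_))) hk0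
    · simpa only [sq.star_eq] using star_left_conjugate_nonneg hVδ q
    · simpa only [hesa.star_eq] using star_left_conjugate_nonneg hVδ e
    · simpa only [hssa.star_eq] using star_left_conjugate_nonneg hVδ s
  · rw [map_add, hφk, add_zero]
    conv_rhs => rw [← hcomp]
    rw [he, hs]
    have hsm : ∀ w : B, φ ((2⁻¹ : ℝ) • w) = (2⁻¹ : ℝ) • φ w := fun w =>
      map_smul (φ : B →ₗ[ℂ] D) ((2⁻¹ : ℝ) : ℂ) w
    simp only [map_add, hsm, map_mul, map_sub, map_one]
  · rw [← sub_nonneg]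
    have hdec : q * V * q + (2⁻¹ : ℝ) • (e * V * e + s * V * s) + k
        - a * (q * V * q + (2⁻¹ : ℝ) • (e * V * e + s * V * s) + k) * a
        = q * (p - z) * q := by
      have t1 : a * (q * V * q) * a = q * (a * V * a) * q := by
        calc _ = (a * q) * V * (q * a) := by simp only [mul_assoc]
          _ = (q * a) * V * (a * q) := by rw [comm]
          _ = _ := by simp only [mul_assoc]
      have t2 : a * (e * V * e) * a = s * V * s := by
        calc _ = (a * e) * V * (e * a) := by simp only [mul_assoc]
          _ = _ := by rw [hae, hea]
      have t3 : a * (s * V * s) * a = e * V * e := by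
        calc _ = (a * s) * V * (s * a) := by simp only [mul_assoc]
          _ = _ := by rw [has, hsa]
      have t4 : q * z * q = q * (a * V * a) * q - q * V * q := by
        calc _ = (q * q) * (a * V * a - V) * (q * q) := by rw [hz]; simp only [mul_assoc]
          _ = _ := by rw [idem, mul_sub, sub_mul]
      have t5 : q * (p - z) * q = (k - a * k * a) - q * z * q := by
        rw [hk, mul_sub, sub_mul]
      rw [t5, t4]
      simp only [mul_add, add_mul, mul_smul_comm, smul_mul_assoc, t1, t2, t3, smul_add]
      abel
    rw [hdec]
    simpa only [sq.star_eq] using star_left_conjugate_nonneg (sub_nonneg.2 hzp) q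

end Corner

/-! ### Rounding spectra and similarity to self-adjoint elements -/

section Lifting

open Polynomial

/-- Near the zeros of `∏ (X - τ)` the function rounding to the nearest zero is well defined and
locally constant, and smallness of the polynomial forces nearness to a zero. -/
theorem exists_rounding (T : Finset ℝ) : ∃ ε > 0, ∃ f : ℝ → ℝ, (∀ τ ∈ T, f τ = τ) ∧
    ContinuousOn f {x | |(∏ τ ∈ T, (X - C τ)).eval x| < ε} ∧
    ∀ x, |(∏ τ ∈ T, (X - C τ)).eval x| < ε → f x ∈ T := by
  classical
  obtain ⟨d, hd, hsep⟩ : ∃ d > 0, ∀ τ ∈ T, ∀ τ' ∈ T, |τ - τ'| < 2 * d → τ = τ' := by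
    have hfin : ∀ᶠ d : ℝ in nhdsWithin 0 (Set.Ioi 0),
        ∀ τ ∈ T, ∀ τ' ∈ T, |τ - τ'| < 2 * d → τ = τ' := by
      refine (Filter.eventually_all_finset T).2 fun τ _ =>
        (Filter.eventually_all_finset T).2 fun τ' _ => ?_
      by_cases h : τ = τ'
      · exact Filter.Eventually.of_forall fun _ _ => h
      · have hpos : 0 < |τ - τ'| / 2 := by
          have := abs_pos.2 (sub_ne_zero.2 h)
          positivity
        filter_upwards [Ioo_mem_nhdsGT hpos] with d hd hlt
        have := hd.2
        linarith
    obtain ⟨d, hd, hd0⟩ := (hfin.and self_mem_nhdsWithin).exists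
    exact ⟨d, hd0, hd⟩
  let f : ℝ → ℝ := fun x => if h : ∃ τ ∈ T, |x - τ| < d then h.choose else 0
  have hf : ∀ τ ∈ T, ∀ x, |x - τ| < d → f x = τ := fun τ hτ x hx => by
    have h : ∃ τ ∈ T, |x - τ| < d := ⟨τ, hτ, hx⟩
    have h1 := h.choose_spec
    simp only [f, dif_pos h]
    refine hsep _ h1.1 _ hτ ?_
    have := abs_sub_le h.choose x τ
    rw [abs_sub_comm h.choose x] at this
    linarith [h1.2]
  have hnear : ∀ x, |(∏ τ ∈ T, (X - C τ)).eval x| < d ^ T.card → ∃ τ ∈ T, |x - τ| < d := by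
    intro x hx
    by_contra! hcon
    refine absurd hx (not_lt.2 ?_)
    rw [eval_prod, Finset.abs_prod, ← Finset.prod_const]
    refine Finset.prod_le_prod (fun _ _ => hd.le) fun τ hτ => ?_
    simpa using hcon τ hτ
  refine ⟨d ^ T.card, by positivity, f, fun τ hτ => hf τ hτ τ (by simpa using hd), ?_, ?_⟩
  · intro x hx
    obtain ⟨τ, hτ, hxτ⟩ := hnear x hx
    refine ContinuousAt.continuousWithinAt ?_
    have hev : f =ᶠ[nhds x] fun _ => τ := by
      have : {y : ℝ | |y - τ| < d} ∈ nhds x :=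
        (isOpen_lt (by fun_prop) continuous_const).mem_nhds hxτ
      filter_upwards [this] with y hy using hf τ hτ y hy
    exact continuousAt_const.congr hev.symm
  · intro x hx
    obtain ⟨τ, hτ, hxτ⟩ := hnear x hx
    rw [hf τ hτ x hxτ]
    exact hτ

variable {B D : Type*} [CStarAlgebra B] [CStarAlgebra D]

theorem map_aeval_real (φ : B →⋆ₐ[ℂ] D) (p : ℝ[X]) (b : B) :
    φ (aeval b p) = aeval (φ b) p :=
  (aeval_algHom_apply ((φ : B →ₐ[ℂ] D).restrictScalars ℝ) b p).symm

theorem abs_eval_le {b : B} (hb : IsSelfAdjoint b) (p : ℝ[X]) {x : ℝ} (hx : x ∈ spectrum ℝ b) :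
    |p.eval x| ≤ ‖aeval b p‖ := by
  rw [← cfc_polynomial p b hb, ← Real.norm_eq_abs]
  exact norm_apply_le_norm_cfc (fun x => p.eval x) b hx (by fun_prop) hb

/-- A self-adjoint lift `b` on which the polynomial `∏ (X - τ)` is almost zero can be corrected,
by rounding its spectrum, to a lift whose spectrum lies in `T`. -/
theorem exists_selfAdjoint_lift_s9 {T : Finset ℝ} {ε : ℝ} {f : ℝ → ℝ} (hfT : ∀ τ ∈ T, f τ = τ)
    (hfc : ContinuousOn f {x | |(∏ τ ∈ T, (X - C τ)).eval x| < ε})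
    (hfm : ∀ x, |(∏ τ ∈ T, (X - C τ)).eval x| < ε → f x ∈ T)
    (φ : B →⋆ₐ[ℂ] D) {b : B} (hb : IsSelfAdjoint b) (hbε : ‖aeval b (∏ τ ∈ T, (X - C τ))‖ < ε)
    (hspec : spectrum ℝ (φ b) ⊆ T) :
    ∃ a : B, IsSelfAdjoint a ∧ spectrum ℝ a ⊆ T ∧ φ a = φ b := by
  have hsub : spectrum ℝ b ⊆ {x | |(∏ τ ∈ T, (X - C τ)).eval x| < ε} := fun x hx =>
    (abs_eval_le hb _ hx).trans_lt hbε
  have hc := hfc.mono hsub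
  refine ⟨cfc f b, cfc_predicate _ _, ?_, ?_⟩
  · rw [cfc_map_spectrum f b hb hc]
    rintro _ ⟨x, hx, rfl⟩
    exact hfm x (hsub hx)
  · rw [StarAlgHomClass.map_cfc φ f b hc (starAlgHom_continuous φ) hb (hb.map φ)]
    conv_rhs => rw [← cfc_id' ℝ (φ b) (hb.map φ)]
    exact cfc_congr fun x hx => hfT x (hspec hx)

/-- A self-adjoint element with finite spectrum in `[-c, c]`, divided by `c`, splits along its
spectral projection for `(-c, c)`. -/
theorem exists_isSplit {c : ℝ} (hc : 0 < c) {T : Finset ℝ} (hT : ∀ τ ∈ T, |τ| ≤ c) {a : B}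
    (ha : IsSelfAdjoint a) (hspec : spectrum ℝ a ⊆ T) : ∃ q, IsSplit (c⁻¹ • a) q := by
  classical
  have hcont : ∀ f : ℝ → ℝ, ContinuousOn f (spectrum ℝ a) := fun f =>
    (T.finite_toSet.subset hspec).continuousOn f
  obtain ⟨f, hf⟩ : ∃ f : ℝ → ℝ, f = fun x => if |x| < c then 1 else 0 := ⟨_, rfl⟩
  have hca : c⁻¹ • a = cfc (fun x : ℝ => c⁻¹ * x) a := (cfc_const_mul_id c⁻¹ a ha).symm
  have hmul : c⁻¹ • a * cfc f a = cfc (fun x => c⁻¹ * x * f x) a := by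
    rw [hca, ← cfc_mul _ _ a (hcont _) (hcont _)]
  refine ⟨cfc f a, ?_, cfc_predicate _ _, ?_, ?_, ?_, ?_⟩
  · rw [hca]; exact cfc_predicate _ _
  · rw [← cfc_mul _ _ a (hcont _) (hcont _)]
    refine cfc_congr fun x _ => ?_
    simp only [hf]
    split_ifs <;> simp
  · rw [hca]; exact cfc_commute_cfc _ _ _
  · rw [hca, ← cfc_const_one ℝ a, ← cfc_sub _ _ a (hcont _) (hcont _),
      ← cfc_mul _ _ a (hcont _) (hcont _), ← cfc_mul _ _ a (hcont _) (hcont _)]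
    refine cfc_congr fun x hx => ?_
    have hxc := hT x (hspec hx)
    simp only [hf]
    split_ifs with h
    · simp
    · have h2 : x * x = c * c := by
        rw [← abs_mul_abs_self x, le_antisymm hxc (not_lt.1 h)]
      field_simp
      linear_combination h2
  · rw [hmul]
    refine norm_cfc_lt one_pos fun x hx => ?_
    simp only [hf]
    split_ifs with h
    · rw [mul_one, norm_mul, norm_inv, Real.norm_of_nonneg hc.le, Real.norm_eq_abs,
        inv_mul_lt_one₀ hc]
      exact h
    · simp

theorem aeval_semiconj {a y r : B} (h : y * r = r * a) (p : ℝ[X]) :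
    aeval y p * r = r * aeval a p := by
  induction p using Polynomial.induction_on' with
  | add p q hp hq => simp only [map_add, add_mul, mul_add, hp, hq]
  | monomial n c =>
    have hpow : y ^ n * r = r * a ^ n :=
      (SemiconjBy.pow_right (show SemiconjBy r a y from h.symm) n).eq.symm
    rw [aeval_monomial, aeval_monomial, mul_assoc, hpow, ← mul_assoc, ← mul_assoc,
      Algebra.commutes]

/-- With `a` self-adjoint and `v = s²`, the element `y = s a s⁻¹` has norm `≤ c` exactly when
`a v a ≤ c² v`. So lifting `x = r (φ a) r⁻¹` with its norm bound amounts to lifting `r²` to a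
strictly positive `v` satisfying this inequality. -/
theorem exists_lift_of_selfAdjoint [PartialOrder B] [StarOrderedRing B] [PartialOrder D]
    [StarOrderedRing D] {c : ℝ} (hc : 0 < c) {T : Finset ℝ} (hT : ∀ τ ∈ T, |τ| ≤ c)
    (φ : B →⋆ₐ[ℂ] D) (hφ : Function.Surjective φ) {a : B} (ha : IsSelfAdjoint a)
    (hspec : spectrum ℝ a ⊆ T) {r : D} (hr : 0 ≤ r) {δ : ℝ} (hδ : 0 < δ)
    (hδr : algebraMap ℝ D δ ≤ r * r) (hle : φ a * (r * r) * φ a ≤ c ^ 2 • (r * r)) :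
    ∃ y s : B, IsUnit s ∧ φ s = r ∧ y * s = s * a ∧ ‖y‖ ≤ c := by
  obtain ⟨q, hq⟩ := exists_isSplit hc hT ha hspec
  have hφsm : ∀ (x : ℝ) (w : B), φ (x • w) = x • φ w := fun x w =>
    map_smul (φ : B →ₗ[ℂ] D) (x : ℂ) w
  obtain ⟨V, hV, hV0, hVr⟩ : ∃ V : B, algebraMap ℝ B δ ≤ V ∧ IsSelfAdjoint V ∧ φ V = r * r := by
    obtain ⟨w, hw⟩ := CStarAlgebra.nonneg_iff_eq_star_mul_self.1 (sub_nonneg.2 hδr)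
    obtain ⟨W, rfl⟩ := hφ w
    refine ⟨algebraMap ℝ B δ + star W * W, le_add_of_nonneg_right (star_mul_self_nonneg W),
      (IsSelfAdjoint.algebraMap B (.all δ)).add (.star_mul_self W), ?_⟩
    rw [map_add, map_mul, map_star, ← hw, Algebra.algebraMap_eq_smul_one, hφsm, map_one,
      Algebra.algebraMap_eq_smul_one]
    abel
  obtain ⟨v, hδv, hφv, hav⟩ := hq.exists_lift φ hV hV0 (by
    rw [hVr, hφsm, smul_mul_assoc, smul_mul_assoc, mul_smul_comm, smul_smul]
    calc _ ≤ (c⁻¹ * c⁻¹) • (c ^ 2 • (r * r)) := smul_le_smul_of_nonneg_left hle (by positivity)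
      _ = r * r := by
        rw [smul_smul, show c⁻¹ * c⁻¹ * c ^ 2 = 1 by field_simp, one_smul])
  have hδ0 : 0 ≤ algebraMap ℝ B δ := algebraMap_nonneg B hδ.le
  have hv0 : 0 ≤ v := hδ0.trans hδv
  have hvu : IsUnit v := CStarAlgebra.isUnit_of_le (algebraMap ℝ B δ) hδv
    (IsStrictlyPositive.iff_of_unital.2 ⟨hδ0, (IsUnit.mk0 δ hδ.ne').map (algebraMap ℝ B)⟩)
  obtain ⟨s, hs⟩ : ∃ s, s = CFC.sqrt v := ⟨_, rfl⟩
  have hss : s * s = v := by rw [hs, CFC.sqrt_mul_sqrt_self v]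
  have hs0 : 0 ≤ s := by rw [hs]; exact CFC.sqrt_nonneg v
  have hsu : IsUnit s := by rw [hs]; exact (CFC.isUnit_sqrt_iff v).2 hvu
  have hφs : φ s = r := by
    have h0 : 0 ≤ φ s := by
      obtain ⟨w, hw⟩ := CStarAlgebra.nonneg_iff_eq_star_mul_self.1 hs0
      rw [hw, map_mul, map_star]
      exact star_mul_self_nonneg _
    rw [← CFC.sqrt_mul_self (φ s) h0, ← map_mul, hss, hφv, hVr, CFC.sqrt_mul_self r hr]
  obtain ⟨u, rfl⟩ := hsu
  have husa : IsSelfAdjoint (u : B) := .of_nonneg hs0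
  have hisa : star (↑u⁻¹ : B) = ↑u⁻¹ := by
    rw [← Units.coe_star_inv, Units.inv_unique]
    exact husa.star_eq
  refine ⟨u * a * ↑u⁻¹, u, u.isUnit, hφs, by simp, ?_⟩
  have hav' : a * v * a ≤ c ^ 2 • v := by
    rw [smul_mul_assoc, smul_mul_assoc, mul_smul_comm, smul_smul] at hav
    calc a * v * a = c ^ 2 • ((c⁻¹ * c⁻¹) • (a * v * a)) := by
          rw [smul_smul, show c ^ 2 * (c⁻¹ * c⁻¹) = 1 by field_simp, one_smul]
      _ ≤ _ := smul_le_smul_of_nonneg_left hav (by positivity)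
  have hyy : star (↑u * a * ↑u⁻¹) * (↑u * a * ↑u⁻¹) ≤ algebraMap ℝ B (c ^ 2) := by
    calc star (↑u * a * ↑u⁻¹) * (↑u * a * ↑u⁻¹) = ↑u⁻¹ * (a * (u * u) * a) * ↑u⁻¹ := by
          simp only [star_mul, hisa, ha.star_eq, husa.star_eq, mul_assoc]
      _ ≤ ↑u⁻¹ * (c ^ 2 • v) * ↑u⁻¹ := by
        rw [hss]
        simpa only [hisa] using star_left_conjugate_le_conjugate hav' (↑u⁻¹ : B)
      _ = algebraMap ℝ B (c ^ 2) := by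
        rw [← hss, Algebra.algebraMap_eq_smul_one]
        simp
  have hn := (CStarAlgebra.norm_le_iff_le_algebraMap _ (by positivity)
    (star_mul_self_nonneg (↑u * a * ↑u⁻¹))).2 hyy
  rw [CStarRing.norm_star_mul_self] at hn
  exact abs_le_of_sq_le_sq' (by linarith) hc.le |>.2

/-- An element annihilated by a polynomial with distinct real roots is similar, through a positive
invertible `r`, to a self-adjoint element. With `L i` the Lagrange idempotents evaluated at `x`,
the positive invertible `w = ∑ star (L i) * L i` satisfies `w x = star x w`, and `r` is the inverse
of the square root of `w`. The last two conclusions express `‖x‖ ≤ c` and `p(x) = 0`. -/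
theorem exists_similar_selfAdjoint [PartialOrder D] [StarOrderedRing D] {n : ℕ} {t : Fin n → ℝ}
    (ht : Function.Injective t) {c : ℝ} {x : D}
    (hx : aeval x (Lagrange.nodal Finset.univ t) = 0) (hxc : ‖x‖ ≤ c) :
    ∃ a r : D, ∃ δ > 0, IsSelfAdjoint a ∧ 0 ≤ r ∧ IsUnit r ∧ x * r = r * a ∧
      algebraMap ℝ D δ ≤ r * r ∧ a * (r * r) * a ≤ c ^ 2 • (r * r) ∧
      ∀ τ ∈ spectrum ℝ a, τ ∈ Set.range t ∧ |τ| ≤ c := by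
  classical
  obtain ⟨w, hw0, hwu, hwx⟩ : ∃ w : D, 0 ≤ w ∧ IsUnit w ∧ w * x = star x * w := by
    obtain ⟨L, hL⟩ : ∃ L : Fin n → D, L = fun i => aeval x (Lagrange.basis Finset.univ t i) :=
      ⟨_, rfl⟩
    have hLx : ∀ i, L i * x = t i • L i := fun i => by
      have h1 : aeval x (Lagrange.basis Finset.univ t i * (X - C (t i))) = 0 := by
        rw [Lagrange.basis_eq_prod_sub_inv_mul_nodal_div (Finset.mem_univ i),
          ← Lagrange.nodal_erase_eq_nodal_div (Finset.mem_univ i), mul_assoc,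
          mul_comm (Lagrange.nodal _ _), ← Lagrange.nodal_eq_mul_nodal_erase (Finset.mem_univ i),
          map_mul, hx, mul_zero]
      rw [map_mul, map_sub, aeval_X, aeval_C, mul_sub, sub_eq_zero, ← Algebra.commutes,
        ← Algebra.smul_def] at h1
      simpa only [hL] using h1
    have hLsum : (∑ i, L i) = 1 := by
      rcases n.eq_zero_or_pos with rfl | hn
      · simp [Lagrange.nodal] at hx
        simp [hx]
      · have : NeZero n := ⟨hn.ne'⟩
        simp only [hL]
        rw [← map_sum, Lagrange.sum_basis ht.injOn Finset.univ_nonempty, map_one]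
    refine ⟨∑ i, star (L i) * L i, Finset.sum_nonneg fun i _ => star_mul_self_nonneg _, ?_, ?_⟩
    -- Cauchy–Schwarz: `1 = star (∑ L i) * (∑ L i) ≤ n ∑ star (L i) * L i`
    · have hcs : 1 ≤ (n : D) * ∑ i, star (L i) * L i := by
        have h2 : 0 ≤ ∑ i, ∑ j, star (L i - L j) * (L i - L j) :=
          Finset.sum_nonneg fun i _ => Finset.sum_nonneg fun j _ => star_mul_self_nonneg _
        have h3 : ∑ i, ∑ j, star (L i - L j) * (L i - L j)
            = (2 : ℝ) • ((n : D) * (∑ i, star (L i) * L i) - 1) := by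
          have h4 : ∑ i, ∑ j, star (L i) * L j = 1 := by
            simp_rw [← Finset.mul_sum, hLsum, mul_one, ← star_sum, hLsum, star_one]
          have h5 : ∑ i, ∑ j, star (L j) * L i = 1 := by rw [Finset.sum_comm, h4]
          simp only [star_sub, sub_mul, mul_sub, Finset.sum_sub_distrib, h4, h5]
          simp only [Finset.sum_const, Finset.card_univ, Fintype.card_fin, nsmul_eq_mul]
          rw [two_smul, ← Finset.mul_sum]
          abel
        rw [h3] at h2
        have := smul_nonneg (by norm_num : (0 : ℝ) ≤ 2⁻¹) h2
        rw [smul_smul] at this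
        norm_num at this
        exact this
      have := CStarAlgebra.isUnit_of_le 1 hcs isStrictlyPositive_one
      exact ((Nat.cast_commute n _).isUnit_mul_iff.1 this).2
    · rw [Finset.sum_mul, Finset.mul_sum]
      refine Finset.sum_congr rfl fun i _ => ?_
      have h1 := congrArg star (hLx i)
      rw [star_mul, star_smul, star_trivial (t i)] at h1
      rw [mul_assoc, hLx, ← mul_assoc, h1, mul_smul_comm, smul_mul_assoc]
  obtain ⟨s, hs⟩ : ∃ s, s = CFC.sqrt w := ⟨_, rfl⟩
  have hss : s * s = w := by rw [hs, CFC.sqrt_mul_sqrt_self w]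
  have hs0 : 0 ≤ s := by rw [hs]; exact CFC.sqrt_nonneg w
  have hsu : IsUnit s := by rw [hs]; exact (CFC.isUnit_sqrt_iff w).2 hwu
  obtain ⟨u, rfl⟩ := hsu
  have husa : IsSelfAdjoint (u : D) := .of_nonneg hs0
  have hisa : star (↑u⁻¹ : D) = ↑u⁻¹ := by
    rw [← Units.coe_star_inv, Units.inv_unique]
    exact husa.star_eq
  have hr0 : (0 : D) ≤ ↑u⁻¹ := by
    have := star_left_conjugate_nonneg hs0 (↑u⁻¹ : D)
    simpa [hisa] using this
  have hrr : IsStrictlyPositive ((↑u⁻¹ : D) * ↑u⁻¹) := by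
    rw [IsStrictlyPositive.iff_of_unital]
    refine ⟨?_, u⁻¹.isUnit.mul u⁻¹.isUnit⟩
    have := star_mul_self_nonneg (↑u⁻¹ : D)
    rwa [hisa] at this
  obtain ⟨δ, hδ, hδr⟩ : ∃ δ > 0, algebraMap ℝ D δ ≤ (↑u⁻¹ : D) * ↑u⁻¹ := by
    rcases subsingleton_or_nontrivial D with h | h
    · exact ⟨1, one_pos, (Subsingleton.elim _ _).le⟩
    · exact (CFC.exists_pos_algebraMap_le_iff hrr.isSelfAdjoint).2 fun x hx => hrr.spectrum_pos hx
  have hsa : star (↑u * x * ↑u⁻¹ : D) = ↑u * x * ↑u⁻¹ := by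
    rw [star_mul, star_mul, hisa, husa.star_eq]
    calc ↑u⁻¹ * (star x * ↑u) = ↑u⁻¹ * (star x * (↑u * ↑u)) * ↑u⁻¹ := by simp [mul_assoc]
      _ = ↑u⁻¹ * ((↑u * ↑u) * x) * ↑u⁻¹ := by rw [hss, hwx]
      _ = _ := by simp [← mul_assoc]
  refine ⟨(u : D) * x * ((u⁻¹ : Dˣ) : D), ((u⁻¹ : Dˣ) : D), δ, hδ, hsa, hr0, u⁻¹.isUnit,
    by simp [← mul_assoc], hδr, ?_, ?_⟩
  · calc ↑u * x * ↑u⁻¹ * (↑u⁻¹ * ↑u⁻¹) * (↑u * x * ↑u⁻¹)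
        = star (↑u * x * ↑u⁻¹) * (↑u⁻¹ * ↑u⁻¹) * (↑u * x * ↑u⁻¹) := by rw [hsa]
      _ = ↑u⁻¹ * (star x * x) * ↑u⁻¹ := by
        rw [star_mul, star_mul, hisa, husa.star_eq]
        simp [mul_assoc]
      _ ≤ ↑u⁻¹ * (algebraMap ℝ D (c ^ 2)) * ↑u⁻¹ := by
        have h1 : star x * x ≤ algebraMap ℝ D (c ^ 2) := by
          refine CStarAlgebra.star_mul_le_algebraMap_norm_sq.trans ?_
          exact algebraMap_mono D (by gcongr)
        simpa only [hisa] using star_left_conjugate_le_conjugate h1 (↑u⁻¹ : D)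
      _ = _ := by simp [Algebra.algebraMap_eq_smul_one]
  · intro τ hτ
    rw [spectrum.units_conjugate] at hτ
    rcases subsingleton_or_nontrivial D with h | h
    · simp at hτ
    have h1 := spectrum.norm_le_norm_of_mem hτ
    have h2 := spectrum.subset_polynomial_aeval x (Lagrange.nodal Finset.univ t) ⟨τ, hτ, rfl⟩
    rw [hx, spectrum.zero_eq, Set.mem_singleton_iff] at h2
    simp only [Lagrange.eval_nodal, Finset.prod_eq_zero_iff, Finset.mem_univ, true_and] at h2
    obtain ⟨i, hi⟩ := h2
    exact ⟨⟨i, (sub_eq_zero.1 hi).symm⟩, h1.trans hxc⟩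

theorem aeval_eq_zero_of_spectrum {a : B} (ha : IsSelfAdjoint a) (p : ℝ[X])
    (h : ∀ x ∈ spectrum ℝ a, p.eval x = 0) : aeval a p = 0 := by
  rw [← cfc_polynomial p a ha, ← cfc_const_zero ℝ a]
  exact cfc_congr fun x hx => h x hx

theorem list_prod_eq_aeval {n : ℕ} (t : Fin n → ℝ) (x : B) :
    (List.ofFn fun i => x - (t i : ℂ) • 1).prod = aeval x (Lagrange.nodal Finset.univ t) := by
  rw [Lagrange.nodal, ← List.prod_ofFn, map_list_prod, List.map_ofFn]
  congr 2
  ext i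
  simp [Algebra.algebraMap_eq_smul_one]

theorem map_list_prod_sub {n : ℕ} (t : Fin n → ℝ) (φ : B →⋆ₐ[ℂ] D) (x : B) :
    φ (List.ofFn fun i => x - (t i : ℂ) • 1).prod =
      aeval (φ x) (Lagrange.nodal Finset.univ t) := by
  rw [list_prod_eq_aeval, map_aeval_real]

end Lifting

/-! ### The lifting theorem -/

/-- The closure of the union of an increasing sequence of two-sided ideals, as an ideal. -/
theorem exists_ideal_closure {A : Type*} [CStarAlgebra A] (I : ℕ → TwoSidedIdeal A)
    (hImono : ∀ M N, M ≤ N → (I M : Set A) ⊆ (I N : Set A)) :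
    ∃ J : Ideal A, J.IsTwoSided ∧ (J : Set A) = closure (⋃ N, (I N : Set A)) := by
  refine ⟨⟨⟨⟨closure (⋃ N, (I N : Set A)), ?_⟩, ?_⟩, ?_⟩, ⟨?_⟩, rfl⟩
  · intro x y hx hy
    refine map_mem_closure₂ continuous_add hx hy fun x hx y hy => ?_
    obtain ⟨M, hM⟩ := Set.mem_iUnion.1 hx
    obtain ⟨N, hN⟩ := Set.mem_iUnion.1 hy
    exact Set.mem_iUnion.2 ⟨max M N, (I _).add_mem (hImono _ _ (le_max_left _ _) hM)
      (hImono _ _ (le_max_right _ _) hN)⟩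
  · exact subset_closure (Set.mem_iUnion.2 ⟨0, (I 0).zero_mem⟩)
  · intro c x hx
    refine map_mem_closure (continuous_const_mul c) hx fun x hx => ?_
    obtain ⟨N, hN⟩ := Set.mem_iUnion.1 hx
    exact Set.mem_iUnion.2 ⟨N, (I N).mul_mem_left _ _ hN⟩
  · intro x c hx
    refine map_mem_closure (f := fun x => x * c) (continuous_mul_const c) hx fun x hx => ?_
    obtain ⟨N, hN⟩ := Set.mem_iUnion.1 hx
    exact Set.mem_iUnion.2 ⟨N, (I N).mul_mem_right _ _ hN⟩

/-- Let `p(t) = (t−t₁)⋯(t−tₙ)` with distinct real roots and `C > 0`. The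
relation `p(x) = 0, ‖x‖ ≤ C` is stable (its universal C*-algebra is semiprojective): for
every C*-algebra `A` and increasing chain of closed two-sided ideals `I₁ ⊆ I₂ ⊆ ⋯` with
`I = closure (⋃ I_N)`, every element of `A/I` annihilated by `p` and of norm `≤ C` lifts,
for some `N`, to an element of `A/I_N` annihilated by `p` and of norm `≤ C`. Quotient
elements are encoded by representatives: an `x ∈ A/I` with `p(x) = 0`, `‖x‖ ≤ C` is an
`X : A` with `p(X) ∈ I` and `infDist X I ≤ C` (the quotient norm); `y ∈ A/I_N` mapping
to `x` under the canonical surjection `A/I_N → A/I` is a `Y : A` with `Y - X ∈ I`, and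
`p(y) = 0`, `‖y‖ ≤ C` mean `p(Y) ∈ I_N`, `infDist Y I_N ≤ C`. -/
theorem stmt_9 {A : Type*} [CStarAlgebra A]
    (I : ℕ → TwoSidedIdeal A) (hIclosed : ∀ N, IsClosed (I N : Set A))
    (hImono : ∀ M N, M ≤ N → (I M : Set A) ⊆ (I N : Set A))
    (n : ℕ) (t : Fin n → ℝ) (ht : Function.Injective t)
    (C : ℝ) (hC : 0 < C)
    (X : A)
    (hX0 : (List.ofFn fun i => X - (t i : ℂ) • 1).prod ∈ closure (⋃ N, (I N : Set A)))
    (hX1 : Metric.infDist X (closure (⋃ N, (I N : Set A))) ≤ C) :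
    ∃ (N : ℕ) (Y : A), Y - X ∈ closure (⋃ N, (I N : Set A)) ∧
      (List.ofFn fun i => Y - (t i : ℂ) • 1).prod ∈ (I N : Set A) ∧
      Metric.infDist Y (I N : Set A) ≤ C := by
  classical
  obtain ⟨J, hJ2, hJ⟩ := exists_ideal_closure I hImono
  obtain ⟨D, _, ρ, hρ, hρker, hρnorm⟩ := exists_quotient J (hJ ▸ isClosed_closure)
  have hρker' : ∀ z, ρ z = 0 ↔ z ∈ closure (⋃ N, (I N : Set A)) := fun z => by
    rw [hρker, ← hJ, SetLike.mem_coe]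
  let := CStarAlgebra.spectralOrder D
  have := CStarAlgebra.spectralOrderedRing D
  have hx0 : Polynomial.aeval (ρ X) (Lagrange.nodal Finset.univ t) = 0 := by
    rw [← map_list_prod_sub, hρker']
    exact hX0
  have hx1 : ‖ρ X‖ ≤ C := by rwa [hρnorm, hJ]
  obtain ⟨a, r, δ, hδ, ha, hr, hru, hxr, hδr, hle, hspec⟩ :=
    exists_similar_selfAdjoint ht hx0 hx1
  obtain ⟨T, hT⟩ : ∃ T : Finset ℝ, ∀ τ, τ ∈ T ↔ τ ∈ Set.range t ∧ |τ| ≤ C :=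
    ⟨(Finset.univ.image t).filter (|·| ≤ C), fun τ => by simp⟩
  have hspecT : spectrum ℝ a ⊆ T := fun τ hτ => (hT τ).2 (hspec τ hτ)
  obtain ⟨A₁, hA₁, rfl⟩ : ∃ A₁ : A, IsSelfAdjoint A₁ ∧ ρ A₁ = a := by
    obtain ⟨A₀, rfl⟩ := hρ a
    refine ⟨realPart A₀, (realPart A₀).2, ?_⟩
    have h1 : ρ (star A₀) = ρ A₀ := by rw [map_star, ha.star_eq]
    have h2 : ρ ((2⁻¹ : ℂ) • (A₀ + star A₀)) = ρ A₀ := by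
      rw [map_smul, map_add, h1, ← two_smul ℂ (ρ A₀), smul_smul]
      norm_num
    rw [realPart_apply_coe]
    exact (congrArg ρ (by simp [← Complex.coe_smul])).trans h2
  obtain ⟨ε, hε, f, hfT, hfc, hfm⟩ := exists_rounding T
  -- the polynomial vanishing on `T` kills the lift modulo `I`, so almost kills it modulo some `I N`
  have hPT : ρ (Polynomial.aeval A₁ (∏ τ ∈ T, (Polynomial.X - Polynomial.C τ))) = 0 := by
    rw [map_aeval_real]
    refine aeval_eq_zero_of_spectrum ha _ fun τ hτ => ?_
    rw [Polynomial.eval_prod]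
    exact Finset.prod_eq_zero (hspecT hτ) (by simp)
  obtain ⟨j, hj, hjε⟩ := Metric.mem_closure_iff.1 ((hρker' _).1 hPT) ε hε
  obtain ⟨N, hN⟩ := Set.mem_iUnion.1 hj
  have hJN : ((TwoSidedIdeal.asIdeal (I N) : Ideal A) : Set A) = I N := rfl
  obtain ⟨B, _, π, hπ, hπker, hπnorm⟩ := exists_quotient (TwoSidedIdeal.asIdeal (I N))
    (hIclosed N)
  rw [hJN] at hπnorm
  have hπker' : ∀ z, π z = 0 ↔ z ∈ (I N : Set A) := fun z => by
    rw [hπker, ← hJN, SetLike.mem_coe]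
  let := CStarAlgebra.spectralOrder B
  have := CStarAlgebra.spectralOrderedRing B
  obtain ⟨φ, hφ⟩ := exists_factor π ρ hπ fun z hz => (hρker' z).2
    (subset_closure (Set.mem_iUnion.2 ⟨N, (hπker' z).1 hz⟩))
  have hφsurj : Function.Surjective φ := fun d => by
    obtain ⟨z, rfl⟩ := hρ d
    exact ⟨π z, hφ z⟩
  obtain ⟨a', ha', hspec', hφa'⟩ := exists_selfAdjoint_lift_s9 hfT hfc hfm φ (hA₁.map π)
    (by
      rw [← map_aeval_real, hπnorm]
      exact (Metric.infDist_le_dist_of_mem hN).trans_lt hjε)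
    (by rwa [hφ])
  rw [hφ] at hφa'
  obtain ⟨y, s, hsu, hφs, hys, hyC⟩ := exists_lift_of_selfAdjoint hC
    (fun τ hτ => ((hT τ).1 hτ).2) φ hφsurj ha' hspec' hr hδ hδr (by rwa [hφa'])
  have hφy : φ y = ρ X := by
    refine hru.mul_right_cancel ?_
    rw [hxr, ← hφs, ← map_mul, hys, map_mul, hφa']
  have hy0 : Polynomial.aeval y (Lagrange.nodal Finset.univ t) = 0 := by
    refine hsu.mul_right_cancel ?_
    rw [aeval_semiconj hys, zero_mul, aeval_eq_zero_of_spectrum ha' _ fun τ hτ => ?_, mul_zero]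
    obtain ⟨i, rfl⟩ := ((hT τ).1 (hspec' hτ)).1
    exact Lagrange.eval_nodal_at_node (Finset.mem_univ i)
  obtain ⟨Y, rfl⟩ := hπ y
  refine ⟨N, Y, ?_, ?_, ?_⟩
  · rw [← hρker', map_sub, ← hφ Y, hφy, sub_self]
  · rw [← hπker', map_list_prod_sub, hy0]
  · rwa [← hπnorm]
end
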